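/- Let P be a Markov kernel on a standard Borel space X, let (u,C) be a drift function with constant b, let p > 2, let g ∈ E_u^p, and let x ∈ X with u(x) < ∞. Assume that (1/n) ∑_{k=0}^{n−1} (P(g²)(X_k) − (Pg(X_k))²) converges ℙ_x-almost everywhere and in L¹(ℙ_x) to a constant σ² = σ²(g,x) ≥ 0. Then n^{−1/2} ∑_{k=0}^{n−1} (g(X_{k+1}) − Pg(X_k)) converges in distribution (under ℙ_x) to the Gaussian law N(0,σ²) (a Dirac mass at 0 when σ² = 0). Moreover, if σ² ≠ 0, then ℙ_x-almost everywhere limsup_n (∑_{k=0}^{n−1} (g(X_{k+1}) − Pg(X_k)))/√(2n σ² lnln n) = 1 and liminf_n (∑_{k=0}^{n−1} (g(X_{k+1}) − Pg(X_k)))/√(2n σ² lnln n) = −1. -/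

import Mathlib

open MeasureTheory ProbabilityTheory Filter Set
open scoped ENNReal NNReal

/-- The action of a Markov kernel on `[0,∞]`-valued functions: `Pf(x) = ∫ f(y) P(x,dy)`. -/
noncomputable def kernelOp {X : Type*} [MeasurableSpace X] (P : ProbabilityTheory.Kernel X X)
    (f : X → ℝ≥0∞) : X → ℝ≥0∞ :=
  fun x => ∫⁻ y, f y ∂(P x)

/-- The action of a Markov kernel on real-valued functions: `Pf(x) = ∫ f(y) P(x,dy)`. -/
noncomputable def kernelOpReal {X : Type*} [MeasurableSpace X] (P : ProbabilityTheory.Kernel X X)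
    (f : X → ℝ) : X → ℝ :=
  fun x => ∫ y, f y ∂(P x)

/-- `(u, C)` is a drift function for the Markov kernel `P`, with constant `b`. -/
structure IsDriftFunction {X : Type*} [MeasurableSpace X] (P : ProbabilityTheory.Kernel X X)
    (u : X → ℝ≥0∞) (C : Set X) (b : ℝ≥0) : Prop where
  measurable_u : Measurable u
  one_le : ∀ x, 1 ≤ u x
  measurableSet_C : MeasurableSet C
  bddOn_C : ∃ M : ℝ≥0, ∀ x ∈ C, u x ≤ M
  drift : ∀ x, kernelOp P u x ≤ u x + C.indicator (fun _ => (b : ℝ≥0∞)) x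

/-- `f ∈ E_u^p` with `‖f‖_{E_u^p} ≤ M`. -/
def MemDriftSpace {X : Type*} [MeasurableSpace X] (P : ProbabilityTheory.Kernel X X)
    (u : X → ℝ≥0∞) (C : Set X) (b : ℝ≥0) (p : ℝ) (f : X → ℝ) (M : ℝ≥0) : Prop :=
  Measurable f ∧ ∀ x, (‖f x‖₊ : ℝ≥0∞) ≤
    (M : ℝ≥0∞) * (u x - kernelOp P u x + C.indicator (fun _ => (b : ℝ≥0∞)) x) ^ (1 / p)

/-- `μ` is the law `ℙ_x` on `X^ℕ` of the canonical Markov chain with kernel `P` started at `x`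
(the Ionescu–Tulcea measure). -/
def IsCanonicalChain {X : Type*} [MeasurableSpace X] (P : ProbabilityTheory.Kernel X X)
    (x : X) (μ : Measure (ℕ → X)) : Prop :=
  IsProbabilityMeasure μ ∧
  μ.map (fun ω => ω 0) = Measure.dirac x ∧
  ∀ n : ℕ, ∀ g : X → ℝ≥0∞, Measurable g →
    ∀ h : (ℕ → X) → ℝ≥0∞,
      Measurable[MeasurableSpace.comap (fun (ω : ℕ → X) (i : Fin (n + 1)) => ω i)
        MeasurableSpace.pi] h →
      ∫⁻ ω, h ω * g (ω (n + 1)) ∂μ = ∫⁻ ω, h ω * kernelOp P g (ω n) ∂μ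

/-!
The sums `S_n = ∑_{k<n} (g(X_{k+1}) - Pg(X_k))` form a martingale. Iterating `Pu ≤ u + b·1_C` and
telescoping bounds the expected sum of `(u - Pu + b·1_C)(X_k)` over `k < n`, so the differences
`D_k` satisfy `∑_{k<n} 𝔼|D_k|^p = O(n)`. As `p > 2`, truncating `D_k` at level `(k+1)^ρ` with a
suitable `ρ < 1/2` and centring again changes `S_n` by `o(√n)` and its predictable quadratic
variation `⟨S⟩_n` by `o(n)`, almost surely. Hence the differences may be taken to be bounded by
`o(√n)`, even after multiplication by `√(log log n)`, with `⟨S⟩_n / n → σ²`.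

For such differences `𝔼 exp(itS_n/√n + t²⟨S⟩_n/(2n))` tends to `1` once `S` is stopped when its
quadratic variation becomes too large; this is the central limit theorem. The upper half of the
law of the iterated logarithm follows from an exponential supermartingale inequality along `⌈θʲ⌉`.
For the lower half, a tilted exponential moment shows that the increment of `S` over the block
`(dʲ, dʲ⁺¹]` is nearly maximal with conditional probability at least a constant times `1/j`, and
the conditional Borel–Cantelli lemma applies; the sum up to `dʲ` is absorbed by the upper half for
`-S`.
-/

section MartingaleDiff

variable {Ω : Type*} {m : MeasurableSpace Ω} {μ : Measure Ω} {ℱ : Filtration ℕ m}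
  {Y : ℕ → Ω → ℝ}

/-- `Y` is a sequence of square integrable martingale differences for the filtration `ℱ`. The
index is that of the conditioning: `Y k` is `ℱ (k + 1)`-measurable and centred given `ℱ k`. -/
structure IsMartingaleDiff (ℱ : Filtration ℕ m) (μ : Measure Ω) (Y : ℕ → Ω → ℝ) : Prop where
  stronglyMeasurable : ∀ k, StronglyMeasurable[ℱ (k + 1)] (Y k)
  memLp_two : ∀ k, MemLp (Y k) 2 μ
  condExp_eq_zero : ∀ k, μ[Y k | ℱ k] =ᵐ[μ] 0

/-- The conditional second moment `𝔼[Y_k² | ℱ_k]`, the `k`-th increment of the predictable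
quadratic variation. -/
noncomputable def condSq (ℱ : Filtration ℕ m) (μ : Measure Ω) (Y : ℕ → Ω → ℝ) (k : ℕ) : Ω → ℝ :=
  μ[fun ω => Y k ω ^ 2 | ℱ k]

/-- The predictable quadratic variation `⟨S⟩_n = ∑_{k<n} 𝔼[Y_k² | ℱ_k]` of `S_n = ∑_{k<n} Y_k`. -/
noncomputable def predVar (ℱ : Filtration ℕ m) (μ : Measure Ω) (Y : ℕ → Ω → ℝ) (n : ℕ) (ω : Ω) :
    ℝ :=
  ∑ k ∈ Finset.range n, condSq ℱ μ Y k ω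

lemma predVar_zero (ω : Ω) : predVar ℱ μ Y 0 ω = 0 := Finset.sum_range_zero _

lemma predVar_succ (n : ℕ) (ω : Ω) :
    predVar ℱ μ Y (n + 1) ω = predVar ℱ μ Y n ω + condSq ℱ μ Y n ω :=
  Finset.sum_range_succ _ _

lemma stronglyMeasurable_condSq (k : ℕ) : StronglyMeasurable[ℱ k] (condSq ℱ μ Y k) :=
  stronglyMeasurable_condExp

lemma stronglyMeasurable_predVar_succ (n : ℕ) :
    StronglyMeasurable[ℱ n] (predVar ℱ μ Y (n + 1)) := by
  unfold predVar
  exact Finset.stronglyMeasurable_fun_sum _ fun k hk =>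
    (stronglyMeasurable_condSq k).mono (ℱ.mono (Finset.mem_range_succ_iff.1 hk))

lemma stronglyMeasurable_predVar (n : ℕ) : StronglyMeasurable[ℱ n] (predVar ℱ μ Y n) := by
  unfold predVar
  exact Finset.stronglyMeasurable_fun_sum _ fun k hk =>
    (stronglyMeasurable_condSq k).mono (ℱ.mono (Finset.mem_range.1 hk).le)

lemma measurable_predVar (n : ℕ) : Measurable (predVar ℱ μ Y n) :=
  ((stronglyMeasurable_predVar n).mono (ℱ.le n)).measurable

lemma ae_forall_condSq_nonneg : ∀ᵐ ω ∂μ, ∀ k, 0 ≤ condSq ℱ μ Y k ω :=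
  ae_all_iff.2 fun k => condExp_nonneg (ae_of_all _ fun ω => sq_nonneg (Y k ω))

lemma predVar_mono_of_nonneg {ω : Ω} (h : ∀ k, 0 ≤ condSq ℱ μ Y k ω) :
    Monotone fun n => predVar ℱ μ Y n ω :=
  monotone_nat_of_le_succ fun n => by rw [predVar_succ]; exact le_add_of_nonneg_right (h n)

lemma condSq_neg : condSq ℱ μ (fun k ω => -Y k ω) = condSq ℱ μ Y := by
  funext k; simp only [condSq, neg_sq]

lemma condSq_const_mul (c : ℝ) (k : ℕ) :
    condSq ℱ μ (fun k ω => c * Y k ω) k =ᵐ[μ] fun ω => c ^ 2 * condSq ℱ μ Y k ω := by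
  simp only [condSq, mul_pow]
  exact condExp_smul (c ^ 2) (fun ω => Y k ω ^ 2) (ℱ k)

lemma predVar_const_mul (c : ℝ) :
    ∀ᵐ ω ∂μ, ∀ n, predVar ℱ μ (fun k ω => c * Y k ω) n ω = c ^ 2 * predVar ℱ μ Y n ω := by
  filter_upwards [ae_all_iff.2 (condSq_const_mul (ℱ := ℱ) (μ := μ) (Y := Y) c)] with ω hω n
  simp only [predVar, Finset.mul_sum, hω]

/-- The filtration `ℱ` restarted at time `A`. -/
def shiftFiltration (ℱ : Filtration ℕ m) (A : ℕ) : Filtration ℕ m where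
  seq k := ℱ (A + k)
  mono' _ _ h := ℱ.mono (Nat.add_le_add_left h A)
  le' k := ℱ.le (A + k)

lemma predVar_shift (A n : ℕ) (ω : Ω) :
    predVar (shiftFiltration ℱ A) μ (fun k => Y (A + k)) n ω =
      predVar ℱ μ Y (A + n) ω - predVar ℱ μ Y A ω := by
  simp only [predVar, Finset.sum_range_add, add_sub_cancel_left]
  rfl

/-- The differences `Y` stopped at time `n`, or earlier, just before the predictable quadratic
variation exceeds `τ`. -/
noncomputable def stoppedDiff (ℱ : Filtration ℕ m) (μ : Measure Ω) (Y : ℕ → Ω → ℝ) (n : ℕ)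
    (τ : ℝ) (k : ℕ) : Ω → ℝ :=
  {ω | k < n ∧ predVar ℱ μ Y (k + 1) ω ≤ τ}.indicator (Y k)

lemma measurableSet_stoppedDiff (n : ℕ) (τ : ℝ) (k : ℕ) :
    MeasurableSet[ℱ k] {ω | k < n ∧ predVar ℱ μ Y (k + 1) ω ≤ τ} :=
  (MeasurableSet.const _).inter
    ((stronglyMeasurable_predVar_succ k).measurable measurableSet_Iic)

lemma abs_stoppedDiff_le {n : ℕ} {a : ℝ} (ha : 0 ≤ a) (hY : ∀ k < n, ∀ᵐ ω ∂μ, |Y k ω| ≤ a)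
    (τ : ℝ) (k : ℕ) : ∀ᵐ ω ∂μ, |stoppedDiff ℱ μ Y n τ k ω| ≤ a := by
  by_cases hk : k < n
  · filter_upwards [hY k hk] with ω hω
    exact (norm_indicator_le_norm_self (Y k) ω).trans hω
  · simp [stoppedDiff, hk, ha]

namespace IsMartingaleDiff

lemma const_mul (hY : IsMartingaleDiff ℱ μ Y) (c : ℝ) :
    IsMartingaleDiff ℱ μ fun k ω => c * Y k ω where
  stronglyMeasurable k := (hY.stronglyMeasurable k).const_mul c
  memLp_two k := (hY.memLp_two k).const_mul c
  condExp_eq_zero k := by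
    filter_upwards [condExp_smul c (Y k) (ℱ k), hY.condExp_eq_zero k] with ω h₁ h₂
    rw [show (fun ω => c * Y k ω) = c • Y k from rfl, h₁, Pi.smul_apply, h₂, Pi.zero_apply,
      smul_zero]

lemma neg (hY : IsMartingaleDiff ℱ μ Y) : IsMartingaleDiff ℱ μ fun k ω => -Y k ω := by
  simpa only [neg_one_mul] using hY.const_mul (-1)

lemma shift (hY : IsMartingaleDiff ℱ μ Y) (A : ℕ) :
    IsMartingaleDiff (shiftFiltration ℱ A) μ fun k => Y (A + k) where
  stronglyMeasurable k := hY.stronglyMeasurable (A + k)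
  memLp_two k := hY.memLp_two (A + k)
  condExp_eq_zero k := hY.condExp_eq_zero (A + k)

lemma integrable [IsFiniteMeasure μ] (hY : IsMartingaleDiff ℱ μ Y) (k : ℕ) :
    Integrable (Y k) μ :=
  (hY.memLp_two k).integrable one_le_two

lemma measurable (hY : IsMartingaleDiff ℱ μ Y) (k : ℕ) : Measurable (Y k) :=
  ((hY.stronglyMeasurable k).mono (ℱ.le _)).measurable

lemma stronglyMeasurable_sum (hY : IsMartingaleDiff ℱ μ Y) (n : ℕ) :
    StronglyMeasurable[ℱ n] fun ω => ∑ k ∈ Finset.range n, Y k ω :=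
  Finset.stronglyMeasurable_fun_sum _ fun k hk =>
    (hY.stronglyMeasurable k).mono (ℱ.mono (Finset.mem_range.1 hk))

lemma stopped [IsFiniteMeasure μ] (hY : IsMartingaleDiff ℱ μ Y) (n : ℕ) (τ : ℝ) :
    IsMartingaleDiff ℱ μ (stoppedDiff ℱ μ Y n τ) where
  stronglyMeasurable k := (hY.stronglyMeasurable k).indicator
    (ℱ.mono k.le_succ _ (measurableSet_stoppedDiff n τ k))
  memLp_two k := (hY.memLp_two k).indicator (ℱ.le k _ (measurableSet_stoppedDiff n τ k))
  condExp_eq_zero k := by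
    filter_upwards [condExp_indicator (hY.integrable k) (measurableSet_stoppedDiff n τ k),
      hY.condExp_eq_zero k] with ω h₁ h₂
    rw [stoppedDiff, h₁, indicator_apply, h₂, Pi.zero_apply, ite_self]

lemma condSq_stoppedDiff (hY : IsMartingaleDiff ℱ μ Y) (n : ℕ) (τ : ℝ) (k : ℕ) :
    condSq ℱ μ (stoppedDiff ℱ μ Y n τ) k =ᵐ[μ]
      {ω | k < n ∧ predVar ℱ μ Y (k + 1) ω ≤ τ}.indicator (condSq ℱ μ Y k) := by
  refine .trans (.of_eq ?_) (condExp_indicator (hY.memLp_two k).integrable_sq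
    (measurableSet_stoppedDiff n τ k))
  refine congrArg (fun f => μ[f | ℱ k]) (funext fun ω => ?_)
  simp only [stoppedDiff, indicator_apply, ite_pow, ne_eq, OfNat.ofNat_ne_zero,
    not_false_eq_true, zero_pow]

lemma predVar_stoppedDiff_le (hY : IsMartingaleDiff ℱ μ Y) (n : ℕ) {τ : ℝ} (hτ : 0 ≤ τ) :
    ∀ᵐ ω ∂μ, ∀ N, predVar ℱ μ (stoppedDiff ℱ μ Y n τ) N ω ≤ τ := by
  filter_upwards [ae_all_iff.2 (hY.condSq_stoppedDiff n τ),
    ae_forall_condSq_nonneg (ℱ := ℱ) (μ := μ) (Y := Y)] with ω hω h_nonneg N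
  suffices h : predVar ℱ μ (stoppedDiff ℱ μ Y n τ) N ω ≤ τ ∧
      predVar ℱ μ (stoppedDiff ℱ μ Y n τ) N ω ≤ predVar ℱ μ Y N ω from h.1
  induction N with
  | zero => simp only [predVar_zero, hτ, le_refl, and_self]
  | succ N ih =>
    rw [predVar_succ, predVar_succ, hω, indicator_apply]
    have := h_nonneg N
    split_ifs with hN
    · have hτN := predVar_succ (ℱ := ℱ) (μ := μ) (Y := Y) N ω ▸ hN.2
      constructor <;> linarith [ih.2]
    · constructor <;> linarith [ih.1, ih.2]

lemma stoppedDiff_eq (hY : IsMartingaleDiff ℱ μ Y) (n : ℕ) (τ : ℝ) :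
    ∀ᵐ ω ∂μ, predVar ℱ μ Y n ω ≤ τ → ∀ k < n,
      stoppedDiff ℱ μ Y n τ k ω = Y k ω ∧
        condSq ℱ μ (stoppedDiff ℱ μ Y n τ) k ω = condSq ℱ μ Y k ω := by
  filter_upwards [ae_all_iff.2 (hY.condSq_stoppedDiff n τ),
    ae_forall_condSq_nonneg (ℱ := ℱ) (μ := μ) (Y := Y)] with ω hω h_nonneg hτ k hk
  have hmem : ω ∈ {ω | k < n ∧ predVar ℱ μ Y (k + 1) ω ≤ τ} :=
    ⟨hk, (predVar_mono_of_nonneg h_nonneg hk).trans hτ⟩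
  exact ⟨indicator_of_mem hmem _, by rw [hω, indicator_of_mem hmem]⟩

lemma sum_stoppedDiff_eq (hY : IsMartingaleDiff ℱ μ Y) (n : ℕ) (τ : ℝ) :
    ∀ᵐ ω ∂μ, predVar ℱ μ Y n ω ≤ τ → ∀ j ≤ n,
      ∑ k ∈ Finset.range j, stoppedDiff ℱ μ Y n τ k ω = ∑ k ∈ Finset.range j, Y k ω := by
  filter_upwards [hY.stoppedDiff_eq n τ] with ω hω hτ j hj
  exact Finset.sum_congr rfl fun k hk => (hω hτ k ((Finset.mem_range.1 hk).trans_le hj)).1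

lemma predVar_stoppedDiff_eq (hY : IsMartingaleDiff ℱ μ Y) (n : ℕ) (τ : ℝ) :
    ∀ᵐ ω ∂μ, predVar ℱ μ Y n ω ≤ τ →
      predVar ℱ μ (stoppedDiff ℱ μ Y n τ) n ω = predVar ℱ μ Y n ω := by
  filter_upwards [hY.stoppedDiff_eq n τ] with ω hω hτ
  exact Finset.sum_congr rfl fun k hk => (hω hτ k (Finset.mem_range.1 hk)).2

end IsMartingaleDiff

end MartingaleDiff

section ExpMartingale

variable {Ω : Type*} {m : MeasurableSpace Ω} {μ : Measure Ω} {ℱ : Filtration ℕ m}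
  {Y : ℕ → Ω → ℝ} {a : ℝ}

lemma abs_exp_sub_taylor_two_le {a y : ℝ} (ha : a ≤ 1) (hy : |y| ≤ a) :
    |Real.exp y - (1 + y + y ^ 2 / 2)| ≤ a / 2 * y ^ 2 := by
  have h_taylor := Real.exp_bound (hy.trans ha) (n := 3) (by norm_num)
  simp only [Finset.sum_range_succ, Finset.sum_range_zero, Nat.factorial] at h_taylor
  norm_num at h_taylor
  have h_cube : |y| ^ 3 ≤ a * y ^ 2 := by
    rw [pow_succ', sq_abs]
    gcongr
  linarith [pow_nonneg (abs_nonneg y) 3]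

lemma exp_mul_le_one_add_mul {a z : ℝ} (ha₀ : 0 ≤ a) (ha : a ≤ 1 / 2) (hz₀ : 0 ≤ z)
    (hz : z ≤ a ^ 2) : Real.exp ((1 - 2 * a) / 2 * z) ≤ 1 + (1 - a) / 2 * z := by
  set w := (1 - 2 * a) / 2 * z with hw
  have hw₀ : 0 ≤ w := mul_nonneg (by linarith) hz₀
  have hw_le : w ≤ 1 / 2 * z := mul_le_mul_of_nonneg_right (by linarith) hz₀
  have hw_abs : |w| ≤ 1 := by rw [abs_of_nonneg hw₀]; nlinarith
  have h_exp := (abs_le.1 (Real.abs_exp_sub_one_sub_id_le hw_abs)).2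
  have hw_sq : w ^ 2 ≤ a / 2 * z := by nlinarith
  linarith [hw]

lemma IsMartingaleDiff.stronglyMeasurable_sub_condSq (hY : IsMartingaleDiff ℱ μ Y) (q : ℝ) (k : ℕ) :
    StronglyMeasurable[ℱ (k + 1)] fun ω => Y k ω - q * condSq ℱ μ Y k ω :=
  (hY.stronglyMeasurable k).sub
    (((stronglyMeasurable_condSq k).mono (ℱ.mono k.le_succ)).const_mul q)

lemma ae_sub_condSq_le {q : ℝ} (hq : 0 ≤ q) (hYa : ∀ k, ∀ᵐ ω ∂μ, |Y k ω| ≤ a) (k : ℕ) :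
    ∀ᵐ ω ∂μ, Y k ω - q * condSq ℱ μ Y k ω ≤ a := by
  filter_upwards [hYa k, ae_forall_condSq_nonneg (ℱ := ℱ) (μ := μ) (Y := Y)] with ω h₁ h₂
  linarith [(abs_le.1 h₁).2, mul_nonneg hq (h₂ k)]

lemma sum_sub_condSq (q : ℝ) (n : ℕ) (ω : Ω) :
    ∑ k ∈ Finset.range n, (Y k ω - q * condSq ℱ μ Y k ω) =
      ∑ k ∈ Finset.range n, Y k ω - q * predVar ℱ μ Y n ω := by
  rw [Finset.sum_sub_distrib, ← Finset.mul_sum, predVar]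

variable [IsFiniteMeasure μ]

lemma integrable_exp_sum {ξ : ℕ → Ω → ℝ} {K : ℝ} (hξ : ∀ k, Measurable (ξ k))
    (hK : ∀ k, ∀ᵐ ω ∂μ, ξ k ω ≤ K) (n : ℕ) :
    Integrable (fun ω => Real.exp (∑ k ∈ Finset.range n, ξ k ω)) μ := by
  refine .of_bound (Finset.measurable_fun_sum _ fun k _ => hξ k).exp.aestronglyMeasurable
    (Real.exp (n * K)) ?_
  filter_upwards [ae_all_iff.2 hK] with ω hω
  rw [Real.norm_of_nonneg (Real.exp_nonneg _)]
  have := Finset.sum_le_card_nsmul (Finset.range n) (ξ · ω) K fun k _ => hω k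
  rw [Finset.card_range, nsmul_eq_mul] at this
  exact Real.exp_le_exp.2 this

lemma condExp_exp_sum_succ {ξ : ℕ → Ω → ℝ} {K : ℝ}
    (hξ : ∀ k, StronglyMeasurable[ℱ (k + 1)] (ξ k)) (hK : ∀ k, ∀ᵐ ω ∂μ, ξ k ω ≤ K) (n : ℕ) :
    μ[fun ω => Real.exp (∑ k ∈ Finset.range (n + 1), ξ k ω) | ℱ n] =ᵐ[μ] fun ω =>
      Real.exp (∑ k ∈ Finset.range n, ξ k ω) * (μ[fun ω => Real.exp (ξ n ω) | ℱ n]) ω := by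
  have hξm (k : ℕ) : Measurable (ξ k) := ((hξ k).mono (ℱ.le _)).measurable
  have h_prod : (fun ω => Real.exp (∑ k ∈ Finset.range (n + 1), ξ k ω)) =
      (fun ω => Real.exp (∑ k ∈ Finset.range n, ξ k ω)) * fun ω => Real.exp (ξ n ω) := by
    funext ω
    rw [Finset.sum_range_succ, Real.exp_add, Pi.mul_apply]
  have h_meas : StronglyMeasurable[ℱ n] fun ω => Real.exp (∑ k ∈ Finset.range n, ξ k ω) :=
    Real.continuous_exp.comp_stronglyMeasurable <| Finset.stronglyMeasurable_fun_sum _ fun k hk =>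
      (hξ k).mono (ℱ.mono (Finset.mem_range.1 hk))
  have h_int : Integrable (fun ω => Real.exp (ξ n ω)) μ := by
    simpa using integrable_exp_sum (fun _ => hξm n) (fun _ => hK n) 1
  rw [h_prod]
  exact condExp_mul_of_stronglyMeasurable_left h_meas
    (h_prod ▸ integrable_exp_sum hξm hK (n + 1)) h_int

lemma supermartingale_exp_sum {ξ : ℕ → Ω → ℝ} {K : ℝ}
    (hξ : ∀ k, StronglyMeasurable[ℱ (k + 1)] (ξ k)) (hK : ∀ k, ∀ᵐ ω ∂μ, ξ k ω ≤ K)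
    (h_le : ∀ k, μ[fun ω => Real.exp (ξ k ω) | ℱ k] ≤ᵐ[μ] 1) :
    Supermartingale (fun n ω => Real.exp (∑ k ∈ Finset.range n, ξ k ω)) ℱ μ := by
  refine supermartingale_nat (fun n => Real.continuous_exp.comp_stronglyMeasurable <|
      Finset.stronglyMeasurable_fun_sum _ fun k hk => (hξ k).mono (ℱ.mono (Finset.mem_range.1 hk)))
    (integrable_exp_sum (fun k => ((hξ k).mono (ℱ.le _)).measurable) hK) fun n => ?_
  filter_upwards [condExp_exp_sum_succ hξ hK n, h_le n] with ω h_succ h_le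
  rw [h_succ]
  exact mul_le_of_le_one_right (Real.exp_nonneg _) h_le

lemma submartingale_exp_sum {ξ : ℕ → Ω → ℝ} {K : ℝ}
    (hξ : ∀ k, StronglyMeasurable[ℱ (k + 1)] (ξ k)) (hK : ∀ k, ∀ᵐ ω ∂μ, ξ k ω ≤ K)
    (h_le : ∀ k, 1 ≤ᵐ[μ] μ[fun ω => Real.exp (ξ k ω) | ℱ k]) :
    Submartingale (fun n ω => Real.exp (∑ k ∈ Finset.range n, ξ k ω)) ℱ μ := by
  refine submartingale_nat (fun n => Real.continuous_exp.comp_stronglyMeasurable <|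
      Finset.stronglyMeasurable_fun_sum _ fun k hk => (hξ k).mono (ℱ.mono (Finset.mem_range.1 hk)))
    (integrable_exp_sum (fun k => ((hξ k).mono (ℱ.le _)).measurable) hK) fun n => ?_
  filter_upwards [condExp_exp_sum_succ hξ hK n, h_le n] with ω h_succ h_le
  rw [h_succ]
  exact le_mul_of_one_le_right (Real.exp_nonneg _) h_le

namespace IsMartingaleDiff

lemma integrable_quadratic (hY : IsMartingaleDiff ℱ μ Y) (κ : ℝ) (k : ℕ) :
    Integrable (fun ω => 1 + Y k ω + κ * Y k ω ^ 2) μ :=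
  ((integrable_const 1).add (hY.integrable k)).add ((hY.memLp_two k).integrable_sq.const_mul κ)

lemma condExp_quadratic (hY : IsMartingaleDiff ℱ μ Y) (κ : ℝ) (k : ℕ) :
    μ[fun ω => 1 + Y k ω + κ * Y k ω ^ 2 | ℱ k] =ᵐ[μ] fun ω => 1 + κ * condSq ℱ μ Y k ω := by
  have h_add := condExp_add ((integrable_const (1 : ℝ)).add (hY.integrable k))
    ((hY.memLp_two k).integrable_sq.const_mul κ) (ℱ k)
  have h_add' := condExp_add (integrable_const (1 : ℝ)) (hY.integrable k) (ℱ k)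
  filter_upwards [h_add, h_add', hY.condExp_eq_zero k,
    condExp_smul κ (fun ω => Y k ω ^ 2) (ℱ k)] with ω h₁ h₂ h₃ h₄
  refine h₁.trans ?_
  rw [Pi.add_apply, h₂, Pi.add_apply, h₃, condExp_const (ℱ.le k)]
  exact congrArg₂ (· + ·) (add_zero 1) h₄

lemma condSq_le (hY : IsMartingaleDiff ℱ μ Y) {k : ℕ} (hYa : ∀ᵐ ω ∂μ, |Y k ω| ≤ a) :
    condSq ℱ μ Y k ≤ᵐ[μ] fun _ => a ^ 2 := by
  have h_mono := condExp_mono (m := ℱ k) (hY.memLp_two k).integrable_sq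
    (integrable_const (a ^ 2)) (hYa.mono fun ω hω => sq_le_sq' (abs_le.1 hω).1 (abs_le.1 hω).2)
  rwa [condExp_const (ℱ.le k)] at h_mono

lemma integrable_exp (hY : IsMartingaleDiff ℱ μ Y) {k : ℕ} (hYa : ∀ᵐ ω ∂μ, |Y k ω| ≤ a) :
    Integrable (fun ω => Real.exp (Y k ω)) μ := by
  simpa using integrable_exp_sum (fun _ => hY.measurable k)
    (fun _ => hYa.mono fun _ hω => (abs_le.1 hω).2) 1

lemma condExp_exp_le (hY : IsMartingaleDiff ℱ μ Y) (ha : a ≤ 1) {k : ℕ}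
    (hYa : ∀ᵐ ω ∂μ, |Y k ω| ≤ a) :
    μ[fun ω => Real.exp (Y k ω) | ℱ k] ≤ᵐ[μ]
      fun ω => Real.exp ((1 + a) / 2 * condSq ℱ μ Y k ω) := by
  have h_mono := condExp_mono (m := ℱ k) (hY.integrable_exp hYa)
    (hY.integrable_quadratic ((1 + a) / 2) k) (hYa.mono fun ω hω => by
      linarith [(abs_le.1 (abs_exp_sub_taylor_two_le ha hω)).2])
  filter_upwards [h_mono, hY.condExp_quadratic ((1 + a) / 2) k] with ω h_mono h_eq
  linarith [Real.add_one_le_exp ((1 + a) / 2 * condSq ℱ μ Y k ω)]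

lemma le_condExp_exp (hY : IsMartingaleDiff ℱ μ Y) (ha₀ : 0 ≤ a) (ha : a ≤ 1 / 2) {k : ℕ}
    (hYa : ∀ᵐ ω ∂μ, |Y k ω| ≤ a) :
    (fun ω => Real.exp ((1 - 2 * a) / 2 * condSq ℱ μ Y k ω)) ≤ᵐ[μ]
      μ[fun ω => Real.exp (Y k ω) | ℱ k] := by
  have h_mono := condExp_mono (m := ℱ k) (hY.integrable_quadratic ((1 - a) / 2) k)
    (hY.integrable_exp hYa) (hYa.mono fun ω hω => by
      linarith [(abs_le.1 (abs_exp_sub_taylor_two_le (by linarith) hω)).1])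
  filter_upwards [h_mono, hY.condExp_quadratic ((1 - a) / 2) k, hY.condSq_le hYa,
    ae_forall_condSq_nonneg (ℱ := ℱ) (μ := μ) (Y := Y)] with ω h_mono h_eq h_le h_nonneg
  linarith [exp_mul_le_one_add_mul ha₀ ha (h_nonneg k) h_le]

lemma condExp_exp_sub_condSq (hY : IsMartingaleDiff ℱ μ Y) {q : ℝ} (hq : 0 ≤ q)
    (hYa : ∀ k, ∀ᵐ ω ∂μ, |Y k ω| ≤ a) (k : ℕ) :
    μ[fun ω => Real.exp (Y k ω - q * condSq ℱ μ Y k ω) | ℱ k] =ᵐ[μ] fun ω =>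
      Real.exp (-(q * condSq ℱ μ Y k ω)) * (μ[fun ω => Real.exp (Y k ω) | ℱ k]) ω := by
  have h_prod : (fun ω => Real.exp (Y k ω - q * condSq ℱ μ Y k ω)) =
      (fun ω => Real.exp (-(q * condSq ℱ μ Y k ω))) * fun ω => Real.exp (Y k ω) := by
    funext ω
    rw [sub_eq_neg_add, Real.exp_add, Pi.mul_apply]
  have h_int : Integrable (fun ω => Real.exp (Y k ω - q * condSq ℱ μ Y k ω)) μ := by
    simpa using integrable_exp_sum
      (fun _ => ((hY.stronglyMeasurable_sub_condSq q k).mono (ℱ.le _)).measurable)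
      (fun _ => ae_sub_condSq_le (ℱ := ℱ) hq hYa k) 1
  rw [h_prod] at h_int ⊢
  exact condExp_mul_of_stronglyMeasurable_left (Real.continuous_exp.comp_stronglyMeasurable
    ((stronglyMeasurable_condSq k).const_mul q).neg) h_int (hY.integrable_exp (hYa k))

lemma supermartingale_exp_sub_predVar (hY : IsMartingaleDiff ℱ μ Y) (ha₀ : 0 ≤ a) (ha : a ≤ 1)
    (hYa : ∀ k, ∀ᵐ ω ∂μ, |Y k ω| ≤ a) :
    Supermartingale (fun n ω => Real.exp (∑ k ∈ Finset.range n, Y k ω -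
      (1 + a) / 2 * predVar ℱ μ Y n ω)) ℱ μ := by
  have hq : 0 ≤ (1 + a) / 2 := by positivity
  simp only [← sum_sub_condSq]
  refine supermartingale_exp_sum (hY.stronglyMeasurable_sub_condSq _) (ae_sub_condSq_le hq hYa)
    fun k => ?_
  filter_upwards [hY.condExp_exp_sub_condSq hq hYa k, hY.condExp_exp_le ha (hYa k)]
    with ω h_eq h_le
  rw [h_eq, Real.exp_neg]
  exact inv_mul_le_one_of_le₀ h_le (Real.exp_nonneg _)

lemma submartingale_exp_sub_predVar (hY : IsMartingaleDiff ℱ μ Y) (ha₀ : 0 ≤ a)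
    (ha : a ≤ 1 / 2) (hYa : ∀ k, ∀ᵐ ω ∂μ, |Y k ω| ≤ a) :
    Submartingale (fun n ω => Real.exp (∑ k ∈ Finset.range n, Y k ω -
      (1 - 2 * a) / 2 * predVar ℱ μ Y n ω)) ℱ μ := by
  have hq : 0 ≤ (1 - 2 * a) / 2 := by linarith
  simp only [← sum_sub_condSq]
  refine submartingale_exp_sum (hY.stronglyMeasurable_sub_condSq _) (ae_sub_condSq_le hq hYa)
    fun k => ?_
  filter_upwards [hY.condExp_exp_sub_condSq hq hYa k, hY.le_condExp_exp ha₀ ha (hYa k)]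
    with ω h_eq h_le
  rw [h_eq, Real.exp_neg]
  exact (one_le_inv_mul₀ (Real.exp_pos _)).2 h_le

lemma submartingale_exp (hY : IsMartingaleDiff ℱ μ Y) (hYa : ∀ k, ∀ᵐ ω ∂μ, |Y k ω| ≤ a) :
    Submartingale (fun n ω => Real.exp (∑ k ∈ Finset.range n, Y k ω)) ℱ μ := by
  refine submartingale_exp_sum hY.stronglyMeasurable
    (fun k => (hYa k).mono fun ω hω => (abs_le.1 hω).2) fun k => ?_
  have h_mono := condExp_mono (m := ℱ k) (hY.integrable_quadratic 0 k)
    (hY.integrable_exp (hYa k)) (ae_of_all _ fun ω => by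
      linarith [Real.add_one_le_exp (Y k ω)])
  filter_upwards [h_mono, hY.condExp_quadratic 0 k] with ω h_mono h_eq
  rwa [h_eq, zero_mul, add_zero] at h_mono

end IsMartingaleDiff

end ExpMartingale

section Maximal

variable {Ω : Type*} {m : MeasurableSpace Ω} {μ : Measure Ω} [IsProbabilityMeasure μ]
  {ℱ : Filtration ℕ m} {Y : ℕ → Ω → ℝ} {a : ℝ}

namespace IsMartingaleDiff

lemma integral_exp_sub_predVar_le_one (hY : IsMartingaleDiff ℱ μ Y) (ha₀ : 0 ≤ a) (ha : a ≤ 1)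
    (hYa : ∀ k, ∀ᵐ ω ∂μ, |Y k ω| ≤ a) (n : ℕ) :
    ∫ ω, Real.exp (∑ k ∈ Finset.range n, Y k ω - (1 + a) / 2 * predVar ℱ μ Y n ω) ∂μ ≤ 1 := by
  have h_le := (hY.supermartingale_exp_sub_predVar ha₀ ha hYa).setIntegral_le n.zero_le
    (MeasurableSet.univ (m := ℱ 0))
  simpa [predVar_zero] using h_le

lemma integral_exp_sum_le (hY : IsMartingaleDiff ℱ μ Y) (ha₀ : 0 ≤ a) (ha : a ≤ 1)
    (hYa : ∀ k, ∀ᵐ ω ∂μ, |Y k ω| ≤ a) {n : ℕ} {τ : ℝ} (hV : ∀ᵐ ω ∂μ, predVar ℱ μ Y n ω ≤ τ) :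
    ∫ ω, Real.exp (∑ k ∈ Finset.range n, Y k ω) ∂μ ≤ Real.exp ((1 + a) / 2 * τ) := by
  calc ∫ ω, Real.exp (∑ k ∈ Finset.range n, Y k ω) ∂μ
      ≤ ∫ ω, Real.exp ((1 + a) / 2 * τ) *
          Real.exp (∑ k ∈ Finset.range n, Y k ω - (1 + a) / 2 * predVar ℱ μ Y n ω) ∂μ := by
        refine integral_mono_ae ((hY.submartingale_exp hYa).integrable n)
          (((hY.supermartingale_exp_sub_predVar ha₀ ha hYa).integrable n).const_mul _) ?_
        filter_upwards [hV] with ω hω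
        rw [← Real.exp_add, Real.exp_le_exp]
        linarith [mul_le_mul_of_nonneg_left hω (show 0 ≤ (1 + a) / 2 by positivity)]
    _ ≤ Real.exp ((1 + a) / 2 * τ) := by
        rw [integral_const_mul]
        exact mul_le_of_le_one_right (Real.exp_nonneg _)
          (hY.integral_exp_sub_predVar_le_one ha₀ ha hYa n)

lemma measure_exists_le_sum_of_predVar_le (hY : IsMartingaleDiff ℱ μ Y) (ha₀ : 0 ≤ a)
    (ha : a ≤ 1) (hYa : ∀ k, ∀ᵐ ω ∂μ, |Y k ω| ≤ a) {n : ℕ} {τ : ℝ}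
    (hV : ∀ᵐ ω ∂μ, predVar ℱ μ Y n ω ≤ τ) (x : ℝ) :
    μ {ω | ∃ j ≤ n, x ≤ ∑ k ∈ Finset.range j, Y k ω} ≤
      ENNReal.ofReal (Real.exp ((1 + a) / 2 * τ - x)) := by
  have h_sub := hY.submartingale_exp hYa
  have h_max := maximal_ineq h_sub (fun _ _ => Real.exp_nonneg _)
    (ε := (Real.exp x).toNNReal) n
  have h_set : {ω | ∃ j ≤ n, x ≤ ∑ k ∈ Finset.range j, Y k ω} =
      {ω | ((Real.exp x).toNNReal : ℝ) ≤ (Finset.range (n + 1)).sup' Finset.nonempty_range_add_one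
        fun j => Real.exp (∑ k ∈ Finset.range j, Y k ω)} := by
    ext ω
    simp [Finset.le_sup'_iff, Real.exp_nonneg]
  have h_setIntegral := (setIntegral_le_integral (h_sub.integrable n)
    (s := {ω | ∃ j ≤ n, x ≤ ∑ k ∈ Finset.range j, Y k ω})
    (ae_of_all _ fun _ => Real.exp_nonneg _)).trans (hY.integral_exp_sum_le ha₀ ha hYa hV)
  rw [← h_set] at h_max
  rw [Real.exp_sub, ENNReal.ofReal_div_of_pos (Real.exp_pos x), ENNReal.le_div_iff_mul_le
    (.inl (by simpa using Real.exp_pos x)) (.inl ENNReal.ofReal_ne_top), mul_comm]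
  exact h_max.trans (ENNReal.ofReal_le_ofReal h_setIntegral)

lemma measure_exists_le_sum_le (hY : IsMartingaleDiff ℱ μ Y) (ha₀ : 0 ≤ a) (ha : a ≤ 1) {n : ℕ}
    (hYa : ∀ k < n, ∀ᵐ ω ∂μ, |Y k ω| ≤ a) {τ : ℝ} (hτ : 0 ≤ τ) (x : ℝ) :
    μ {ω | predVar ℱ μ Y n ω ≤ τ ∧ ∃ j ≤ n, x ≤ ∑ k ∈ Finset.range j, Y k ω} ≤
      ENNReal.ofReal (Real.exp ((1 + a) / 2 * τ - x)) := by
  refine (measure_mono_ae ?_).trans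
    ((hY.stopped n τ).measure_exists_le_sum_of_predVar_le ha₀ ha (abs_stoppedDiff_le ha₀ hYa τ)
      ((hY.predVar_stoppedDiff_le n hτ).mono fun _ hω => hω n) x)
  filter_upwards [hY.sum_stoppedDiff_eq n τ] with ω hω ⟨hV, j, hj, hx⟩
  exact ⟨j, hj, hx.trans_eq (hω hV j hj).symm⟩

end IsMartingaleDiff

end Maximal

section LowerBound

variable {Ω : Type*} {m : MeasurableSpace Ω} {μ : Measure Ω}
  {ℱ : Filtration ℕ m} {Y : ℕ → Ω → ℝ} {a : ℝ}

lemma ae_const_mul_sum_sub_predVar (c q : ℝ) (n : ℕ) :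
    (fun ω => Real.exp (∑ k ∈ Finset.range n, c * Y k ω -
      q * predVar ℱ μ (fun k ω => c * Y k ω) n ω)) =ᵐ[μ]
    fun ω => Real.exp (c * ∑ k ∈ Finset.range n, Y k ω - q * (c ^ 2 * predVar ℱ μ Y n ω)) := by
  filter_upwards [predVar_const_mul (ℱ := ℱ) (μ := μ) (Y := Y) c] with ω hω
  rw [hω, Finset.mul_sum]

/-- The test function of the lower exponential bound. Tilting by `exp (S - V / 2)` makes `S` of the
order of `V`; subtracting the two neighbouring tilts removes the mass where it is not. -/
noncomputable def tiltTest (h s v : ℝ) : ℝ :=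
  Real.exp (s - (1 - 2 * (h ^ 2 / 10)) / 2 * v) -
    1 / 4 * Real.exp ((1 + h) * s - (1 + h ^ 2 / 10) / 2 * ((1 + h) ^ 2 * v)) -
    1 / 4 * Real.exp ((1 - h) * s - (1 + h ^ 2 / 10) / 2 * ((1 - h) ^ 2 * v))

lemma exp_sub_quarter_exp_nonpos {A B : ℝ} (h : A + Real.log 4 ≤ B) :
    Real.exp A - 1 / 4 * Real.exp B ≤ 0 := by
  have h_exp := Real.exp_le_exp.2 h
  rw [Real.exp_add, Real.exp_log (by norm_num)] at h_exp
  linarith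

lemma exp_sub_quarter_exp_le {h s v T : ℝ} (hh : 0 < h) (hh' : h ≤ 1 / 10) (hv₀ : 0 ≤ v)
    (hv : v ≤ (1 + h) * T) :
    Real.exp (s - (1 - 2 * (h ^ 2 / 10)) / 2 * v) -
        1 / 4 * Real.exp ((1 + h) * s - (1 + h ^ 2 / 10) / 2 * ((1 + h) ^ 2 * v)) ≤
      Real.exp ((1 + 3 * h) * (1 + h) * T / 2 + Real.log 4 / h) := by
  obtain h_le | h_lt := le_or_gt (s - (1 - 2 * (h ^ 2 / 10)) / 2 * v + Real.log 4)
    ((1 + h) * s - (1 + h ^ 2 / 10) / 2 * ((1 + h) ^ 2 * v))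
  · exact (exp_sub_quarter_exp_nonpos h_le).trans (Real.exp_nonneg _)
  refine (sub_le_self _ (by positivity)).trans (Real.exp_le_exp.2 ?_)
  have h_coeff : ((1 + h ^ 2 / 10) * (1 + h) ^ 2 - (1 - 2 * (h ^ 2 / 10))) * v ≤
      (h * (1 - 2 * (h ^ 2 / 10)) + h * (1 + 3 * h)) * v := by
    gcongr
    nlinarith [pow_pos hh 2, pow_pos hh 3, pow_pos hh 4]
  have h_log : h * (Real.log 4 / h) = Real.log 4 := mul_div_cancel₀ _ hh.ne'
  have h_exponent : s - (1 - 2 * (h ^ 2 / 10)) / 2 * v ≤ (1 + 3 * h) * v / 2 + Real.log 4 / h := by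
    refine le_of_mul_le_mul_left ?_ hh
    rw [mul_add, h_log]
    linarith
  linarith [mul_le_mul_of_nonneg_left hv (show 0 ≤ (1 + 3 * h) / 2 by positivity)]

lemma exp_sub_quarter_exp_nonpos_of_le {h s v T : ℝ} (hh : 0 < h) (hh' : h ≤ 1 / 10) (hv₀ : 0 ≤ v)
    (hv : (1 - h) * T ≤ v) (hs : s ≤ (1 - h) ^ 2 * T - Real.log 4 / h) :
    Real.exp (s - (1 - 2 * (h ^ 2 / 10)) / 2 * v) -
      1 / 4 * Real.exp ((1 - h) * s - (1 + h ^ 2 / 10) / 2 * ((1 - h) ^ 2 * v)) ≤ 0 := by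
  refine exp_sub_quarter_exp_nonpos ?_
  have h_log : h * (Real.log 4 / h) = Real.log 4 := mul_div_cancel₀ _ hh.ne'
  have h_sum : h * s ≤ h * ((1 - h) * v) - Real.log 4 := by
    have := mul_le_mul_of_nonneg_left hs hh.le
    have := mul_le_mul_of_nonneg_left hv (mul_nonneg hh.le (show 0 ≤ 1 - h by linarith))
    linarith
  have h_coeff : (2 * h - 2 * h ^ 2) * v ≤
      ((1 - 2 * (h ^ 2 / 10)) - (1 + h ^ 2 / 10) * (1 - h) ^ 2) * v := by
    refine mul_le_mul_of_nonneg_right ?_ hv₀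
    nlinarith [pow_pos hh 2, pow_pos hh 3, pow_pos hh 4]
  linarith

namespace IsMartingaleDiff

lemma ae_tiltTest_stoppedDiff_le (hY : IsMartingaleDiff ℱ μ Y) {h T : ℝ} (hh : 0 < h)
    (hh' : h ≤ 1 / 10) (hT : 0 ≤ T) (n : ℕ) :
    ∀ᵐ ω ∂μ, tiltTest h (∑ k ∈ Finset.range n, stoppedDiff ℱ μ Y n ((1 + h) * T) k ω)
        (predVar ℱ μ (stoppedDiff ℱ μ Y n ((1 + h) * T)) n ω) ≤
      Real.exp ((1 + 3 * h) * (1 + h) * T / 2 + Real.log 4 / h) *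
        {ω | predVar ℱ μ Y n ω ∈ Icc ((1 - h) * T) ((1 + h) * T) →
          (1 - h) ^ 2 * T - Real.log 4 / h < ∑ k ∈ Finset.range n, Y k ω}.indicator 1 ω := by
  filter_upwards [hY.predVar_stoppedDiff_le n (show 0 ≤ (1 + h) * T by positivity),
    hY.sum_stoppedDiff_eq n ((1 + h) * T), hY.predVar_stoppedDiff_eq n ((1 + h) * T),
    ae_forall_condSq_nonneg (ℱ := ℱ) (μ := μ) (Y := stoppedDiff ℱ μ Y n ((1 + h) * T))]
    with ω hV_le hS_eq hV_eq h_nonneg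
  have hV₀ : 0 ≤ predVar ℱ μ (stoppedDiff ℱ μ Y n ((1 + h) * T)) n ω :=
    Finset.sum_nonneg fun k _ => h_nonneg k
  rw [tiltTest]
  by_cases hω : predVar ℱ μ Y n ω ∈ Icc ((1 - h) * T) ((1 + h) * T) →
    (1 - h) ^ 2 * T - Real.log 4 / h < ∑ k ∈ Finset.range n, Y k ω
  · rw [indicator_of_mem (mem_ofPred.2 hω), Pi.one_apply, mul_one]
    exact (sub_le_self _ (by positivity)).trans (exp_sub_quarter_exp_le hh hh' hV₀ (hV_le n))
  · rw [indicator_of_notMem (notMem_ofPred_iff.2 hω), mul_zero, sub_right_comm]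
    push Not at hω
    obtain ⟨⟨hV_lower, hV_upper⟩, hS⟩ := hω
    rw [hV_eq hV_upper] at hV₀
    rw [hS_eq hV_upper n le_rfl, hV_eq hV_upper]
    exact (sub_le_self _ (by positivity)).trans
      (exp_sub_quarter_exp_nonpos_of_le hh hh' hV₀ hV_lower hS)

variable [IsFiniteMeasure μ]

lemma integrable_exp_const_mul_sub_predVar (hY : IsMartingaleDiff ℱ μ Y) (ha₀ : 0 ≤ a)
    (ha : a ≤ 1) {c : ℝ} (hYa : ∀ k, ∀ᵐ ω ∂μ, |c * Y k ω| ≤ a) (n : ℕ) :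
    Integrable (fun ω => Real.exp (c * ∑ k ∈ Finset.range n, Y k ω -
      (1 + a) / 2 * (c ^ 2 * predVar ℱ μ Y n ω))) μ :=
  (((hY.const_mul c).supermartingale_exp_sub_predVar ha₀ ha hYa).integrable n).congr
    (ae_const_mul_sum_sub_predVar c _ n)

lemma condExp_exp_const_mul_sub_predVar_le_one (hY : IsMartingaleDiff ℱ μ Y) (ha₀ : 0 ≤ a)
    (ha : a ≤ 1) {c : ℝ} (hYa : ∀ k, ∀ᵐ ω ∂μ, |c * Y k ω| ≤ a) (n : ℕ) :
    μ[fun ω => Real.exp (c * ∑ k ∈ Finset.range n, Y k ω -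
      (1 + a) / 2 * (c ^ 2 * predVar ℱ μ Y n ω)) | ℱ 0] ≤ᵐ[μ] 1 := by
  filter_upwards [((hY.const_mul c).supermartingale_exp_sub_predVar ha₀ ha hYa).condExp_ae_le
    n.zero_le, condExp_congr_ae (m := ℱ 0) (ae_const_mul_sum_sub_predVar (ℱ := ℱ) (μ := μ) (Y := Y)
      c ((1 + a) / 2) n)] with ω h_le h_eq
  rw [← h_eq]
  simpa [predVar_zero] using h_le

lemma one_le_condExp_exp_sub_predVar (hY : IsMartingaleDiff ℱ μ Y) (ha₀ : 0 ≤ a)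
    (ha : a ≤ 1 / 2) (hYa : ∀ k, ∀ᵐ ω ∂μ, |Y k ω| ≤ a) (n : ℕ) :
    1 ≤ᵐ[μ] μ[fun ω => Real.exp (∑ k ∈ Finset.range n, Y k ω -
      (1 - 2 * a) / 2 * predVar ℱ μ Y n ω) | ℱ 0] := by
  filter_upwards [(hY.submartingale_exp_sub_predVar ha₀ ha hYa).ae_le_condExp n.zero_le]
    with ω h_le
  simpa [predVar_zero] using h_le

lemma integrable_tiltTest_and_half_le_condExp (hY : IsMartingaleDiff ℱ μ Y) {h : ℝ} (hh : 0 < h)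
    (hh' : h ≤ 1 / 10) (hYh : ∀ k, ∀ᵐ ω ∂μ, |Y k ω| ≤ h ^ 2 / 20) (n : ℕ) :
    Integrable (fun ω => tiltTest h (∑ k ∈ Finset.range n, Y k ω) (predVar ℱ μ Y n ω)) μ ∧
    (fun _ => 1 / 2) ≤ᵐ[μ]
      μ[fun ω => tiltTest h (∑ k ∈ Finset.range n, Y k ω) (predVar ℱ μ Y n ω) | ℱ 0] := by
  have ha₀ : 0 ≤ h ^ 2 / 10 := by positivity
  have ha : h ^ 2 / 10 ≤ 1 / 2 := by nlinarith
  have hYc (c : ℝ) (hc : |c| ≤ 2) (k : ℕ) : ∀ᵐ ω ∂μ, |c * Y k ω| ≤ h ^ 2 / 10 := by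
    filter_upwards [hYh k] with ω hω
    rw [abs_mul]
    nlinarith [abs_nonneg c, abs_nonneg (Y k ω)]
  have hY₀ : ∀ k, ∀ᵐ ω ∂μ, |Y k ω| ≤ h ^ 2 / 10 := by simpa using hYc 1 (by norm_num)
  have hY₁ := hYc (1 + h) (by rw [abs_le]; constructor <;> linarith)
  have hY₂ := hYc (1 - h) (by rw [abs_le]; constructor <;> linarith)
  have h_int₀ := (hY.submartingale_exp_sub_predVar ha₀ ha hY₀).integrable n
  have h_int₁ := hY.integrable_exp_const_mul_sub_predVar ha₀ (by linarith) hY₁ n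
  have h_int₂ := hY.integrable_exp_const_mul_sub_predVar ha₀ (by linarith) hY₂ n
  have h_sub₁ := h_int₀.sub (h_int₁.smul (1 / 4 : ℝ))
  refine ⟨h_sub₁.sub (h_int₂.smul (1 / 4 : ℝ)), ?_⟩
  filter_upwards [condExp_sub h_sub₁ (h_int₂.smul (1 / 4 : ℝ)) (ℱ 0),
    condExp_sub h_int₀ (h_int₁.smul (1 / 4 : ℝ)) (ℱ 0),
    condExp_smul (1 / 4 : ℝ) (fun ω => Real.exp ((1 + h) * ∑ k ∈ Finset.range n, Y k ω -
      (1 + h ^ 2 / 10) / 2 * ((1 + h) ^ 2 * predVar ℱ μ Y n ω))) (ℱ 0),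
    condExp_smul (1 / 4 : ℝ) (fun ω => Real.exp ((1 - h) * ∑ k ∈ Finset.range n, Y k ω -
      (1 + h ^ 2 / 10) / 2 * ((1 - h) ^ 2 * predVar ℱ μ Y n ω))) (ℱ 0),
    hY.one_le_condExp_exp_sub_predVar ha₀ ha hY₀ n,
    hY.condExp_exp_const_mul_sub_predVar_le_one ha₀ (by linarith) hY₁ n,
    hY.condExp_exp_const_mul_sub_predVar_le_one ha₀ (by linarith) hY₂ n]
    with ω h_sub₂ h_sub₁ h_smul₁ h_smul₂ h₀ h₁ h₂
  refine le_of_le_of_eq ?_ h_sub₂.symm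
  rw [Pi.sub_apply, h_sub₁, Pi.sub_apply, h_smul₁, h_smul₂, Pi.smul_apply, Pi.smul_apply,
    smul_eq_mul, smul_eq_mul]
  rw [Pi.one_apply] at h₀ h₁ h₂
  linarith

lemma half_le_condExp_indicator (hY : IsMartingaleDiff ℱ μ Y) {h T : ℝ} (hh : 0 < h)
    (hh' : h ≤ 1 / 10) (hT : 0 ≤ T) {n : ℕ} (hYh : ∀ k < n, ∀ᵐ ω ∂μ, |Y k ω| ≤ h ^ 2 / 20) :
    (fun _ => 1 / 2) ≤ᵐ[μ] fun ω =>
      Real.exp ((1 + 3 * h) * (1 + h) * T / 2 + Real.log 4 / h) *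
        (μ[{ω | predVar ℱ μ Y n ω ∈ Icc ((1 - h) * T) ((1 + h) * T) →
          (1 - h) ^ 2 * T - Real.log 4 / h <
            ∑ k ∈ Finset.range n, Y k ω}.indicator 1 | ℱ 0]) ω := by
  set N := Real.exp ((1 + 3 * h) * (1 + h) * T / 2 + Real.log 4 / h)
  set G := {ω | predVar ℱ μ Y n ω ∈ Icc ((1 - h) * T) ((1 + h) * T) →
    (1 - h) ^ 2 * T - Real.log 4 / h < ∑ k ∈ Finset.range n, Y k ω}
  have hG : MeasurableSet G :=
    (measurable_predVar n measurableSet_Icc).imp (measurableSet_lt measurable_const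
      (Finset.measurable_fun_sum _ fun k _ => hY.measurable k))
  obtain ⟨h_int, h_half⟩ := (hY.stopped n ((1 + h) * T)).integrable_tiltTest_and_half_le_condExp
    hh hh' (abs_stoppedDiff_le (by positivity) hYh _) n
  have h_mono := condExp_mono (m := ℱ 0) h_int
    (((integrable_const (1 : ℝ)).indicator hG).smul N) (hY.ae_tiltTest_stoppedDiff_le hh hh' hT n)
  filter_upwards [h_half, h_mono, condExp_smul N (G.indicator (1 : Ω → ℝ)) (ℱ 0)]
    with ω h₁ h₂ h₃
  exact h₁.trans (h₂.trans_eq h₃)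

end IsMartingaleDiff

end LowerBound

section CharFun

variable {Ω : Type*} {m : MeasurableSpace Ω} {μ : Measure Ω}

lemma norm_cexp_mul_I_sub_taylor_two_le {a y : ℝ} (ha : a ≤ 1) (hy : |y| ≤ a) :
    ‖Complex.exp (y * Complex.I) - (1 + y * Complex.I - y ^ 2 / 2)‖ ≤ a * y ^ 2 := by
  have h_norm : ‖(y * Complex.I : ℂ)‖ = |y| := by simp
  have h_taylor := Complex.exp_bound (h_norm.trans_le (hy.trans ha)) (n := 3) (by norm_num)
  have h_sum : ∑ j ∈ Finset.range 3, (y * Complex.I : ℂ) ^ j / (j.factorial : ℂ) =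
      1 + y * Complex.I - y ^ 2 / 2 := by
    simp only [Finset.sum_range_succ, Finset.sum_range_zero, Nat.factorial, mul_pow, Complex.I_sq]
    norm_num
    ring
  rw [h_sum, h_norm] at h_taylor
  norm_num at h_taylor
  have h_cube : |y| ^ 3 ≤ a * y ^ 2 := by
    rw [pow_succ', sq_abs]
    gcongr
  linarith [pow_nonneg (abs_nonneg y) 3]

lemma abs_exp_neg_half_sub_le {a v : ℝ} (ha : a ≤ 1) (hv₀ : 0 ≤ v) (hv : v ≤ a ^ 2)
    (ha₀ : 0 ≤ a) : |Real.exp (-v / 2) - (1 - v / 2)| ≤ a * v := by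
  have h_taylor := Real.abs_exp_sub_one_sub_id_le (x := -v / 2) (by
    rw [abs_le]; constructor <;> nlinarith)
  rw [show Real.exp (-v / 2) - 1 - -v / 2 = Real.exp (-v / 2) - (1 - v / 2) by ring] at h_taylor
  exact h_taylor.trans (by nlinarith)

lemma integral_smul_eq_integral_condExp_smul {E : Type*} [NormedAddCommGroup E] [NormedSpace ℝ E]
    [CompleteSpace E] {m' : MeasurableSpace Ω} (hm : m' ≤ m) [SigmaFinite (μ.trim hm)]
    {f : Ω → ℝ} {g : Ω → E} (hf : Integrable f μ) (hfg : Integrable (f • g) μ)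
    (hg : StronglyMeasurable[m'] g) :
    ∫ ω, f ω • g ω ∂μ = ∫ ω, (μ[f | m']) ω • g ω ∂μ := by
  rw [← integral_condExp hm (f := fun ω => f ω • g ω)]
  exact integral_congr_ae (condExp_smul_of_aestronglyMeasurable_right hf hfg
    hg.aestronglyMeasurable)

variable {ℱ : Filtration ℕ m} {Y : ℕ → Ω → ℝ} {a : ℝ}

/-- The difference `e^{iY_k} - e^{-𝔼[Y_k² | ℱ_k] / 2}` with its second-order Taylor polynomial,
which is orthogonal to every bounded `ℱ_k`-measurable variable, removed. -/
noncomputable def charRemainder (ℱ : Filtration ℕ m) (μ : Measure Ω) (Y : ℕ → Ω → ℝ) (k : ℕ)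
    (ω : Ω) : ℂ :=
  Complex.exp (Y k ω * Complex.I) - Real.exp (-condSq ℱ μ Y k ω / 2) -
    (Y k ω * Complex.I - (Y k ω ^ 2 - condSq ℱ μ Y k ω) / 2)

/-- The variable `e^{iS_n + ⟨S⟩_n / 2}`, whose expectation is close to `1` when the differences are
small. -/
noncomputable def compensatedCexp (ℱ : Filtration ℕ m) (μ : Measure Ω) (Y : ℕ → Ω → ℝ) (n : ℕ)
    (ω : Ω) : ℂ :=
  Complex.exp ((∑ k ∈ Finset.range n, Y k ω : ℝ) * Complex.I + (predVar ℱ μ Y n ω / 2 : ℝ))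

lemma IsMartingaleDiff.measurable_compensatedCexp (hY : IsMartingaleDiff ℱ μ Y) (n : ℕ) :
    Measurable (compensatedCexp ℱ μ Y n) := by
  have hS := ((hY.stronglyMeasurable_sum n).mono (ℱ.le n)).measurable
  have hV := measurable_predVar (ℱ := ℱ) (μ := μ) (Y := Y) n
  unfold compensatedCexp
  fun_prop

lemma norm_cexp_ofReal_mul_I_add_ofReal (x y : ℝ) :
    ‖Complex.exp (x * Complex.I + y)‖ = Real.exp y := by
  simp [Complex.norm_exp]

namespace IsMartingaleDiff

lemma tendsto_compensatedCexp_stopped_sub {X : ℕ → ℕ → Ω → ℝ} {s τ : ℝ}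
    (hX : ∀ n, IsMartingaleDiff ℱ μ (X n)) (hsτ : s < τ)
    (hs : ∀ᵐ ω ∂μ, Tendsto (fun n => predVar ℱ μ (X n) n ω) atTop (nhds s)) :
    ∀ᵐ ω ∂μ, Tendsto (fun n => compensatedCexp ℱ μ (stoppedDiff ℱ μ (X n) n τ) n ω -
      Complex.exp (s / 2) * Complex.exp ((∑ k ∈ Finset.range n, X n k ω : ℝ) * Complex.I)) atTop
      (nhds 0) := by
  filter_upwards [hs, ae_all_iff.2 fun n => (hX n).sum_stoppedDiff_eq n τ,
    ae_all_iff.2 fun n => (hX n).predVar_stoppedDiff_eq n τ] with ω h_lim hS hV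
  rw [tendsto_zero_iff_norm_tendsto_zero]
  have h_exp : Tendsto (fun n => |Real.exp (predVar ℱ μ (X n) n ω / 2) - Real.exp (s / 2)|) atTop
      (nhds 0) := by
    simpa using ((h_lim.div_const 2).rexp.sub_const (Real.exp (s / 2))).abs
  refine h_exp.congr' ?_
  filter_upwards [h_lim.eventually_le_const hsτ] with n hn
  rw [compensatedCexp, hS n hn n le_rfl, hV n hn, Complex.exp_add, mul_comm (Complex.exp (s / 2)),
    ← mul_sub, norm_mul, Complex.norm_exp_ofReal_mul_I, one_mul, ← Real.norm_eq_abs,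
    ← Complex.norm_real]
  push_cast
  rfl

section FiniteMeasure

variable [IsFiniteMeasure μ]

lemma norm_charRemainder_le (hY : IsMartingaleDiff ℱ μ Y) (ha₀ : 0 ≤ a) (ha : a ≤ 1) {k : ℕ}
    (hYa : ∀ᵐ ω ∂μ, |Y k ω| ≤ a) :
    ∀ᵐ ω ∂μ, ‖charRemainder ℱ μ Y k ω‖ ≤ a * (Y k ω ^ 2 + condSq ℱ μ Y k ω) := by
  filter_upwards [hYa, hY.condSq_le hYa,
    ae_forall_condSq_nonneg (ℱ := ℱ) (μ := μ) (Y := Y)] with ω hω hv h_nonneg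
  have h_split : charRemainder ℱ μ Y k ω =
      (Complex.exp (Y k ω * Complex.I) - (1 + Y k ω * Complex.I - Y k ω ^ 2 / 2)) -
        ((Real.exp (-condSq ℱ μ Y k ω / 2) - (1 - condSq ℱ μ Y k ω / 2) : ℝ) : ℂ) := by
    rw [charRemainder]
    push_cast
    ring
  rw [h_split, mul_add]
  exact (norm_sub_le _ _).trans (add_le_add (norm_cexp_mul_I_sub_taylor_two_le ha hω)
    ((Complex.norm_real _).trans_le (abs_exp_neg_half_sub_le ha (h_nonneg k) hv ha₀)))

lemma integral_taylor_mul_eq_zero (hY : IsMartingaleDiff ℱ μ Y) {k : ℕ} {Z : Ω → ℂ} {K : ℝ}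
    (hZ : StronglyMeasurable[ℱ k] Z) (hK : ∀ᵐ ω ∂μ, ‖Z ω‖ ≤ K) :
    Integrable (fun ω =>
      (Y k ω * Complex.I - (Y k ω ^ 2 - condSq ℱ μ Y k ω) / 2) * Z ω) μ ∧
    ∫ ω, (Y k ω * Complex.I - (Y k ω ^ 2 - condSq ℱ μ Y k ω) / 2) * Z ω ∂μ = 0 := by
  have hZm : AEStronglyMeasurable Z μ := (hZ.mono (ℱ.le k)).aestronglyMeasurable
  have h_int {f : Ω → ℝ} (hf : Integrable f μ) : Integrable (f • Z) μ := hf.smul_bdd K hZm hK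
  have h_int_sq : Integrable (fun ω => Y k ω ^ 2 • Z ω) μ :=
    h_int (hY.memLp_two k).integrable_sq
  have h_int_v : Integrable (fun ω => condSq ℱ μ Y k ω • Z ω) μ := h_int integrable_condExp
  have hY_zero : ∫ ω, Y k ω • Z ω ∂μ = 0 := by
    rw [integral_smul_eq_integral_condExp_smul (ℱ.le k) (hY.integrable k)
      (h_int (hY.integrable k)) hZ]
    refine integral_eq_zero_of_ae ((hY.condExp_eq_zero k).mono fun ω hω => ?_)
    simp only [hω, Pi.zero_apply, zero_smul]
  have h_sq_eq : ∫ ω, Y k ω ^ 2 • Z ω ∂μ = ∫ ω, condSq ℱ μ Y k ω • Z ω ∂μ :=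
    integral_smul_eq_integral_condExp_smul (ℱ.le k) (hY.memLp_two k).integrable_sq h_int_sq hZ
  have h_eq : (fun ω => (Y k ω * Complex.I - (Y k ω ^ 2 - condSq ℱ μ Y k ω) / 2) * Z ω) =
      fun ω => Complex.I * (Y k ω • Z ω) - 1 / 2 * (Y k ω ^ 2 • Z ω - condSq ℱ μ Y k ω • Z ω) := by
    funext ω
    simp only [Complex.real_smul, Complex.ofReal_pow]
    ring
  have h_int₁ : Integrable (fun ω => Complex.I * (Y k ω • Z ω)) μ :=
    (h_int (hY.integrable k)).const_mul _
  have h_int_sub : Integrable (fun ω => Y k ω ^ 2 • Z ω - condSq ℱ μ Y k ω • Z ω) μ :=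
    h_int_sq.sub h_int_v
  rw [h_eq]
  refine ⟨h_int₁.sub (h_int_sub.const_mul _), ?_⟩
  rw [integral_sub h_int₁ (h_int_sub.const_mul _), integral_const_mul, integral_const_mul,
    integral_sub h_int_sq h_int_v, hY_zero, h_sq_eq, sub_self, mul_zero,
    mul_zero, sub_zero]

lemma norm_integral_cexp_sub_exp_mul_le (hY : IsMartingaleDiff ℱ μ Y) (ha₀ : 0 ≤ a) (ha : a ≤ 1)
    {k : ℕ} (hYa : ∀ᵐ ω ∂μ, |Y k ω| ≤ a) {Z : Ω → ℂ} {K : ℝ}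
    (hZ : StronglyMeasurable[ℱ k] Z) (hK : ∀ᵐ ω ∂μ, ‖Z ω‖ ≤ K) :
    Integrable (fun ω => (Complex.exp (Y k ω * Complex.I) -
      Real.exp (-condSq ℱ μ Y k ω / 2)) * Z ω) μ ∧
    ‖∫ ω, (Complex.exp (Y k ω * Complex.I) - Real.exp (-condSq ℱ μ Y k ω / 2)) * Z ω ∂μ‖ ≤
      2 * a * K * ∫ ω, condSq ℱ μ Y k ω ∂μ := by
  obtain ⟨h_int, h_zero⟩ := hY.integral_taylor_mul_eq_zero hZ hK
  have h_sq := (hY.memLp_two k).integrable_sq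
  have hv : Integrable (condSq ℱ μ Y k) μ := integrable_condExp
  have h_bound_int : Integrable (fun ω => a * (Y k ω ^ 2 + condSq ℱ μ Y k ω) * K) μ :=
    ((h_sq.add hv).const_mul a).mul_const K
  have h_bound : ∀ᵐ ω ∂μ, ‖charRemainder ℱ μ Y k ω * Z ω‖ ≤
      a * (Y k ω ^ 2 + condSq ℱ μ Y k ω) * K := by
    filter_upwards [hY.norm_charRemainder_le ha₀ ha hYa, hK] with ω h₁ h₂
    rw [norm_mul]
    exact mul_le_mul h₁ h₂ (norm_nonneg _) ((norm_nonneg _).trans h₁)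
  have hYm := hY.measurable k
  have hvm := ((stronglyMeasurable_condSq (ℱ := ℱ) (μ := μ) (Y := Y) k).mono (ℱ.le k)).measurable
  have h_meas : Measurable (charRemainder ℱ μ Y k) := by
    unfold charRemainder
    fun_prop
  have h_rem_int : Integrable (fun ω => charRemainder ℱ μ Y k ω * Z ω) μ :=
    h_bound_int.mono' (h_meas.aestronglyMeasurable.mul (hZ.mono (ℱ.le k)).aestronglyMeasurable)
      h_bound
  have h_eq : (fun ω => (Complex.exp (Y k ω * Complex.I) -
      Real.exp (-condSq ℱ μ Y k ω / 2)) * Z ω) = fun ω => charRemainder ℱ μ Y k ω * Z ω +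
        (Y k ω * Complex.I - (Y k ω ^ 2 - condSq ℱ μ Y k ω) / 2) * Z ω := by
    funext ω
    rw [charRemainder]
    ring
  rw [h_eq]
  refine ⟨h_rem_int.add h_int, ?_⟩
  rw [integral_add h_rem_int h_int, h_zero, add_zero]
  refine (norm_integral_le_of_norm_le h_bound_int h_bound).trans_eq ?_
  rw [integral_mul_const, integral_const_mul, integral_add h_sq hv,
    show ∫ ω, condSq ℱ μ Y k ω ∂μ = _ from integral_condExp (ℱ.le k)]
  ring

lemma norm_integral_compensatedCexp_succ_sub_le (hY : IsMartingaleDiff ℱ μ Y) (ha₀ : 0 ≤ a)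
    (ha : a ≤ 1) {τ : ℝ} {n : ℕ} (hYa : ∀ᵐ ω ∂μ, |Y n ω| ≤ a)
    (hτ : ∀ᵐ ω ∂μ, predVar ℱ μ Y (n + 1) ω ≤ τ) :
    ‖∫ ω, (compensatedCexp ℱ μ Y (n + 1) ω - compensatedCexp ℱ μ Y n ω) ∂μ‖ ≤
      2 * a * Real.exp (τ / 2) * ∫ ω, condSq ℱ μ Y n ω ∂μ := by
  have hS := (hY.stronglyMeasurable_sum n).measurable
  have hV := (stronglyMeasurable_predVar_succ (ℱ := ℱ) (μ := μ) (Y := Y) n).measurable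
  have hZ : StronglyMeasurable[ℱ n] fun ω => Complex.exp
      ((∑ k ∈ Finset.range n, Y k ω : ℝ) * Complex.I + (predVar ℱ μ Y (n + 1) ω / 2 : ℝ)) := by
    refine Measurable.stronglyMeasurable ?_
    fun_prop
  refine le_trans (le_of_eq (congrArg norm (integral_congr_ae (ae_of_all _ fun ω => ?_))))
    (hY.norm_integral_cexp_sub_exp_mul_le ha₀ ha hYa hZ (K := Real.exp (τ / 2)) ?_).2
  · simp only [compensatedCexp, sub_mul, Complex.ofReal_exp, ← Complex.exp_add,
      Finset.sum_range_succ, predVar_succ]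
    push_cast
    ring_nf
  · filter_upwards [hτ] with ω hω
    rw [norm_cexp_ofReal_mul_I_add_ofReal]
    gcongr

lemma integrable_compensatedCexp (hY : IsMartingaleDiff ℱ μ Y) {τ : ℝ} {n : ℕ}
    (hτ : ∀ᵐ ω ∂μ, predVar ℱ μ Y n ω ≤ τ) : Integrable (compensatedCexp ℱ μ Y n) μ := by
  refine .of_bound (hY.measurable_compensatedCexp n).aestronglyMeasurable (Real.exp (τ / 2)) ?_
  filter_upwards [hτ] with ω hω
  rw [compensatedCexp, norm_cexp_ofReal_mul_I_add_ofReal]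
  gcongr

end FiniteMeasure

variable [IsProbabilityMeasure μ]

lemma norm_integral_compensatedCexp_sub_one_le (hY : IsMartingaleDiff ℱ μ Y) (ha₀ : 0 ≤ a)
    (ha : a ≤ 1) {τ : ℝ} (hYa : ∀ k, ∀ᵐ ω ∂μ, |Y k ω| ≤ a)
    (hτ : ∀ n, ∀ᵐ ω ∂μ, predVar ℱ μ Y n ω ≤ τ) (n : ℕ) :
    ‖∫ ω, compensatedCexp ℱ μ Y n ω ∂μ - 1‖ ≤ 2 * a * Real.exp (τ / 2) * τ := by
  have h_int_predVar (n : ℕ) : Integrable (predVar ℱ μ Y n) μ :=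
    integrable_finsetSum _ fun k _ => integrable_condExp
  have h_le (n : ℕ) : ‖∫ ω, compensatedCexp ℱ μ Y n ω ∂μ - 1‖ ≤
      2 * a * Real.exp (τ / 2) * ∫ ω, predVar ℱ μ Y n ω ∂μ := by
    induction n with
    | zero => simp [compensatedCexp, predVar_zero]
    | succ n ih =>
      have h_step := hY.norm_integral_compensatedCexp_succ_sub_le ha₀ ha (hYa n) (hτ (n + 1))
      rw [integral_sub (hY.integrable_compensatedCexp (hτ _))
        (hY.integrable_compensatedCexp (hτ _))] at h_step
      simp only [predVar_succ]
      rw [integral_add (h_int_predVar n)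
        (show Integrable (condSq ℱ μ Y n) μ from integrable_condExp), mul_add]
      linarith [norm_sub_le_norm_sub_add_norm_sub (∫ ω, compensatedCexp ℱ μ Y (n + 1) ω ∂μ)
        (∫ ω, compensatedCexp ℱ μ Y n ω ∂μ) 1]
  refine (h_le n).trans ?_
  gcongr
  simpa using integral_mono_ae (h_int_predVar n) (integrable_const τ) (hτ n)

lemma tendsto_integral_compensatedCexp_stopped {X : ℕ → ℕ → Ω → ℝ} {b : ℕ → ℝ} {τ : ℝ}
    (hX : ∀ n, IsMartingaleDiff ℱ μ (X n)) (hb₀ : ∀ n, 0 ≤ b n) (hb : Tendsto b atTop (nhds 0))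
    (hXb : ∀ n, ∀ k < n, ∀ᵐ ω ∂μ, |X n k ω| ≤ b n) (hτ : 0 ≤ τ) :
    Tendsto (fun n => ∫ ω, compensatedCexp ℱ μ (stoppedDiff ℱ μ (X n) n τ) n ω ∂μ) atTop
      (nhds 1) := by
  rw [tendsto_iff_norm_sub_tendsto_zero]
  have h_lim : Tendsto (fun n => 2 * b n * Real.exp (τ / 2) * τ) atTop (nhds 0) := by
    simpa using ((hb.const_mul 2).mul_const (Real.exp (τ / 2))).mul_const τ
  refine squeeze_zero' (.of_forall fun n => norm_nonneg _) ?_ h_lim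
  filter_upwards [hb.eventually_le_const one_pos] with n hn
  exact ((hX n).stopped n τ).norm_integral_compensatedCexp_sub_one_le (hb₀ n) hn
    (abs_stoppedDiff_le (hb₀ n) (hXb n) τ)
    (fun N => ((hX n).predVar_stoppedDiff_le n hτ).mono fun ω hω => hω N) n

theorem tendsto_integral_cexp_sum_array {X : ℕ → ℕ → Ω → ℝ} {b : ℕ → ℝ} {s : ℝ}
    (hX : ∀ n, IsMartingaleDiff ℱ μ (X n)) (hb₀ : ∀ n, 0 ≤ b n) (hb : Tendsto b atTop (nhds 0))
    (hXb : ∀ n, ∀ k < n, ∀ᵐ ω ∂μ, |X n k ω| ≤ b n)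
    (hs : ∀ᵐ ω ∂μ, Tendsto (fun n => predVar ℱ μ (X n) n ω) atTop (nhds s)) :
    Tendsto (fun n => ∫ ω, Complex.exp ((∑ k ∈ Finset.range n, X n k ω : ℝ) * Complex.I) ∂μ) atTop
      (nhds (Complex.exp (-s / 2))) := by
  set τ := |s| + 1
  have hsτ : s < τ := (le_abs_self s).trans_lt (lt_add_one _)
  have hτ₀ : 0 ≤ τ := by positivity
  have hτ (n : ℕ) : ∀ᵐ ω ∂μ, predVar ℱ μ (stoppedDiff ℱ μ (X n) n τ) n ω ≤ τ :=
    ((hX n).predVar_stoppedDiff_le n hτ₀).mono fun ω hω => hω n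
  have h_int (n : ℕ) := ((hX n).stopped n τ).integrable_compensatedCexp (hτ n)
  let E (n : ℕ) (ω : Ω) : ℂ :=
    Complex.exp (s / 2) * Complex.exp ((∑ k ∈ Finset.range n, X n k ω : ℝ) * Complex.I)
  have hE_norm (n : ℕ) (ω : Ω) : ‖E n ω‖ = Real.exp (s / 2) := by
    rw [norm_mul, Complex.norm_exp_ofReal_mul_I, mul_one, Complex.norm_exp]
    simp
  have hE_meas (n : ℕ) : Measurable (E n) :=
    ((Complex.measurable_ofReal.comp (((hX n).stronglyMeasurable_sum n).mono
      (ℱ.le n)).measurable).mul_const Complex.I).cexp.const_mul _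
  have hE_int (n : ℕ) : Integrable (E n) μ :=
    .of_bound (hE_meas n).aestronglyMeasurable _ (ae_of_all _ fun ω => (hE_norm n ω).le)
  have h_sub : Tendsto (fun n => ∫ ω, (compensatedCexp ℱ μ (stoppedDiff ℱ μ (X n) n τ) n ω -
      E n ω) ∂μ) atTop (nhds 0) := by
    rw [← integral_zero Ω ℂ (μ := μ)]
    refine tendsto_integral_of_dominated_convergence
      (fun _ => Real.exp (τ / 2) + Real.exp (s / 2)) (fun n => ((h_int n).sub (hE_int n)).1)
      (integrable_const _) (fun n => ?_) (tendsto_compensatedCexp_stopped_sub hX hsτ hs)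
    filter_upwards [hτ n] with ω hω
    refine (norm_sub_le _ _).trans (add_le_add ?_ (hE_norm n ω).le)
    rw [compensatedCexp, norm_cexp_ofReal_mul_I_add_ofReal]
    gcongr
  have h_lim := ((tendsto_integral_compensatedCexp_stopped hX hb₀ hb hXb hτ₀).sub h_sub).const_mul
    (Complex.exp (-s / 2))
  rw [sub_zero, mul_one] at h_lim
  refine h_lim.congr fun n => ?_
  rw [integral_sub (h_int n) (hE_int n), sub_sub_cancel, integral_const_mul, ← mul_assoc,
    ← Complex.exp_add, neg_div, neg_add_cancel, Complex.exp_zero, one_mul]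

theorem tendstoInDistribution_of_abs_le {Y : ℕ → Ω → ℝ} {c : ℕ → ℝ} {v : ℝ≥0}
    (hY : IsMartingaleDiff ℱ μ Y) (hc : Monotone c) (hYc : ∀ k, ∀ᵐ ω ∂μ, |Y k ω| ≤ c k)
    (hc_lim : Tendsto (fun n => c n / √n) atTop (nhds 0))
    (hv : ∀ᵐ ω ∂μ, Tendsto (fun n => predVar ℱ μ Y n ω / n) atTop (nhds v)) :
    TendstoInDistribution (fun (n : ℕ) ω => (√n)⁻¹ * ∑ k ∈ Finset.range n, Y k ω) atTop id
      (fun _ => μ) (gaussianReal 0 v) where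
  forall_aemeasurable n :=
    (((hY.stronglyMeasurable_sum n).mono (ℱ.le n)).measurable.const_mul _).aemeasurable
  aemeasurable_limit := aemeasurable_id
  tendsto := by
    refine ProbabilityMeasure.tendsto_iff_tendsto_charFun.2 fun t => ?_
    have hc₀ (k : ℕ) : 0 ≤ c k :=
      (hYc k).exists.elim fun ω hω => (abs_nonneg _).trans hω
    have h_array := tendsto_integral_cexp_sum_array (μ := μ) (ℱ := ℱ) (s := t ^ 2 * v)
      (X := fun n k ω => t * (√n)⁻¹ * Y k ω) (b := fun n => |t| * (c n / √n))
      (fun n => hY.const_mul _) (fun n => by have := hc₀ n; positivity)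
      (by simpa using hc_lim.const_mul |t|) (fun n k hk => ?_) ?_
    · have h_charFun (n : ℕ) : charFun (μ.map fun ω => (√n)⁻¹ * ∑ k ∈ Finset.range n, Y k ω) t =
          ∫ ω, Complex.exp ((∑ k ∈ Finset.range n, t * (√n)⁻¹ * Y k ω : ℝ) * Complex.I) ∂μ := by
        rw [charFun_apply_real, integral_map (by
          exact (((hY.stronglyMeasurable_sum n).mono (ℱ.le n)).measurable.const_mul _).aemeasurable)
          (by fun_prop)]
        simp only [← Finset.mul_sum, mul_assoc, Complex.ofReal_mul]
      simpa [charFun_gaussianReal, h_charFun, mul_comm, neg_div] using h_array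
    · filter_upwards [hYc k] with ω hω
      rw [abs_mul, abs_mul, abs_inv, abs_of_nonneg (Real.sqrt_nonneg _), mul_assoc, div_eq_inv_mul]
      gcongr
      exact hω.trans (hc hk.le)
    · filter_upwards [hv, ae_all_iff.2 fun n : ℕ =>
        predVar_const_mul (ℱ := ℱ) (μ := μ) (Y := Y) (t * (√n)⁻¹)] with ω h_lim h_mul
      refine (h_lim.const_mul (t ^ 2)).congr fun n => ?_
      rw [h_mul, mul_pow, inv_pow, Real.sq_sqrt n.cast_nonneg]
      ring

end IsMartingaleDiff

end CharFun

section UpperLIL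

variable {Ω : Type*} {m : MeasurableSpace Ω} {μ : Measure Ω}

/-- The normalisation `√(2nv log log n)` of the law of the iterated logarithm with variance `v`. -/
noncomputable def lilScale (v : ℝ) (n : ℕ) : ℝ :=
  √(2 * n * v * Real.log (Real.log n))

lemma tendsto_log_log_natCast : Tendsto (fun n : ℕ => Real.log (Real.log n)) atTop atTop :=
  Real.tendsto_log_atTop.comp (Real.tendsto_log_atTop.comp tendsto_natCast_atTop_atTop)

lemma ae_eventually_notMem_of_eventually_le {s : ℕ → Set Ω} {f : ℕ → ℝ} (hf : Summable f)
    (h : ∀ᶠ j in atTop, μ (s j) ≤ ENNReal.ofReal (f j)) :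
    ∀ᵐ ω ∂μ, ∀ᶠ j in atTop, ω ∉ s j := by
  obtain ⟨J, hJ⟩ := eventually_atTop.1 h
  have h_tsum : ∑' j, μ (s (j + J)) ≠ ∞ :=
    ne_top_of_le_ne_top (((summable_nat_add_iff J).2 hf).tsum_ofReal_ne_top)
      (ENNReal.tsum_le_tsum fun j => hJ (j + J) (Nat.le_add_left J j))
  filter_upwards [ae_eventually_notMem h_tsum] with ω hω
  exact (eventually_map (P := fun j => ω ∉ s j)).1 (map_add_atTop_eq_nat J ▸ hω)

variable [IsProbabilityMeasure μ] {ℱ : Filtration ℕ m} {Y : ℕ → Ω → ℝ} {c : ℕ → ℝ} {v δ : ℝ}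

namespace IsMartingaleDiff

lemma measure_exists_sqrt_le_sum_le (hY : IsMartingaleDiff ℱ μ Y) {ℓ τ B : ℝ} {n : ℕ}
    (hYB : ∀ k < n, ∀ᵐ ω ∂μ, |Y k ω| ≤ B) (hδ₀ : 0 ≤ δ) (hδ : δ ≤ 1) (hℓ : 0 ≤ ℓ) (hτ : 0 < τ)
    (hB : B * √(2 * ℓ / τ) ≤ δ) :
    μ {ω | predVar ℱ μ Y n ω ≤ τ ∧
      ∃ j ≤ n, (1 + δ) * √(2 * τ * ℓ) ≤ ∑ k ∈ Finset.range j, Y k ω} ≤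
      ENNReal.ofReal (Real.exp (-(1 + δ) * ℓ)) := by
  set l := √(2 * ℓ / τ)
  have hl_sq : l ^ 2 * τ = 2 * ℓ := by
    rw [Real.sq_sqrt (by positivity)]
    field_simp
  have hl_mul : l * √(2 * τ * ℓ) = 2 * ℓ := by
    rw [← Real.sqrt_mul (by positivity), show 2 * ℓ / τ * (2 * τ * ℓ) = (2 * ℓ) ^ 2 by field_simp,
      Real.sqrt_sq (by positivity)]
  have h_scaled := (hY.const_mul l).measure_exists_le_sum_le hδ₀ hδ (n := n) (τ := 2 * ℓ)
    (fun k hk => (hYB k hk).mono fun ω hω => ?_) (by positivity) ((1 + δ) * (2 * ℓ))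
  · refine (measure_mono_ae ?_).trans (h_scaled.trans_eq (by ring_nf))
    filter_upwards [predVar_const_mul (ℱ := ℱ) (μ := μ) (Y := Y) l] with ω hω ⟨hV, j, hj, hS⟩
    refine ⟨?_, j, hj, ?_⟩
    · rw [hω, ← hl_sq]
      gcongr
    · rw [← Finset.mul_sum, ← hl_mul, mul_left_comm]
      gcongr
  · rw [abs_mul, abs_of_nonneg (Real.sqrt_nonneg _), mul_comm]
    exact (mul_le_mul_of_nonneg_right hω (Real.sqrt_nonneg _)).trans hB

lemma ae_eventually_forall_sum_lt (hY : IsMartingaleDiff ℱ μ Y) (hc : Monotone c)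
    (hYc : ∀ k, ∀ᵐ ω ∂μ, |Y k ω| ≤ c k)
    (hc_lim : Tendsto (fun n : ℕ => c n * √(Real.log (Real.log n)) / √n) atTop (nhds 0))
    (hv₀ : 0 < v) (hv : ∀ᵐ ω ∂μ, Tendsto (fun n => predVar ℱ μ Y n ω / n) atTop (nhds v))
    (hδ₀ : 0 < δ) (hδ : δ ≤ 1) {N : ℕ → ℕ} (hN : Tendsto N atTop atTop)
    (hN_sum : Summable fun j => Real.exp (-(1 + δ) * Real.log (Real.log (N j)))) :
    ∀ᵐ ω ∂μ, ∀ᶠ j in atTop, ∀ i ≤ N j, ∑ k ∈ Finset.range i, Y k ω <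
      (1 + δ) * √(2 * ((1 + δ) * v * N j) * Real.log (Real.log (N j))) := by
  have h_small : ∀ᶠ n : ℕ in atTop,
      c n * √(2 * Real.log (Real.log n) / ((1 + δ) * v * n)) ≤ δ := by
    have h := hc_lim.mul_const √(2 / ((1 + δ) * v))
    rw [zero_mul] at h
    filter_upwards [h.eventually_le_const hδ₀] with n hn
    refine le_of_eq_of_le ?_ hn
    rw [show 2 * Real.log (Real.log n) / ((1 + δ) * v * n) =
      2 / ((1 + δ) * v) * (Real.log (Real.log n) / n) by field_simp,
      Real.sqrt_mul (by positivity), Real.sqrt_div' _ n.cast_nonneg]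
    ring
  have h_prob := (hN.eventually (h_small.and ((tendsto_log_log_natCast.eventually_ge_atTop 0).and
    (eventually_gt_atTop 0)))).mono fun j ⟨hj_small, hj_log, hj_pos⟩ =>
      hY.measure_exists_sqrt_le_sum_le (τ := (1 + δ) * v * N j)
        (fun k hk => (hYc k).mono fun ω hω => hω.trans (hc hk.le)) hδ₀.le hδ hj_log
        (by positivity) hj_small
  filter_upwards [ae_eventually_notMem_of_eventually_le hN_sum h_prob, hv] with ω hω h_lim
  have hV : ∀ᶠ n : ℕ in atTop, predVar ℱ μ Y n ω ≤ (1 + δ) * v * n := by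
    filter_upwards [h_lim.eventually_le_const (show v < (1 + δ) * v by nlinarith),
      eventually_gt_atTop 0] with n hn hn_pos
    exact (div_le_iff₀ (Nat.cast_pos.2 hn_pos)).1 hn
  filter_upwards [hω, hN.eventually hV] with j hj hVj i hi
  by_contra! h
  exact hj ⟨hVj, i, hi, h⟩

end IsMartingaleDiff

/-- The times `⌈θʲ⌉` along which the upper half of the law of the iterated logarithm is proved. -/
noncomputable def ceilPow (θ : ℝ) (j : ℕ) : ℕ := ⌈θ ^ j⌉₊

lemma tendsto_ceilPow {θ : ℝ} (hθ : 1 < θ) : Tendsto (ceilPow θ) atTop atTop :=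
  tendsto_nat_ceil_atTop.comp (tendsto_pow_atTop_atTop_of_one_lt hθ)

lemma summable_exp_log_log_ceilPow (hδ₀ : 0 < δ) :
    Summable fun j => Real.exp (-(1 + δ) * Real.log (Real.log (ceilPow (1 + δ) (j + 1)))) := by
  have hθ : 1 < 1 + δ := by linarith
  have h_log : 0 < Real.log (1 + δ) := Real.log_pos hθ
  have h_sum : Summable fun j : ℕ =>
      Real.log (1 + δ) ^ (-(1 + δ)) * ((j + 1 : ℕ) : ℝ) ^ (-(1 + δ)) :=
    ((summable_nat_add_iff 1).2 (Real.summable_nat_rpow.2 (by linarith))).mul_left _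
  refine h_sum.of_nonneg_of_le (fun j => (Real.exp_pos _).le) fun j => ?_
  have h_pos : 0 < Real.log (1 + δ) * (j + 1 : ℕ) := by positivity
  have h_le : Real.log (1 + δ) * (j + 1 : ℕ) ≤ Real.log (ceilPow (1 + δ) (j + 1)) := by
    rw [mul_comm, ← Real.log_pow]
    exact Real.log_le_log (by positivity) (Nat.le_ceil _)
  rw [mul_comm, ← Real.rpow_def_of_pos (h_pos.trans_le h_le),
    ← Real.mul_rpow h_log.le (Nat.cast_nonneg _)]
  exact Real.rpow_le_rpow_of_nonpos h_pos h_le (by linarith)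

lemma eventually_exists_ceilPow (hδ₀ : 0 < δ) (J : ℕ) :
    ∀ᶠ n : ℕ in atTop, ∃ j ≥ J, n ≤ ceilPow (1 + δ) (j + 1) ∧
      (ceilPow (1 + δ) (j + 1) : ℝ) ≤ (1 + δ) ^ 2 * n := by
  have hθ : 1 < 1 + δ := by linarith
  have h_large : ∀ᶠ n : ℕ in atTop, 1 ≤ δ * (1 + δ) * n :=
    (tendsto_natCast_atTop_atTop.const_mul_atTop (by positivity)).eventually_ge_atTop 1
  filter_upwards [h_large, eventually_ge_atTop 1,
    tendsto_natCast_atTop_atTop.eventually_ge_atTop ((1 + δ) ^ J)] with n hn hn_one hnJ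
  obtain ⟨j, hj, hj'⟩ := exists_nat_pow_near (Nat.one_le_cast.2 hn_one : (1 : ℝ) ≤ n) hθ
  refine ⟨j, Nat.lt_succ_iff.1 ((pow_lt_pow_iff_right₀ hθ).1 (hnJ.trans_lt hj')),
    Nat.cast_le.1 (hj'.le.trans (Nat.le_ceil _)), ?_⟩
  have h_ceil : (ceilPow (1 + δ) (j + 1) : ℝ) < (1 + δ) ^ (j + 1) + 1 :=
    Nat.ceil_lt_add_one (by positivity)
  rw [pow_succ] at h_ceil
  nlinarith

lemma eventually_forall_log_log_le (hδ₀ : 0 < δ) (K : ℝ) :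
    ∀ᶠ n : ℕ in atTop, ∀ N : ℕ, n ≤ N → N ≤ K * n →
      Real.log (Real.log N) ≤ (1 + δ) * Real.log (Real.log n) := by
  filter_upwards [(tendsto_log_log_natCast.const_mul_atTop hδ₀).eventually_ge_atTop (Real.log 2),
    tendsto_natCast_atTop_atTop.eventually_ge_atTop K, eventually_ge_atTop 2]
    with n hn hnK hn_two N hnN hN
  have hn₁ : (1 : ℝ) < n := by exact_mod_cast hn_two
  have hN₁ : (1 : ℝ) < N := hn₁.trans_le (Nat.cast_le.2 hnN)
  have h_log : Real.log N ≤ 2 * Real.log n := by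
    rw [← Nat.cast_two, ← Real.log_pow]
    exact Real.log_le_log (by linarith) (by nlinarith)
  calc Real.log (Real.log N) ≤ Real.log (2 * Real.log n) :=
        Real.log_le_log (Real.log_pos hN₁) h_log
    _ = Real.log 2 + Real.log (Real.log n) :=
        Real.log_mul two_ne_zero (Real.log_pos hn₁).ne'
    _ ≤ (1 + δ) * Real.log (Real.log n) := by linarith

theorem IsMartingaleDiff.ae_eventually_sum_le (hY : IsMartingaleDiff ℱ μ Y) (hc : Monotone c)
    (hYc : ∀ k, ∀ᵐ ω ∂μ, |Y k ω| ≤ c k)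
    (hc_lim : Tendsto (fun n : ℕ => c n * √(Real.log (Real.log n)) / √n) atTop (nhds 0))
    (hv₀ : 0 < v) (hv : ∀ᵐ ω ∂μ, Tendsto (fun n => predVar ℱ μ Y n ω / n) atTop (nhds v))
    (hδ₀ : 0 < δ) (hδ : δ ≤ 1) :
    ∀ᵐ ω ∂μ, ∀ᶠ n in atTop, ∑ k ∈ Finset.range n, Y k ω ≤ (1 + δ) ^ 3 * lilScale v n := by
  have hN : Tendsto (fun j => ceilPow (1 + δ) (j + 1)) atTop atTop :=
    (tendsto_add_atTop_iff_nat 1).2 (tendsto_ceilPow (by linarith))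
  filter_upwards [hY.ae_eventually_forall_sum_lt hc hYc hc_lim hv₀ hv hδ₀ hδ hN
    (summable_exp_log_log_ceilPow hδ₀)] with ω hω
  obtain ⟨J, hJ⟩ := eventually_atTop.1 hω
  filter_upwards [eventually_exists_ceilPow hδ₀ J, tendsto_log_log_natCast.eventually_ge_atTop 0,
    eventually_forall_log_log_le hδ₀ ((1 + δ) ^ 2)] with n ⟨j, hj, hnN, hNn⟩ h_log_nonneg h_log
  set N := ceilPow (1 + δ) (j + 1)
  calc ∑ k ∈ Finset.range n, Y k ω
      ≤ (1 + δ) * √(2 * ((1 + δ) * v * N) * Real.log (Real.log N)) := (hJ j hj n hnN).le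
    _ ≤ (1 + δ) * √(2 * ((1 + δ) * v * ((1 + δ) ^ 2 * n)) *
          ((1 + δ) * Real.log (Real.log n))) := by
        gcongr _ * √?_
        exact mul_le_mul_of_nonneg (by gcongr) (h_log N hnN hNn) (by positivity) (by positivity)
    _ = (1 + δ) * √(((1 + δ) ^ 2) ^ 2 * (2 * n * v * Real.log (Real.log n))) := by ring_nf
    _ = (1 + δ) ^ 3 * lilScale v n := by
        rw [Real.sqrt_mul (by positivity), Real.sqrt_sq (by positivity), lilScale]
        ring

end UpperLIL

section LowerLIL

variable {Ω : Type*} {m : MeasurableSpace Ω} {μ : Measure Ω}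

lemma ae_frequently_mem_of_not_summable [IsFiniteMeasure μ] {𝒢 : Filtration ℕ m} {s : ℕ → Set Ω}
    {b : ℕ → ℝ} (hs : ∀ k, MeasurableSet[𝒢 (k + 1)] (s k)) (hb₀ : ∀ k, 0 ≤ b k)
    (hb : ¬Summable b)
    (h : ∀ᶠ k in atTop, (fun _ => b k) ≤ᵐ[μ] μ[(s k).indicator (1 : Ω → ℝ) | 𝒢 k]) :
    ∀ᵐ ω ∂μ, ∃ᶠ k in atTop, ω ∈ s k := by
  let t : ℕ → Set Ω := fun k => k.casesOn ∅ s
  have ht (k : ℕ) : MeasurableSet[𝒢 k] (t k) := by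
    cases k with
    | zero => exact @MeasurableSet.empty _ (𝒢 0)
    | succ k => exact hs k
  obtain ⟨K, hK⟩ := eventually_atTop.1 h
  have h_nonneg (k : ℕ) : 0 ≤ᵐ[μ] μ[(s k).indicator (1 : Ω → ℝ) | 𝒢 k] :=
    condExp_nonneg (ae_of_all _ (indicator_nonneg fun _ _ => zero_le_one))
  filter_upwards [ae_mem_limsup_atTop_iff μ ht, ae_all_iff.2 fun k => ae_all_iff.2 (hK k),
    ae_all_iff.2 h_nonneg] with ω h_iff hω hω_nonneg
  have h_freq : ∃ᶠ k in atTop, ω ∈ t k := by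
    refine mem_limsup_iff_frequently_mem.1 (h_iff.2
      ((not_summable_iff_tendsto_nat_atTop_of_nonneg hω_nonneg).1 fun h_sum => hb ?_))
    refine h_sum.of_norm_bounded_eventually_nat ?_
    filter_upwards [eventually_ge_atTop K] with k hk
    rw [Real.norm_of_nonneg (hb₀ k)]
    exact hω k hk
  rw [← map_add_atTop_eq_nat 1, frequently_map] at h_freq
  exact h_freq

lemma condExp_indicator_one_mono [IsFiniteMeasure μ] {m' : MeasurableSpace Ω} {s t : Set Ω}
    (hs : MeasurableSet[m] s) (ht : MeasurableSet[m] t) (hst : ∀ᵐ ω ∂μ, ω ∈ s → ω ∈ t) :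
    μ[s.indicator (1 : Ω → ℝ) | m'] ≤ᵐ[μ] μ[t.indicator (1 : Ω → ℝ) | m'] := by
  refine condExp_mono ((integrable_const 1).indicator hs) ((integrable_const 1).indicator ht) ?_
  filter_upwards [hst] with ω hω
  by_cases hs : ω ∈ s
  · simp only [indicator_of_mem hs, indicator_of_mem (hω hs), le_refl]
  · rw [indicator_of_notMem hs]
    exact indicator_nonneg (fun _ _ => zero_le_one) ω

lemma exists_tilting_parameter {h ℓ T : ℝ} (hh : 0 < h) (hh' : h ≤ 1 / 10) (hT : 0 < T)
    (hℓ : Real.log 4 ≤ h ^ 2 * ℓ) :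
    ∃ l, 0 < l ∧ l ≤ √(2 * ℓ / T) ∧
      l * ((1 - 8 * h) * √(2 * T * ℓ)) ≤ (1 - h) ^ 2 * (l ^ 2 * T) - Real.log 4 / h ∧
      (1 + 3 * h) * (1 + h) * (l ^ 2 * T) / 2 ≤ ℓ := by
  have hℓ₀ : 0 < ℓ := pos_of_mul_pos_right ((Real.log_pos (by norm_num)).trans_le hℓ) (sq_nonneg h)
  have h_log : Real.log 4 / h ≤ h * ℓ := (div_le_iff₀ hh).2 (by linarith)
  have hh₅ : 0 < 1 - 5 * h := by linarith
  set l := √(2 * (1 - 5 * h) * ℓ / T)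
  have hl_sq : l ^ 2 * T = 2 * (1 - 5 * h) * ℓ := by
    rw [Real.sq_sqrt (by positivity), div_mul_cancel₀ _ hT.ne']
  have hl_mul : l * √(2 * T * ℓ) ≤ 2 * ℓ := by
    rw [← Real.sqrt_mul (by positivity)]
    refine Real.sqrt_le_iff.2 ⟨by positivity, ?_⟩
    rw [show 2 * (1 - 5 * h) * ℓ / T * (2 * T * ℓ) = (1 - 5 * h) * (2 * ℓ) ^ 2 by field_simp]
    nlinarith [sq_nonneg (2 * ℓ)]
  refine ⟨l, Real.sqrt_pos.2 (by positivity), Real.sqrt_le_sqrt (by gcongr; nlinarith), ?_, ?_⟩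
  · rw [hl_sq, mul_left_comm]
    have := mul_le_mul_of_nonneg_left hl_mul (by linarith : 0 ≤ 1 - 8 * h)
    nlinarith [mul_pos hh hℓ₀, mul_pos (mul_pos hh hh) hℓ₀]
  · rw [hl_sq]
    nlinarith [mul_pos hh hℓ₀, mul_pos (mul_pos hh hh) hℓ₀,
      mul_pos (mul_pos (mul_pos hh hh) hh) hℓ₀]

variable {ℱ : Filtration ℕ m} {Y : ℕ → Ω → ℝ} {c : ℕ → ℝ} {v h : ℝ}

section FiniteMeasure

variable [IsFiniteMeasure μ]

namespace IsMartingaleDiff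

lemma half_le_condExp_indicator_of_scaled (hY : IsMartingaleDiff ℱ μ Y) {T l x : ℝ} {n : ℕ}
    (hh : 0 < h) (hh' : h ≤ 1 / 10) (hT : 0 ≤ T) (hl : 0 < l)
    (hYh : ∀ k < n, ∀ᵐ ω ∂μ, |l * Y k ω| ≤ h ^ 2 / 20)
    (hx : l * x ≤ (1 - h) ^ 2 * (l ^ 2 * T) - Real.log 4 / h) :
    (fun _ => 1 / 2) ≤ᵐ[μ] fun ω =>
      Real.exp ((1 + 3 * h) * (1 + h) * (l ^ 2 * T) / 2 + Real.log 4 / h) *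
        (μ[{ω | predVar ℱ μ Y n ω ∈ Icc ((1 - h) * T) ((1 + h) * T) →
          x < ∑ k ∈ Finset.range n, Y k ω}.indicator 1 | ℱ 0]) ω := by
  have h_half := (hY.const_mul l).half_le_condExp_indicator hh hh' (T := l ^ 2 * T)
    (by positivity) hYh
  have h_meas {Z : ℕ → Ω → ℝ} (hZ : IsMartingaleDiff ℱ μ Z) (α β y : ℝ) : MeasurableSet
      {ω | predVar ℱ μ Z n ω ∈ Icc α β → y < ∑ k ∈ Finset.range n, Z k ω} :=
    (measurable_predVar n measurableSet_Icc).imp (measurableSet_lt measurable_const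
      (Finset.measurable_fun_sum _ fun k _ => hZ.measurable k))
  have h_imp : ∀ᵐ ω ∂μ, (predVar ℱ μ (fun k ω => l * Y k ω) n ω ∈
        Icc ((1 - h) * (l ^ 2 * T)) ((1 + h) * (l ^ 2 * T)) →
      (1 - h) ^ 2 * (l ^ 2 * T) - Real.log 4 / h < ∑ k ∈ Finset.range n, l * Y k ω) →
      predVar ℱ μ Y n ω ∈ Icc ((1 - h) * T) ((1 + h) * T) →
      x < ∑ k ∈ Finset.range n, Y k ω := by
    filter_upwards [predVar_const_mul (ℱ := ℱ) (μ := μ) (Y := Y) l] with ω hω hωS ⟨hV₁, hV₂⟩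
    have hS := hωS (by
      rw [hω, mul_left_comm, mul_left_comm (1 + h)]
      exact ⟨by gcongr, by gcongr⟩)
    rw [← Finset.mul_sum] at hS
    exact lt_of_mul_lt_mul_left (hx.trans_lt hS) hl.le
  have h_mono := condExp_indicator_one_mono (m' := ℱ 0) (h_meas (hY.const_mul l) _ _ _)
    (h_meas hY _ _ _) h_imp
  filter_upwards [h_half, h_mono] with ω hω h_le
  exact hω.trans (mul_le_mul_of_nonneg_left h_le (Real.exp_pos _).le)

lemma exp_neg_le_condExp_block (hY : IsMartingaleDiff ℱ μ Y) {ℓ T B : ℝ} {n : ℕ} (hh : 0 < h)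
    (hh' : h ≤ 1 / 10) (hT : 0 < T) (hℓ : Real.log 4 ≤ h ^ 2 * ℓ)
    (hYB : ∀ k < n, ∀ᵐ ω ∂μ, |Y k ω| ≤ B) (hB : B * √(2 * ℓ / T) ≤ h ^ 2 / 20) :
    (fun _ => 1 / 2 * Real.exp (-(Real.log 4 / h)) * Real.exp (-ℓ)) ≤ᵐ[μ]
      μ[{ω | predVar ℱ μ Y n ω ∈ Icc ((1 - h) * T) ((1 + h) * T) →
        (1 - 8 * h) * √(2 * T * ℓ) < ∑ k ∈ Finset.range n, Y k ω}.indicator 1 | ℱ 0] := by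
  obtain ⟨l, hl_pos, hl_le, h_threshold, h_exponent⟩ := exists_tilting_parameter hh hh' hT hℓ
  have hlB (k : ℕ) (hk : k < n) : ∀ᵐ ω ∂μ, |l * Y k ω| ≤ h ^ 2 / 20 := by
    filter_upwards [hYB k hk] with ω hω
    rw [abs_mul, abs_of_pos hl_pos, mul_comm]
    exact (mul_le_mul hω hl_le hl_pos.le ((abs_nonneg _).trans hω)).trans hB
  filter_upwards [hY.half_le_condExp_indicator_of_scaled hh hh' hT.le hl_pos hlB h_threshold]
    with ω hω
  rw [mul_assoc, ← Real.exp_add, ← neg_add, Real.exp_neg, ← div_eq_mul_inv,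
    div_le_iff₀ (Real.exp_pos _)]
  refine hω.trans ((mul_comm _ _).trans_le (mul_le_mul_of_nonneg_left
    (Real.exp_le_exp.2 (by linarith)) ?_))
  exact (pos_of_mul_pos_right (one_half_pos.trans_le hω) (Real.exp_pos _).le).le

lemma ae_frequently_lt_sum_sub_sum (hY : IsMartingaleDiff ℱ μ Y) (hc : Monotone c)
    (hYc : ∀ k, ∀ᵐ ω ∂μ, |Y k ω| ≤ c k) {A : ℕ → ℕ} (hA : Monotone A) {ℓ T : ℕ → ℝ}
    (hh : 0 < h) (hh' : h ≤ 1 / 10) (hT : ∀ j, 0 < T j) (hℓ : Tendsto ℓ atTop atTop)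
    (hℓ_sum : ¬Summable fun j => Real.exp (-ℓ j))
    (hc_lim : Tendsto (fun j => c (A (j + 1)) * √(2 * ℓ j / T j)) atTop (nhds 0)) :
    ∀ᵐ ω ∂μ, ∃ᶠ j in atTop,
      predVar ℱ μ Y (A (j + 1)) ω - predVar ℱ μ Y (A j) ω ∈ Icc ((1 - h) * T j) ((1 + h) * T j) →
      (1 - 8 * h) * √(2 * T j * ℓ j) <
        ∑ k ∈ Finset.range (A (j + 1)), Y k ω - ∑ k ∈ Finset.range (A j), Y k ω := by
  let 𝒢 : Filtration ℕ m := ⟨fun j => ℱ (A j), fun _ _ hij => ℱ.mono (hA hij), fun j => ℱ.le (A j)⟩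
  refine ae_frequently_mem_of_not_summable (𝒢 := 𝒢)
    (s := fun j => {ω | predVar ℱ μ Y (A (j + 1)) ω - predVar ℱ μ Y (A j) ω ∈
        Icc ((1 - h) * T j) ((1 + h) * T j) → (1 - 8 * h) * √(2 * T j * ℓ j) <
      ∑ k ∈ Finset.range (A (j + 1)), Y k ω - ∑ k ∈ Finset.range (A j), Y k ω})
    (b := fun j => 1 / 2 * Real.exp (-(Real.log 4 / h)) * Real.exp (-ℓ j)) (fun j => ?_)
    (fun j => by positivity) (fun h_sum => hℓ_sum ((summable_mul_left_iff (by positivity)).1 h_sum))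
    ?_
  · have hA_le := hA j.le_succ
    have hS (i : ℕ) (hi : i ≤ A (j + 1)) :
        Measurable[ℱ (A (j + 1))] fun ω => ∑ k ∈ Finset.range i, Y k ω :=
      ((hY.stronglyMeasurable_sum i).mono (ℱ.mono hi)).measurable
    have hV (i : ℕ) (hi : i ≤ A (j + 1)) : Measurable[ℱ (A (j + 1))] (predVar ℱ μ Y i) :=
      (stronglyMeasurable_predVar i).measurable.mono (ℱ.mono hi) le_rfl
    exact (((hV _ le_rfl).sub (hV _ hA_le)) measurableSet_Icc).imp
      (measurableSet_lt measurable_const ((hS _ le_rfl).sub (hS _ hA_le)))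
  · filter_upwards [hc_lim.eventually_le_const (by positivity : (0 : ℝ) < h ^ 2 / 20),
      (hℓ.const_mul_atTop (by positivity : 0 < h ^ 2)).eventually_ge_atTop (Real.log 4)]
      with j hj hℓj
    obtain ⟨n, hn⟩ := Nat.exists_eq_add_of_le (hA j.le_succ)
    have h_block := (hY.shift (A j)).exp_neg_le_condExp_block hh hh' (hT j) hℓj (n := n)
      (fun k hk => (hYc (A j + k)).mono fun ω hω => hω.trans (hc (by lia))) hj
    simp only [predVar_shift] at h_block
    simp only [hn, Finset.sum_range_add, add_sub_cancel_left]
    exact h_block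

end IsMartingaleDiff

section GeometricBlocks

variable {d : ℕ}

lemma not_summable_exp_neg_log_log_pow (hd : 1 < d) :
    ¬Summable fun j : ℕ => Real.exp (-Real.log (Real.log (d ^ (j + 1) : ℕ))) := by
  have h_log : 0 < Real.log d := Real.log_pos (Nat.one_lt_cast.2 hd)
  have h_eq (j : ℕ) : Real.exp (-Real.log (Real.log (d ^ (j + 1) : ℕ))) =
      (Real.log d)⁻¹ * ((j + 1 : ℕ) : ℝ)⁻¹ := by
    rw [Nat.cast_pow, Real.log_pow, Real.exp_neg, Real.exp_log (by positivity), mul_comm, mul_inv]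
  simp only [h_eq, summable_mul_left_iff (inv_ne_zero h_log.ne')]
  exact fun h_sum => Real.not_summable_natCast_inv
    ((summable_nat_add_iff (f := fun n : ℕ => (n : ℝ)⁻¹) 1).1 h_sum)

lemma eventually_sub_mem_Icc_of_tendsto_div {V : ℕ → ℝ} (hd : 3 ≤ d) (hv₀ : 0 < v) (hh : 0 < h)
    (hV : Tendsto (fun n => V n / n) atTop (nhds v)) :
    ∀ᶠ j in atTop, V (d ^ (j + 1)) - V (d ^ j) ∈
      Icc ((1 - h) * (v * ((d : ℝ) ^ (j + 1) - d ^ j)))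
        ((1 + h) * (v * ((d : ℝ) ^ (j + 1) - d ^ j))) := by
  have h_dist : ∀ᶠ n : ℕ in atTop, |V n - v * n| ≤ h * v / 2 * n := by
    filter_upwards [Metric.tendsto_nhds.1 hV (h * v / 2) (by positivity), eventually_gt_atTop 0]
      with n hn hn_pos
    have hn_pos' : (0 : ℝ) < n := Nat.cast_pos.2 hn_pos
    rw [Real.dist_eq] at hn
    calc |V n - v * n| = |V n / n - v| * n := by
          rw [← abs_of_pos hn_pos', ← abs_mul, abs_of_pos hn_pos', sub_mul,
            div_mul_cancel₀ _ hn_pos'.ne']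
      _ ≤ h * v / 2 * n := by gcongr
  have h_pow := tendsto_pow_atTop_atTop_of_one_lt (by lia : 1 < d)
  filter_upwards [h_pow.eventually h_dist,
    ((tendsto_add_atTop_iff_nat 1).2 h_pow).eventually h_dist] with j h₀ h₁
  have hd' : (3 : ℝ) ≤ d := by exact_mod_cast hd
  have h_pos : 0 < h * v * (d : ℝ) ^ j := by positivity
  rw [Nat.cast_pow, abs_le] at h₀ h₁
  rw [pow_succ] at h₁ ⊢
  constructor <;> nlinarith

lemma one_sub_mul_lilScale_pow_le (hv₀ : 0 ≤ v) (hh : 0 < h) (hh' : h ≤ 1) (hd : 1 ≤ d * h ^ 2)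
    {j : ℕ} (hj : 0 ≤ Real.log (Real.log (d ^ (j + 1) : ℕ))) :
    (1 - h) * lilScale v (d ^ (j + 1)) ≤
      √(2 * (v * ((d : ℝ) ^ (j + 1) - d ^ j)) * Real.log (Real.log (d ^ (j + 1) : ℕ))) := by
  rw [lilScale, ← Real.sqrt_sq (by linarith : 0 ≤ 1 - h), ← Real.sqrt_mul (sq_nonneg _)]
  have h_le : (1 - h) ^ 2 * (d : ℝ) ^ (j + 1) ≤ d ^ (j + 1) - d ^ j := by
    rw [pow_succ (d : ℝ) j]
    nlinarith [mul_le_mul_of_nonneg_left hd (by positivity : (0 : ℝ) ≤ (d : ℝ) ^ j),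
      mul_nonneg (mul_nonneg hh.le (sub_nonneg.2 hh'))
        (by positivity : (0 : ℝ) ≤ (d : ℝ) ^ j * d)]
  refine Real.sqrt_le_sqrt ?_
  calc (1 - h) ^ 2 * (2 * (d ^ (j + 1) : ℕ) * v * Real.log (Real.log (d ^ (j + 1) : ℕ)))
      = 2 * (v * ((1 - h) ^ 2 * (d : ℝ) ^ (j + 1))) * Real.log (Real.log (d ^ (j + 1) : ℕ)) := by
        push_cast; ring
    _ ≤ _ := by gcongr

lemma lilScale_pow_le (hv₀ : 0 ≤ v) (hh : 0 < h) (hd₁ : 1 < d) (hd : 1 ≤ d * h ^ 2) {j : ℕ}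
    (hj : 0 < j) (hj' : 0 ≤ Real.log (Real.log (d ^ (j + 1) : ℕ))) :
    lilScale v (d ^ j) ≤ h * lilScale v (d ^ (j + 1)) := by
  have h_log : Real.log (Real.log (d ^ j : ℕ)) ≤ Real.log (Real.log (d ^ (j + 1) : ℕ)) := by
    have h_one : 1 < d ^ j := Nat.one_lt_pow hj.ne' hd₁
    refine Real.log_le_log (Real.log_pos (Nat.one_lt_cast.2 h_one))
      (Real.log_le_log (Nat.cast_pos.2 (by lia)) (Nat.cast_le.2 ?_))
    exact Nat.pow_le_pow_right (by lia) j.le_succ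
  have h_pow : (d ^ j : ℕ) ≤ h ^ 2 * (d ^ (j + 1) : ℕ) := by
    push_cast
    rw [pow_succ (d : ℝ) j]
    nlinarith [mul_le_mul_of_nonneg_left hd (by positivity : (0 : ℝ) ≤ (d : ℝ) ^ j)]
  rw [lilScale, lilScale, ← Real.sqrt_sq hh.le, ← Real.sqrt_mul (sq_nonneg _)]
  refine Real.sqrt_le_sqrt ?_
  calc 2 * (d ^ j : ℕ) * v * Real.log (Real.log (d ^ j : ℕ))
      ≤ 2 * (h ^ 2 * (d ^ (j + 1) : ℕ)) * v * Real.log (Real.log (d ^ (j + 1) : ℕ)) :=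
        (mul_le_mul_of_nonneg_left h_log (by positivity)).trans (by gcongr)
    _ = _ := by ring

end GeometricBlocks

lemma IsMartingaleDiff.ae_frequently_lt_sum_sub_sum_pow (hY : IsMartingaleDiff ℱ μ Y)
    (hc : Monotone c) (hYc : ∀ k, ∀ᵐ ω ∂μ, |Y k ω| ≤ c k)
    (hc_lim : Tendsto (fun n : ℕ => c n * √(Real.log (Real.log n)) / √n) atTop (nhds 0))
    (hv₀ : 0 < v) (hv : ∀ᵐ ω ∂μ, Tendsto (fun n => predVar ℱ μ Y n ω / n) atTop (nhds v))
    (hh : 0 < h) (hh' : h ≤ 1 / 10) {d : ℕ} (hd : 3 ≤ d) :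
    ∀ᵐ ω ∂μ, ∃ᶠ j in atTop, (1 - 8 * h) * √(2 * (v * ((d : ℝ) ^ (j + 1) - d ^ j)) *
        Real.log (Real.log (d ^ (j + 1) : ℕ))) <
      ∑ k ∈ Finset.range (d ^ (j + 1)), Y k ω - ∑ k ∈ Finset.range (d ^ j), Y k ω := by
  have hd₁ : (1 : ℝ) < d := by exact_mod_cast (by lia : 1 < d)
  have h_pow : Tendsto (fun j => d ^ (j + 1)) atTop atTop :=
    (tendsto_add_atTop_iff_nat 1).2 (tendsto_pow_atTop_atTop_of_one_lt (by lia))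
  have hT (j : ℕ) : 0 < v * ((d : ℝ) ^ (j + 1) - d ^ j) :=
    mul_pos hv₀ (sub_pos.2 (pow_lt_pow_right₀ hd₁ j.lt_succ_self))
  have hc_block : Tendsto (fun j => c (d ^ (j + 1)) * √(2 * Real.log (Real.log (d ^ (j + 1) : ℕ)) /
      (v * ((d : ℝ) ^ (j + 1) - d ^ j)))) atTop (nhds 0) := by
    have h_scaled := (hc_lim.comp h_pow).mul_const √(2 / (v * (1 - (d : ℝ)⁻¹)))
    rw [zero_mul] at h_scaled
    refine h_scaled.congr fun j => ?_
    have hd_inv : 0 < 1 - (d : ℝ)⁻¹ := sub_pos.2 (inv_lt_one_of_one_lt₀ hd₁)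
    have h_incr : (d : ℝ) ^ (j + 1) - d ^ j = (1 - (d : ℝ)⁻¹) * (d ^ (j + 1) : ℕ) := by
      push_cast
      field_simp
      ring
    rw [h_incr, ← mul_assoc, mul_div_mul_comm, Real.sqrt_mul (by positivity),
      Real.sqrt_div' _ (Nat.cast_nonneg _)]
    simp only [Function.comp_apply]
    ring
  filter_upwards [hY.ae_frequently_lt_sum_sub_sum hc hYc (pow_right_mono₀ (by lia : 1 ≤ d)) hh hh'
    hT (tendsto_log_log_natCast.comp h_pow) (not_summable_exp_neg_log_log_pow (by lia)) hc_block,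
    hv] with ω h_freq h_lim
  exact (h_freq.and_eventually (eventually_sub_mem_Icc_of_tendsto_div hd hv₀ hh h_lim)).mono
    fun j hj => hj.1 hj.2

end FiniteMeasure

theorem IsMartingaleDiff.ae_frequently_le_sum [IsProbabilityMeasure μ]
    (hY : IsMartingaleDiff ℱ μ Y) (hc : Monotone c) (hYc : ∀ k, ∀ᵐ ω ∂μ, |Y k ω| ≤ c k)
    (hc_lim : Tendsto (fun n : ℕ => c n * √(Real.log (Real.log n)) / √n) atTop (nhds 0))
    (hv₀ : 0 < v) (hv : ∀ᵐ ω ∂μ, Tendsto (fun n => predVar ℱ μ Y n ω / n) atTop (nhds v))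
    (hh : 0 < h) (hh' : h ≤ 1 / 10) :
    ∀ᵐ ω ∂μ, ∃ᶠ n in atTop, (1 - 17 * h) * lilScale v n ≤ ∑ k ∈ Finset.range n, Y k ω := by
  obtain ⟨d, hd⟩ := exists_nat_ge (max 3 (h ^ 2)⁻¹)
  have hd₃ : 3 ≤ d := by exact_mod_cast (le_max_left _ _).trans hd
  have hd_h : 1 ≤ d * h ^ 2 :=
    (inv_le_iff_one_le_mul₀ (by positivity)).1 ((le_max_right _ _).trans hd)
  have h_pow : Tendsto (fun j => d ^ (j + 1)) atTop atTop :=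
    (tendsto_add_atTop_iff_nat 1).2 (tendsto_pow_atTop_atTop_of_one_lt (by lia))
  filter_upwards [hY.ae_frequently_lt_sum_sub_sum_pow hc hYc hc_lim hv₀ hv hh hh' hd₃,
    hY.neg.ae_eventually_sum_le hc (by simpa only [abs_neg] using hYc) hc_lim hv₀
      (by simpa only [predVar, condSq_neg] using hv) one_pos le_rfl] with ω h_block h_upper
  refine h_pow.frequently ((h_block.and_eventually (((tendsto_pow_atTop_atTop_of_one_lt
    (by lia : 1 < d)).eventually h_upper).and ((eventually_gt_atTop 0).and
    ((tendsto_log_log_natCast.comp h_pow).eventually_ge_atTop 0)))).mono ?_)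
  rintro j ⟨hj_block, hj_upper, hj_pos, hj_log⟩
  have h₁ := one_sub_mul_lilScale_pow_le hv₀.le hh (by linarith) hd_h hj_log
  have h₂ := lilScale_pow_le hv₀.le hh (by lia) hd_h hj_pos hj_log
  have h₃ : 0 ≤ lilScale v (d ^ (j + 1)) := Real.sqrt_nonneg _
  rw [Finset.sum_neg_distrib] at hj_upper
  nlinarith [mul_nonneg (sq_nonneg h) h₃]

end LowerLIL

section Kronecker

lemma tendsto_sum_div_of_summable_abs_div {x b : ℕ → ℝ} (hb : Monotone b)
    (hb_pos : ∀ k, 0 < b (k + 1))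
    (hb_lim : Tendsto b atTop atTop) (hx : Summable fun k => |x k| / b (k + 1)) :
    Tendsto (fun n => (∑ k ∈ Finset.range n, x k) / b n) atTop (nhds 0) := by
  have h_tsum := tendsto_tsum_of_dominated_convergence
    (f := fun n k => if k ∈ Finset.range n then x k / b n else 0) (g := fun _ => (0 : ℝ)) hx
    (fun k => (hb_lim.const_div_atTop (x k)).congr' <| (eventually_gt_atTop k).mono fun n hn =>
      (if_pos (Finset.mem_range.2 hn)).symm)
    (Eventually.of_forall fun n k => by
      split_ifs with hk
      · have hbn : b (k + 1) ≤ b n := hb (Finset.mem_range.1 hk)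
        rw [Real.norm_eq_abs, abs_div, abs_of_pos ((hb_pos k).trans_le hbn)]
        exact div_le_div_of_nonneg_left (abs_nonneg _) (hb_pos k) hbn
      · rw [norm_zero]
        exact div_nonneg (abs_nonneg _) (hb_pos k).le)
  rw [tsum_zero] at h_tsum
  refine h_tsum.congr fun n => ?_
  rw [tsum_eq_sum fun k hk => if_neg hk, Finset.sum_div]
  exact Finset.sum_congr rfl fun k hk => if_pos hk

lemma sum_range_mul_le_of_antitone {x w : ℕ → ℝ} {A : ℝ} (hw : Antitone w) (hw₀ : ∀ k, 0 ≤ w k)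
    (hA : ∀ n, ∑ k ∈ Finset.range n, x k ≤ A) (n : ℕ) :
    ∑ k ∈ Finset.range n, x k * w k ≤ A * w 0 := by
  suffices h : ∑ k ∈ Finset.range n, x k * w k + (A - ∑ k ∈ Finset.range n, x k) * w n ≤ A * w 0 by
    linarith [mul_nonneg (sub_nonneg.2 (hA n)) (hw₀ n)]
  induction n with
  | zero => simp
  | succ n ih =>
    have h_step := mul_le_mul_of_nonneg_left (hw n.le_succ) (sub_nonneg.2 (hA (n + 1)))
    simp only [Finset.sum_range_succ] at h_step ⊢
    linarith

lemma summable_mul_of_sum_le_linear {x w : ℕ → ℝ} {A : ℝ} (hx : ∀ k, 0 ≤ x k) (hw : Antitone w)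
    (hw₀ : ∀ k, 0 ≤ w k) (hw_sum : Summable w)
    (hA : ∀ n : ℕ, ∑ k ∈ Finset.range n, x k ≤ A * (n + 1)) : Summable fun k => x k * w k := by
  have hA₀ : 0 ≤ A := by simpa using hA 0
  have h_dev (n : ℕ) : ∑ k ∈ Finset.range n, (x k - A) ≤ A := by
    rw [Finset.sum_sub_distrib, Finset.sum_const, Finset.card_range, nsmul_eq_mul]
    linarith [hA n]
  refine summable_of_sum_range_le (c := A * w 0 + A * ∑' k, w k)
    (fun k => mul_nonneg (hx k) (hw₀ k)) fun n => ?_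
  calc ∑ k ∈ Finset.range n, x k * w k
      = ∑ k ∈ Finset.range n, (x k - A) * w k + A * ∑ k ∈ Finset.range n, w k := by
        rw [Finset.mul_sum, ← Finset.sum_add_distrib]
        exact Finset.sum_congr rfl fun k _ => by ring
    _ ≤ A * w 0 + A * ∑' k, w k :=
        add_le_add (sum_range_mul_le_of_antitone hw hw₀ h_dev n)
          (mul_le_mul_of_nonneg_left (hw_sum.sum_le_tsum _ fun k _ => hw₀ k) hA₀)

lemma summable_mul_rpow_of_sum_le_linear {x : ℕ → ℝ} {A s : ℝ} (hx : ∀ k, 0 ≤ x k) (hs : 1 < s)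
    (hA : ∀ n : ℕ, ∑ k ∈ Finset.range n, x k ≤ A * (n + 1)) :
    Summable fun k : ℕ => x k * ((k : ℝ) + 1) ^ (-s) := by
  have hw : Antitone fun k : ℕ => ((k : ℝ) + 1) ^ (-s) := fun i j hij =>
    Real.rpow_le_rpow_of_nonpos (by positivity) (by gcongr) (by linarith)
  refine summable_mul_of_sum_le_linear hx hw (fun k => by positivity) ?_ hA
  simpa only [Nat.cast_succ] using
    (summable_nat_add_iff 1).2 (Real.summable_nat_rpow.2 (by linarith : -s < -1))

variable {Ω : Type*} {m : MeasurableSpace Ω} {μ : Measure Ω}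

lemma ae_summable_abs_of_summable_integral_abs {f : ℕ → Ω → ℝ} (hf : ∀ k, Integrable (f k) μ)
    (h_sum : Summable fun k => ∫ ω, |f k ω| ∂μ) : ∀ᵐ ω ∂μ, Summable fun k => |f k ω| := by
  have h_lintegral : ∫⁻ ω, ∑' k, ENNReal.ofReal |f k ω| ∂μ ≠ ∞ := by
    rw [lintegral_tsum fun k => (hf k).abs.aemeasurable.ennreal_ofReal]
    simp only [← ofReal_integral_eq_lintegral_ofReal (hf _).abs (ae_of_all _ fun _ => abs_nonneg _)]
    exact h_sum.tsum_ofReal_ne_top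
  filter_upwards [ae_lt_top' (AEMeasurable.tsum fun k => (hf k).abs.aemeasurable.ennreal_ofReal)
    h_lintegral] with ω hω
  simpa only [ENNReal.toReal_ofReal (abs_nonneg _)] using ENNReal.summable_toReal hω.ne

lemma ae_tendsto_sum_div_of_integral_abs_le {f : ℕ → Ω → ℝ} {x : ℕ → ℝ} {A C q s : ℝ}
    (hf : ∀ k, Integrable (f k) μ) (hx : ∀ k, 0 ≤ x k)
    (hA : ∀ n : ℕ, ∑ k ∈ Finset.range n, x k ≤ A * (n + 1)) (hq : 0 < q) (hqs : s + 1 < q)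
    (hfx : ∀ k : ℕ, ∫ ω, |f k ω| ∂μ ≤ C * (((k : ℝ) + 1) ^ s * x k)) :
    ∀ᵐ ω ∂μ, Tendsto (fun n : ℕ => (∑ k ∈ Finset.range n, f k ω) / (n : ℝ) ^ q) atTop (nhds 0) := by
  have h_sum : Summable fun k : ℕ => ∫ ω, |f k ω / ((k : ℝ) + 1) ^ q| ∂μ := by
    refine ((summable_mul_rpow_of_sum_le_linear (s := q - s) hx (by linarith) hA).mul_left
      C).of_nonneg_of_le (fun k => integral_nonneg fun ω => abs_nonneg _) fun k => ?_
    have hk : (0 : ℝ) < k + 1 := by positivity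
    simp only [abs_div, abs_of_pos (Real.rpow_pos_of_pos hk q), integral_div]
    calc (∫ ω, |f k ω| ∂μ) / ((k : ℝ) + 1) ^ q
        ≤ C * (((k : ℝ) + 1) ^ s * x k) / ((k : ℝ) + 1) ^ q := by gcongr; exact hfx k
      _ = C * (x k * ((k : ℝ) + 1) ^ (-(q - s))) := by
          rw [neg_sub, Real.rpow_sub hk]; ring
  filter_upwards [ae_summable_abs_of_summable_integral_abs (fun k => (hf k).div_const _) h_sum]
    with ω hω
  refine tendsto_sum_div_of_summable_abs_div (b := fun n => (n : ℝ) ^ q)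
    (fun i j hij => Real.rpow_le_rpow (Nat.cast_nonneg _) (by gcongr) hq.le)
    (fun k => by positivity)
    ((tendsto_rpow_atTop hq).comp tendsto_natCast_atTop_atTop) (hω.congr fun k => ?_)
  rw [abs_div, abs_of_pos (Real.rpow_pos_of_pos (by positivity) q), Nat.cast_succ]

end Kronecker

section Truncation

variable {Ω : Type*}

lemma abs_sub_truncation_le (f : Ω → ℝ) (r : ℝ) (ω : Ω) :
    |f ω - truncation f r ω| ≤ |f ω| := by
  simp only [truncation, Function.comp_apply, indicator, id]
  split_ifs <;> simp

lemma abs_sub_truncation_rpow_le (f : Ω → ℝ) {p q r : ℝ} (hq : 0 < q) (hqp : q ≤ p) (hr : 0 < r)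
    (ω : Ω) : |f ω - truncation f r ω| ^ q ≤ r ^ (q - p) * |f ω| ^ p := by
  rcases lt_or_ge |f ω| r with h_lt | h_ge
  · rw [truncation_eq_self h_lt, sub_self, abs_zero, Real.zero_rpow hq.ne']
    positivity
  · calc |f ω - truncation f r ω| ^ q ≤ |f ω| ^ q := by
          exact Real.rpow_le_rpow (abs_nonneg _) (abs_sub_truncation_le f r ω) hq.le
      _ = |f ω| ^ (q - p) * |f ω| ^ p := by
          rw [← Real.rpow_add (hr.trans_le h_ge), sub_add_cancel]
      _ ≤ r ^ (q - p) * |f ω| ^ p := by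
          gcongr ?_ * _
          exact Real.rpow_le_rpow_of_nonpos hr h_ge (by linarith)

lemma sq_sub_truncation_sq (f : Ω → ℝ) (r : ℝ) (ω : Ω) :
    f ω ^ 2 - truncation f r ω ^ 2 = (f ω - truncation f r ω) ^ 2 := by
  simp only [truncation, Function.comp_apply, indicator, id]
  split_ifs <;> ring

variable {m : MeasurableSpace Ω} {μ : Measure Ω} {ℱ : Filtration ℕ m} {D : ℕ → Ω → ℝ} {r : ℕ → ℝ}

/-- The martingale differences obtained from `D` by truncating `D k` at level `r k` and centring
again. -/
noncomputable def truncDiff (ℱ : Filtration ℕ m) (μ : Measure Ω) (D : ℕ → Ω → ℝ) (r : ℕ → ℝ)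
    (k : ℕ) (ω : Ω) : ℝ :=
  truncation (D k) (r k) ω - (μ[truncation (D k) (r k) | ℱ k]) ω

lemma abs_condExp_truncation_le (hr : ∀ k, 0 ≤ r k) (k : ℕ) :
    ∀ᵐ ω ∂μ, |(μ[truncation (D k) (r k) | ℱ k]) ω| ≤ r k :=
  ae_bdd_abs_condExp_of_ae_bdd_abs <| ae_of_all _ fun ω =>
    (abs_truncation_le_bound _ _ ω).trans_eq (abs_of_nonneg (hr k))

lemma abs_truncDiff_le (hr : ∀ k, 0 ≤ r k) (k : ℕ) :
    ∀ᵐ ω ∂μ, |truncDiff ℱ μ D r k ω| ≤ 2 * r k := by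
  filter_upwards [abs_condExp_truncation_le (D := D) (ℱ := ℱ) (μ := μ) hr k] with ω hω
  have h_trunc := (abs_truncation_le_bound (D k) (r k) ω).trans_eq (abs_of_nonneg (hr k))
  exact (abs_sub _ _).trans (by linarith)

lemma abs_sq_sub_truncDiff_sq_le (hr : ∀ k, 0 ≤ r k) (k : ℕ) :
    ∀ᵐ ω ∂μ, |D k ω ^ 2 - truncDiff ℱ μ D r k ω ^ 2| ≤
      |D k ω - truncation (D k) (r k) ω| ^ (2 : ℝ) +
        3 * r k * |(μ[truncation (D k) (r k) | ℱ k]) ω| := by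
  filter_upwards [abs_condExp_truncation_le (D := D) (ℱ := ℱ) (μ := μ) hr k] with ω hω
  have h_trunc := (abs_truncation_le_bound (D k) (r k) ω).trans_eq (abs_of_nonneg (hr k))
  have h_sq := sq_sub_truncation_sq (D k) (r k) ω
  rw [truncDiff, Real.rpow_two, sq_abs]
  set T := truncation (D k) (r k) ω
  set M := (μ[truncation (D k) (r k) | ℱ k]) ω
  have h_factor : |2 * T - M| ≤ 3 * r k :=
    (abs_sub _ _).trans (by rw [abs_mul, abs_two]; linarith)
  calc |D k ω ^ 2 - (T - M) ^ 2| = |(D k ω - T) ^ 2 + (2 * T - M) * M| := by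
        rw [← h_sq]; ring_nf
    _ ≤ (D k ω - T) ^ 2 + |2 * T - M| * |M| := by
        refine (abs_add_le _ _).trans_eq ?_
        rw [abs_of_nonneg (sq_nonneg _), abs_mul]
    _ ≤ (D k ω - T) ^ 2 + 3 * r k * |M| := by gcongr

lemma integral_abs_sub_truncation_rpow_le {f : Ω → ℝ} {p q b : ℝ}
    (hf : Integrable (fun ω => |f ω| ^ p) μ) (hq : 0 < q) (hqp : q ≤ p) (hb : 0 < b) :
    ∫ ω, |f ω - truncation f b ω| ^ q ∂μ ≤ b ^ (q - p) * ∫ ω, |f ω| ^ p ∂μ := by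
  rw [← integral_const_mul]
  exact integral_mono_of_nonneg (ae_of_all _ fun ω => by positivity) (hf.const_mul _)
    (ae_of_all _ (abs_sub_truncation_rpow_le f hq hqp hb))

variable [IsFiniteMeasure μ]

namespace IsMartingaleDiff

lemma isMartingaleDiff_truncDiff (hD : IsMartingaleDiff ℱ μ D) (r : ℕ → ℝ) :
    IsMartingaleDiff ℱ μ (truncDiff ℱ μ D r) where
  stronglyMeasurable k :=
    ((measurable_id.indicator measurableSet_Ioc).comp
      (hD.stronglyMeasurable k).measurable).stronglyMeasurable.sub
      (stronglyMeasurable_condExp.mono (ℱ.mono k.le_succ))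
  memLp_two k :=
    have h_memLp : MemLp (truncation (D k) (r k)) 2 μ := (hD.integrable k).1.memLp_truncation
    h_memLp.sub (h_memLp.condExp one_le_two)
  condExp_eq_zero k := by
    have h_int : Integrable (truncation (D k) (r k)) μ := (hD.integrable k).1.integrable_truncation
    filter_upwards [condExp_sub h_int integrable_condExp (ℱ k),
      condExp_condExp_of_le le_rfl (ℱ.le k) (f := truncation (D k) (r k))] with ω h_sub h_self
    exact h_sub.trans (sub_eq_zero.2 h_self.symm)

variable {p : ℝ}

lemma integral_abs_condExp_truncation_le (hD : IsMartingaleDiff ℱ μ D)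
    (hDp : ∀ k, Integrable (fun ω => |D k ω| ^ p) μ) (hp : 1 ≤ p) (hr : ∀ k, 0 < r k) (k : ℕ) :
    ∫ ω, |(μ[truncation (D k) (r k) | ℱ k]) ω| ∂μ ≤ r k ^ (1 - p) * ∫ ω, |D k ω| ^ p ∂μ := by
  have h_neg : (fun ω => |(μ[truncation (D k) (r k) | ℱ k]) ω|) =ᵐ[μ]
      fun ω => |(μ[D k - truncation (D k) (r k) | ℱ k]) ω| := by
    filter_upwards [condExp_sub (hD.integrable k) (hD.integrable k).1.integrable_truncation (ℱ k),
      hD.condExp_eq_zero k] with ω h_sub h_zero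
    rw [h_sub, Pi.sub_apply, h_zero, Pi.zero_apply, zero_sub, abs_neg]
  rw [integral_congr_ae h_neg]
  refine (integral_abs_condExp_le _).trans ?_
  simpa only [Pi.sub_apply, Real.rpow_one] using
    integral_abs_sub_truncation_rpow_le (hDp k) one_pos hp (hr k)

lemma integral_abs_sub_truncDiff_le (hD : IsMartingaleDiff ℱ μ D)
    (hDp : ∀ k, Integrable (fun ω => |D k ω| ^ p) μ) (hp : 1 ≤ p) (hr : ∀ k, 0 < r k) (k : ℕ) :
    ∫ ω, |D k ω - truncDiff ℱ μ D r k ω| ∂μ ≤ 2 * (r k ^ (1 - p) * ∫ ω, |D k ω| ^ p ∂μ) := by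
  have h_int : Integrable (fun ω => |D k ω - truncation (D k) (r k) ω|) μ :=
    ((hD.integrable k).sub (hD.integrable k).1.integrable_truncation).abs
  have h_trunc := integral_abs_sub_truncation_rpow_le (hDp k) one_pos hp (hr k)
  simp only [Real.rpow_one] at h_trunc
  have h_le (ω : Ω) : |D k ω - truncDiff ℱ μ D r k ω| ≤
      |D k ω - truncation (D k) (r k) ω| + |(μ[truncation (D k) (r k) | ℱ k]) ω| := by
    rw [truncDiff, ← sub_add]
    exact abs_add_le _ _
  calc ∫ ω, |D k ω - truncDiff ℱ μ D r k ω| ∂μ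
      ≤ ∫ ω, (|D k ω - truncation (D k) (r k) ω| + |(μ[truncation (D k) (r k) | ℱ k]) ω|) ∂μ :=
        integral_mono_of_nonneg (ae_of_all _ fun ω => abs_nonneg _)
          (h_int.add integrable_condExp.abs) (ae_of_all _ h_le)
    _ ≤ 2 * (r k ^ (1 - p) * ∫ ω, |D k ω| ^ p ∂μ) := by
        rw [integral_add h_int integrable_condExp.abs]
        linarith [hD.integral_abs_condExp_truncation_le hDp hp hr k]

lemma integral_abs_condSq_sub_le (hD : IsMartingaleDiff ℱ μ D)
    (hDp : ∀ k, Integrable (fun ω => |D k ω| ^ p) μ) (hp : 2 ≤ p) (hr : ∀ k, 0 < r k) (k : ℕ) :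
    ∫ ω, |condSq ℱ μ D k ω - condSq ℱ μ (truncDiff ℱ μ D r) k ω| ∂μ ≤
      4 * (r k ^ (2 - p) * ∫ ω, |D k ω| ^ p ∂μ) := by
  have hY := hD.isMartingaleDiff_truncDiff r
  have h_condExp : (fun ω => |condSq ℱ μ D k ω - condSq ℱ μ (truncDiff ℱ μ D r) k ω|) =ᵐ[μ]
      fun ω => |(μ[fun ω => D k ω ^ 2 - truncDiff ℱ μ D r k ω ^ 2 | ℱ k]) ω| :=
    ((condExp_sub (hD.memLp_two k).integrable_sq (hY.memLp_two k).integrable_sq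
      (ℱ k)).symm).fun_comp abs
  have h_int : Integrable (fun ω => |D k ω - truncation (D k) (r k) ω| ^ (2 : ℝ)) μ := by
    simpa only [Real.rpow_two, sq_abs, Pi.sub_apply] using
      ((hD.memLp_two k).sub (hD.integrable k).1.memLp_truncation).integrable_sq
  have h_int' : Integrable (fun ω => 3 * r k * |(μ[truncation (D k) (r k) | ℱ k]) ω|) μ :=
    integrable_condExp.abs.const_mul _
  calc ∫ ω, |condSq ℱ μ D k ω - condSq ℱ μ (truncDiff ℱ μ D r) k ω| ∂μ
      ≤ ∫ ω, |D k ω ^ 2 - truncDiff ℱ μ D r k ω ^ 2| ∂μ := by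
        rw [integral_congr_ae h_condExp]
        exact integral_abs_condExp_le _
    _ ≤ ∫ ω, (|D k ω - truncation (D k) (r k) ω| ^ (2 : ℝ) +
          3 * r k * |(μ[truncation (D k) (r k) | ℱ k]) ω|) ∂μ :=
        integral_mono_of_nonneg (ae_of_all _ fun ω => abs_nonneg _) (h_int.add h_int')
          (abs_sq_sub_truncDiff_sq_le (fun k => (hr k).le) k)
    _ ≤ r k ^ (2 - p) * ∫ ω, |D k ω| ^ p ∂μ +
          3 * r k * (r k ^ (1 - p) * ∫ ω, |D k ω| ^ p ∂μ) := by
        rw [integral_add h_int h_int', integral_const_mul]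
        have hrk := (hr k).le
        gcongr
        · exact integral_abs_sub_truncation_rpow_le (hDp k) two_pos hp (hr k)
        · exact hD.integral_abs_condExp_truncation_le hDp (by linarith) hr k
    _ = 4 * (r k ^ (2 - p) * ∫ ω, |D k ω| ^ p ∂μ) := by
        rw [show 2 - p = 1 + (1 - p) by ring, Real.rpow_add (hr k), Real.rpow_one]
        ring

end IsMartingaleDiff

end Truncation

section LimitTheorems

variable {Ω : Type*} {m : MeasurableSpace Ω} {μ : Measure Ω} {p A v : ℝ}

lemma tendsto_rpow_mul_sqrt_log_log_div_sqrt {ρ : ℝ} (hρ₀ : 0 ≤ ρ) (hρ : ρ < 1 / 2) :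
    Tendsto (fun n : ℕ => 2 * ((n : ℝ) + 1) ^ ρ * √(Real.log (Real.log n)) / √n) atTop
      (nhds 0) := by
  have h_log : Tendsto (fun n : ℕ => Real.log n / (n : ℝ) ^ (1 - 2 * ρ)) atTop (nhds 0) :=
    ((isLittleO_log_rpow_atTop (by linarith)).tendsto_div_nhds_zero).comp
      tendsto_natCast_atTop_atTop
  have h_bound : Tendsto (fun n : ℕ => 2 * 2 ^ ρ * √(Real.log n / (n : ℝ) ^ (1 - 2 * ρ))) atTop
      (nhds 0) := by
    simpa only [Real.sqrt_zero, mul_zero] using h_log.sqrt.const_mul (2 * 2 ^ ρ)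
  refine squeeze_zero' (Eventually.of_forall fun n => by positivity) ?_ h_bound
  filter_upwards [eventually_ge_atTop 3] with n hn
  have hn₀ : (0 : ℝ) < n := by exact_mod_cast (by lia : 0 < n)
  have h_log_log : Real.log (Real.log n) ≤ Real.log n :=
    Real.log_le_self (Real.log_natCast_nonneg n)
  have h_add_one : ((n : ℝ) + 1) ^ ρ ≤ 2 ^ ρ * (n : ℝ) ^ ρ := by
    rw [← Real.mul_rpow zero_le_two hn₀.le]
    exact Real.rpow_le_rpow (by positivity)
      (by linarith [show (1 : ℝ) ≤ n by exact_mod_cast (by lia : 1 ≤ n)]) hρ₀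
  have h_sqrt : √((n : ℝ) ^ (1 - 2 * ρ)) = √n / (n : ℝ) ^ ρ := by
    rw [Real.sqrt_eq_rpow, Real.sqrt_eq_rpow, ← Real.rpow_mul hn₀.le, ← Real.rpow_sub hn₀]
    ring_nf
  calc 2 * ((n : ℝ) + 1) ^ ρ * √(Real.log (Real.log n)) / √n
      ≤ 2 * (2 ^ ρ * (n : ℝ) ^ ρ) * √(Real.log n) / √n := by gcongr
    _ = 2 * 2 ^ ρ * √(Real.log n / (n : ℝ) ^ (1 - 2 * ρ)) := by
        rw [Real.sqrt_div' _ (by positivity), h_sqrt, div_div_eq_mul_div]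
        ring

lemma tendsto_rpow_div_sqrt {ρ : ℝ} (hρ₀ : 0 ≤ ρ) (hρ : ρ < 1 / 2) :
    Tendsto (fun n : ℕ => 2 * ((n : ℝ) + 1) ^ ρ / √n) atTop (nhds 0) := by
  refine squeeze_zero' (Eventually.of_forall fun n => by positivity) ?_
    (tendsto_rpow_mul_sqrt_log_log_div_sqrt hρ₀ hρ)
  filter_upwards [tendsto_log_log_natCast.eventually_ge_atTop 1] with n hn
  exact div_le_div_of_nonneg_right
    (le_mul_of_one_le_right (by positivity) (Real.one_le_sqrt.2 hn)) (Real.sqrt_nonneg _)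

lemma monotone_two_mul_rpow {ρ : ℝ} (hρ₀ : 0 ≤ ρ) :
    Monotone fun n : ℕ => 2 * ((n : ℝ) + 1) ^ ρ :=
  fun i j hij => by dsimp only; gcongr

lemma eventually_lilScale_pos (hv₀ : 0 < v) : ∀ᶠ n in atTop, 0 < lilScale v n := by
  filter_upwards [tendsto_log_log_natCast.eventually_gt_atTop 0, eventually_gt_atTop 0]
    with n hn hn₀
  exact Real.sqrt_pos.2 (by positivity)

lemma tendsto_div_lilScale {x : ℕ → ℝ} (hv₀ : 0 < v)
    (hx : Tendsto (fun n : ℕ => x n / √n) atTop (nhds 0)) :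
    Tendsto (fun n => x n / lilScale v n) atTop (nhds 0) := by
  have h_inv : Tendsto (fun n : ℕ => (√(2 * v * Real.log (Real.log n)))⁻¹) atTop (nhds 0) :=
    (Real.tendsto_sqrt_atTop.comp
      (tendsto_log_log_natCast.const_mul_atTop (by positivity))).inv_tendsto_atTop
  have h_mul := hx.mul h_inv
  rw [zero_mul] at h_mul
  refine h_mul.congr fun n => ?_
  rw [lilScale,
    show 2 * n * v * Real.log (Real.log n) = n * (2 * v * Real.log (Real.log n)) by ring,
    Real.sqrt_mul (Nat.cast_nonneg n), ← div_eq_mul_inv, div_div]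

lemma ae_forall_pos_of_forall_pos_ae {q : ℝ → Ω → Prop}
    (hq : ∀ ω ε ε', ε ≤ ε' → q ε ω → q ε' ω) (h : ∀ ε > 0, ∀ᵐ ω ∂μ, q ε ω) :
    ∀ᵐ ω ∂μ, ∀ ε > 0, q ε ω := by
  filter_upwards [ae_all_iff.2 fun n : ℕ => h (1 / (n + 1)) Nat.one_div_pos_of_nat] with ω hω ε hε
  obtain ⟨n, hn⟩ := exists_nat_one_div_lt hε
  exact hq ω _ ε hn.le (hω n)

lemma limsup_eq_of_forall_pos {u : ℕ → ℝ} {a : ℝ}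
    (h_upper : ∀ ε > 0, ∀ᶠ n in atTop, u n ≤ a + ε)
    (h_lower : ∀ ε > 0, ∃ᶠ n in atTop, a - ε ≤ u n) : limsup u atTop = a := by
  refine le_antisymm (le_of_forall_pos_le_add fun ε hε => ?_)
    (le_of_forall_sub_le fun ε hε => ?_)
  · exact limsup_le_of_le (IsCoboundedUnder.of_frequently_ge (h_lower 1 one_pos)) (h_upper ε hε)
  · exact le_limsup_of_frequently_le (h_lower ε hε)
      (isBoundedUnder_of_eventually_le (h_upper 1 one_pos))

lemma liminf_eq_of_forall_pos {u : ℕ → ℝ} {a : ℝ}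
    (h_lower : ∀ ε > 0, ∀ᶠ n in atTop, a - ε ≤ u n)
    (h_upper : ∀ ε > 0, ∃ᶠ n in atTop, u n ≤ a + ε) : liminf u atTop = a := by
  refine le_antisymm (le_of_forall_pos_le_add fun ε hε => ?_)
    (le_of_forall_sub_le fun ε hε => ?_)
  · exact liminf_le_of_frequently_le (h_upper ε hε)
      (isBoundedUnder_of_eventually_ge (h_lower 1 one_pos))
  · exact le_liminf_of_le (IsCoboundedUnder.of_frequently_le (h_upper 1 one_pos)) (h_lower ε hε)

variable [IsProbabilityMeasure μ] {ℱ : Filtration ℕ m} {D : ℕ → Ω → ℝ}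

namespace IsMartingaleDiff

/- The truncation exponent `ρ` must satisfy `ρ < 1/2` for the truncated differences to be `o(√n)`
and `1/2 < ρ(p - 1)` for the truncated part to be negligible on the scale `√n`. -/
theorem exists_bounded_approximation (hD : IsMartingaleDiff ℱ μ D) (hp : 2 < p)
    (hDp : ∀ k, Integrable (fun ω => |D k ω| ^ p) μ)
    (hA : ∀ n : ℕ, ∑ k ∈ Finset.range n, ∫ ω, |D k ω| ^ p ∂μ ≤ A * (n + 1))
    (hv : ∀ᵐ ω ∂μ, Tendsto (fun n => predVar ℱ μ D n ω / n) atTop (nhds v)) :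
    ∃ (ρ : ℝ) (Y : ℕ → Ω → ℝ), 0 ≤ ρ ∧ ρ < 1 / 2 ∧ IsMartingaleDiff ℱ μ Y ∧
      (∀ k : ℕ, ∀ᵐ ω ∂μ, |Y k ω| ≤ 2 * ((k : ℝ) + 1) ^ ρ) ∧
      (∀ᵐ ω ∂μ, Tendsto (fun n => predVar ℱ μ Y n ω / n) atTop (nhds v)) ∧
      ∀ᵐ ω ∂μ, Tendsto (fun n : ℕ => (∑ k ∈ Finset.range n, (D k ω - Y k ω)) / √n) atTop
        (nhds 0) := by
  obtain ⟨ρ, hρ_gt, hρ_lt⟩ : ∃ ρ, 1 / (2 * (p - 1)) < ρ ∧ ρ < 1 / 2 :=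
    exists_between (one_div_lt_one_div_of_lt two_pos (by linarith))
  have hρ₀ : 0 < ρ := (one_div_pos.2 (by linarith)).trans hρ_gt
  have hρp : 1 < ρ * (2 * (p - 1)) := (div_lt_iff₀ (by linarith)).1 hρ_gt
  set r : ℕ → ℝ := fun k => ((k : ℝ) + 1) ^ ρ
  have hr (k : ℕ) : 0 < r k := by positivity
  have hr_rpow (k : ℕ) (q : ℝ) : r k ^ q = ((k : ℝ) + 1) ^ (ρ * q) :=
    (Real.rpow_mul (by positivity) _ _).symm
  have hY := hD.isMartingaleDiff_truncDiff r
  have h_mom (k : ℕ) : 0 ≤ ∫ ω, |D k ω| ^ p ∂μ := integral_nonneg fun ω => by positivity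
  refine ⟨ρ, truncDiff ℱ μ D r, hρ₀.le, hρ_lt, hY, abs_truncDiff_le fun k => (hr k).le, ?_, ?_⟩
  · have h_diff := ae_tendsto_sum_div_of_integral_abs_le (s := ρ * (2 - p)) (q := 1) (C := 4)
      (f := fun k ω => condSq ℱ μ D k ω - condSq ℱ μ (truncDiff ℱ μ D r) k ω)
      (fun k => integrable_condExp.sub integrable_condExp) h_mom hA one_pos (by nlinarith)
      fun k => by simpa only [hr_rpow] using hD.integral_abs_condSq_sub_le hDp hp.le hr k
    filter_upwards [hv, h_diff] with ω hω h_diffω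
    simpa only [Real.rpow_one, Finset.sum_sub_distrib, sub_div, predVar, sub_sub_cancel, sub_zero]
      using hω.sub h_diffω
  · simp only [Real.sqrt_eq_rpow]
    exact ae_tendsto_sum_div_of_integral_abs_le (s := ρ * (1 - p)) (C := 2)
      (fun k => (hD.integrable k).sub (hY.integrable k)) h_mom hA (by norm_num) (by linarith)
      fun k => by simpa only [hr_rpow] using
        hD.integral_abs_sub_truncDiff_le hDp (by linarith) hr k

theorem tendstoInDistribution_of_rpow {v : ℝ≥0} (hD : IsMartingaleDiff ℱ μ D) (hp : 2 < p)
    (hDp : ∀ k, Integrable (fun ω => |D k ω| ^ p) μ)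
    (hA : ∀ n : ℕ, ∑ k ∈ Finset.range n, ∫ ω, |D k ω| ^ p ∂μ ≤ A * (n + 1))
    (hv : ∀ᵐ ω ∂μ, Tendsto (fun n => predVar ℱ μ D n ω / n) atTop (nhds v)) :
    TendstoInDistribution (fun (n : ℕ) ω => (√n)⁻¹ * ∑ k ∈ Finset.range n, D k ω) atTop id
      (fun _ => μ) (gaussianReal 0 v) := by
  obtain ⟨ρ, Y, hρ₀, hρ, hY, hY_le, hYv, hYD⟩ := hD.exists_bounded_approximation hp hDp hA hv
  have h_clt := hY.tendstoInDistribution_of_abs_le (monotone_two_mul_rpow hρ₀) hY_le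
    (tendsto_rpow_div_sqrt hρ₀ hρ) hYv
  have h_meas {Z : ℕ → Ω → ℝ} (hZ : IsMartingaleDiff ℱ μ Z) (n : ℕ) :
      Measurable fun ω => (√(n : ℝ))⁻¹ * ∑ k ∈ Finset.range n, Z k ω :=
    (Finset.measurable_fun_sum _ fun k _ => hZ.measurable k).const_mul _
  refine tendstoInDistribution_of_tendstoInMeasure_sub _ _ h_clt
    (tendstoInMeasure_of_tendsto_ae
      (fun n => ((h_meas hD n).sub (h_meas hY n)).aestronglyMeasurable) ?_)
    fun n => (h_meas hD n).aemeasurable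
  filter_upwards [hYD] with ω hω
  refine hω.congr fun n => ?_
  simp only [Pi.sub_apply]
  rw [Finset.sum_sub_distrib]
  ring

theorem ae_forall_eventually_sum_div_lilScale_le (hD : IsMartingaleDiff ℱ μ D) (hp : 2 < p)
    (hDp : ∀ k, Integrable (fun ω => |D k ω| ^ p) μ)
    (hA : ∀ n : ℕ, ∑ k ∈ Finset.range n, ∫ ω, |D k ω| ^ p ∂μ ≤ A * (n + 1)) (hv₀ : 0 < v)
    (hv : ∀ᵐ ω ∂μ, Tendsto (fun n => predVar ℱ μ D n ω / n) atTop (nhds v)) :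
    ∀ᵐ ω ∂μ, ∀ ε > 0, ∀ᶠ n in atTop,
      (∑ k ∈ Finset.range n, D k ω) / lilScale v n ≤ 1 + ε := by
  obtain ⟨ρ, Y, hρ₀, hρ, hY, hY_le, hYv, hYD⟩ := hD.exists_bounded_approximation hp hDp hA hv
  refine ae_forall_pos_of_forall_pos_ae
    (fun ω ε ε' hε h => h.mono fun n hn => by linarith) fun ε hε => ?_
  set δ := min 1 (ε / 14)
  have hδ₀ : 0 < δ := lt_min one_pos (by positivity)
  have hδ : δ ≤ 1 := min_le_left _ _
  have hδε : δ ≤ ε / 14 := min_le_right _ _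
  filter_upwards [hYD, hY.ae_eventually_sum_le (monotone_two_mul_rpow hρ₀) hY_le
    (tendsto_rpow_mul_sqrt_log_log_div_sqrt hρ₀ hρ) hv₀ hYv hδ₀ hδ] with ω h_diff h_sum
  filter_upwards [h_sum, eventually_lilScale_pos hv₀,
    (tendsto_div_lilScale hv₀ h_diff).eventually_le_const (half_pos hε)] with n hn hn_pos hn_diff
  rw [Finset.sum_sub_distrib, sub_div] at hn_diff
  have hn_le := (div_le_iff₀ hn_pos).2 hn
  nlinarith [mul_nonneg hδ₀.le (sub_nonneg.2 hδ)]

theorem ae_forall_frequently_le_sum_div_lilScale (hD : IsMartingaleDiff ℱ μ D) (hp : 2 < p)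
    (hDp : ∀ k, Integrable (fun ω => |D k ω| ^ p) μ)
    (hA : ∀ n : ℕ, ∑ k ∈ Finset.range n, ∫ ω, |D k ω| ^ p ∂μ ≤ A * (n + 1)) (hv₀ : 0 < v)
    (hv : ∀ᵐ ω ∂μ, Tendsto (fun n => predVar ℱ μ D n ω / n) atTop (nhds v)) :
    ∀ᵐ ω ∂μ, ∀ ε > 0, ∃ᶠ n in atTop,
      1 - ε ≤ (∑ k ∈ Finset.range n, D k ω) / lilScale v n := by
  obtain ⟨ρ, Y, hρ₀, hρ, hY, hY_le, hYv, hYD⟩ := hD.exists_bounded_approximation hp hDp hA hv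
  refine ae_forall_pos_of_forall_pos_ae
    (fun ω ε ε' hε h => h.mono fun n hn => by linarith) fun ε hε => ?_
  set h := min (1 / 10) (ε / 34)
  have hh₀ : 0 < h := lt_min (by norm_num) (by positivity)
  have hhε : h ≤ ε / 34 := min_le_right _ _
  filter_upwards [hYD, hY.ae_frequently_le_sum (monotone_two_mul_rpow hρ₀) hY_le
    (tendsto_rpow_mul_sqrt_log_log_div_sqrt hρ₀ hρ) hv₀ hYv hh₀ (min_le_left _ _)]
    with ω h_diff h_sum
  refine (h_sum.and_eventually ((eventually_lilScale_pos hv₀).and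
    ((tendsto_div_lilScale hv₀ h_diff).eventually_const_le (by linarith : -(ε / 2) < 0)))).mono ?_
  rintro n ⟨hn, hn_pos, hn_diff⟩
  rw [Finset.sum_sub_distrib, sub_div] at hn_diff
  have hn_ge := (le_div_iff₀ hn_pos).2 hn
  linarith

theorem ae_limsup_liminf_sum_div_lilScale (hD : IsMartingaleDiff ℱ μ D) (hp : 2 < p)
    (hDp : ∀ k, Integrable (fun ω => |D k ω| ^ p) μ)
    (hA : ∀ n : ℕ, ∑ k ∈ Finset.range n, ∫ ω, |D k ω| ^ p ∂μ ≤ A * (n + 1)) (hv₀ : 0 < v)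
    (hv : ∀ᵐ ω ∂μ, Tendsto (fun n => predVar ℱ μ D n ω / n) atTop (nhds v)) :
    ∀ᵐ ω ∂μ, limsup (fun n => (∑ k ∈ Finset.range n, D k ω) / lilScale v n) atTop = 1 ∧
      liminf (fun n => (∑ k ∈ Finset.range n, D k ω) / lilScale v n) atTop = -1 := by
  have hDp_neg (k : ℕ) : Integrable (fun ω => |-D k ω| ^ p) μ := by
    simpa only [abs_neg] using hDp k
  have hA_neg (n : ℕ) : ∑ k ∈ Finset.range n, ∫ ω, |-D k ω| ^ p ∂μ ≤ A * (n + 1) := by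
    simpa only [abs_neg] using hA n
  have hv_neg : ∀ᵐ ω ∂μ, Tendsto (fun n => predVar ℱ μ (fun k ω => -D k ω) n ω / n) atTop
      (nhds v) := by
    simpa only [predVar, condSq_neg] using hv
  filter_upwards [hD.ae_forall_eventually_sum_div_lilScale_le hp hDp hA hv₀ hv,
    hD.ae_forall_frequently_le_sum_div_lilScale hp hDp hA hv₀ hv,
    hD.neg.ae_forall_eventually_sum_div_lilScale_le hp hDp_neg hA_neg hv₀ hv_neg,
    hD.neg.ae_forall_frequently_le_sum_div_lilScale hp hDp_neg hA_neg hv₀ hv_neg]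
    with ω h_upper h_lower h_neg_upper h_neg_lower
  simp only [Finset.sum_neg_distrib, neg_div] at h_neg_upper h_neg_lower
  exact ⟨limsup_eq_of_forall_pos h_upper h_lower, liminf_eq_of_forall_pos
    (fun ε hε => (h_neg_upper ε hε).mono fun n hn => by linarith)
    fun ε hε => (h_neg_lower ε hε).mono fun n hn => by linarith⟩

end IsMartingaleDiff

end LimitTheorems

section CanonicalChain

variable {X : Type*} [MeasurableSpace X]

/-- The natural filtration `ℱ_n = σ(X_0, …, X_n)` of the coordinate process on `X^ℕ`. -/
def coordFiltration (X : Type*) [MeasurableSpace X] :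
    Filtration ℕ (MeasurableSpace.pi : MeasurableSpace (ℕ → X)) :=
  Filtration.piLE

lemma measurable_coord {k n : ℕ} (hkn : k ≤ n) :
    Measurable[coordFiltration X n] fun ω : ℕ → X => ω k :=
  (measurable_pi_apply (⟨k, hkn⟩ : Iic n)).comp
    (comap_measurable (Preorder.restrictLe (π := fun _ : ℕ => X) n))

lemma coordFiltration_le_comap (n : ℕ) :
    coordFiltration X n ≤
      MeasurableSpace.comap (fun (ω : ℕ → X) (i : Fin (n + 1)) => ω i) MeasurableSpace.pi :=
  Measurable.comap_le <| @measurable_pi_lambda _ _ _ (_) _ _ fun i =>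
    (measurable_pi_apply (⟨i, Nat.lt_succ_of_le i.2⟩ : Fin (n + 1))).comp
      (comap_measurable fun (ω : ℕ → X) (i : Fin (n + 1)) => ω i)

variable {P : Kernel X X} {x : X} {μ : Measure (ℕ → X)}

lemma measurable_kernelOp {f : X → ℝ≥0∞} (hf : Measurable f) : Measurable (kernelOp P f) :=
  hf.lintegral_kernel

lemma stronglyMeasurable_kernelOpReal {f : X → ℝ} (hf : Measurable f) :
    StronglyMeasurable (kernelOpReal P f) :=
  hf.stronglyMeasurable.integral_kernel

namespace IsCanonicalChain

lemma lintegral_comp_zero (hμ : IsCanonicalChain P x μ) {f : X → ℝ≥0∞} (hf : Measurable f) :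
    ∫⁻ ω, f (ω 0) ∂μ = f x := by
  rw [← lintegral_map hf (measurable_pi_apply 0), hμ.2.1, lintegral_dirac' _ hf]

lemma lintegral_comp_succ (hμ : IsCanonicalChain P x μ) {f : X → ℝ≥0∞} (hf : Measurable f)
    (n : ℕ) : ∫⁻ ω, f (ω (n + 1)) ∂μ = ∫⁻ ω, kernelOp P f (ω n) ∂μ := by
  simpa only [one_mul] using hμ.2.2 n f hf (fun _ => 1) measurable_const

lemma map_restrict_succ (hμ : IsCanonicalChain P x μ) {n : ℕ} {s : Set (ℕ → X)}
    (hs : MeasurableSet[coordFiltration X n] s) :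
    (μ.restrict s).map (fun ω => ω (n + 1)) = P ∘ₘ (μ.restrict s).map (fun ω => ω n) := by
  have hs' : MeasurableSet s := (coordFiltration X).le n s hs
  refine Measure.ext_of_lintegral _ fun f hf => ?_
  rw [lintegral_map hf (measurable_pi_apply _),
    Measure.lintegral_bind P.aemeasurable hf.aemeasurable,
    lintegral_map hf.lintegral_kernel (measurable_pi_apply _), ← lintegral_indicator hs',
    ← lintegral_indicator hs']
  simpa only [indicator, ite_mul, one_mul, zero_mul, kernelOp] using
    hμ.2.2 n f hf (s.indicator fun _ => 1)
      (measurable_const.indicator (coordFiltration_le_comap n s hs))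

lemma integrableOn_kernelOpReal_and_setIntegral_eq (hμ : IsCanonicalChain P x μ) {f : X → ℝ}
    (hf : Measurable f) {n : ℕ} (h_int : Integrable (fun ω => f (ω (n + 1))) μ) {s : Set (ℕ → X)}
    (hs : MeasurableSet[coordFiltration X n] s) :
    IntegrableOn (fun ω => kernelOpReal P f (ω n)) s μ ∧
      ∫ ω in s, kernelOpReal P f (ω n) ∂μ = ∫ ω in s, f (ω (n + 1)) ∂μ := by
  have h_coord (k : ℕ) : AEMeasurable (fun ω : ℕ → X => ω k) (μ.restrict s) :=
    (measurable_pi_apply k).aemeasurable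
  have hPf : AEStronglyMeasurable (kernelOpReal P f) ((μ.restrict s).map fun ω => ω n) :=
    (stronglyMeasurable_kernelOpReal hf).aestronglyMeasurable
  have h_map : Integrable f ((μ.restrict s).map fun ω => ω (n + 1)) :=
    (integrable_map_measure hf.aestronglyMeasurable (h_coord _)).2 h_int.integrableOn
  have h_eq : ∫ ω in s, f (ω (n + 1)) ∂μ = ∫ y, f y ∂((μ.restrict s).map fun ω => ω (n + 1)) :=
    (integral_map (h_coord _) hf.aestronglyMeasurable).symm
  rw [hμ.map_restrict_succ hs, Measure.comp_eq_comp_const_apply] at h_map h_eq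
  rw [h_eq, Kernel.integral_comp h_map]
  exact ⟨(integrable_map_measure hPf (h_coord n)).1 h_map.integral_comp,
    (integral_map (h_coord n) hPf).symm⟩

lemma condExp_comp_succ (hμ : IsCanonicalChain P x μ) {f : X → ℝ} (hf : Measurable f) {n : ℕ}
    (h_int : Integrable (fun ω => f (ω (n + 1))) μ) :
    μ[fun ω => f (ω (n + 1)) | coordFiltration X n] =ᵐ[μ] fun ω => kernelOpReal P f (ω n) := by
  have := hμ.1
  exact (ae_eq_condExp_of_forall_setIntegral_eq ((coordFiltration X).le n) h_int
    (fun s hs _ => (hμ.integrableOn_kernelOpReal_and_setIntegral_eq hf h_int hs).1)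
    (fun s hs _ => (hμ.integrableOn_kernelOpReal_and_setIntegral_eq hf h_int hs).2)
    ((stronglyMeasurable_kernelOpReal hf).comp_measurable
      (measurable_coord le_rfl)).aestronglyMeasurable).symm

end IsCanonicalChain

end CanonicalChain

section ChainDifferences

lemma integral_abs_sub_condExp_rpow_le {Ω : Type*} {m m₀ : MeasurableSpace Ω} {μ : Measure Ω}
    {f : Ω → ℝ} {p : ℝ} (hp : 1 ≤ p) (hf : MemLp f (ENNReal.ofReal p) μ) :
    ∫ ω, |f ω - μ[f | m] ω| ^ p ∂μ ≤ 2 ^ p * ∫ ω, |f ω| ^ p ∂μ := by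
  have hp₀ : 0 < p := by linarith
  have hp' : 1 ≤ ENNReal.ofReal p := ENNReal.one_le_ofReal.2 hp
  have h_lpNorm {h : Ω → ℝ} (hh : MemLp h (ENNReal.ofReal p) μ) :
      lpNorm h (ENNReal.ofReal p) μ ^ p = ∫ ω, |h ω| ^ p ∂μ := by
    rw [lpNorm_eq_integral_norm_rpow_toReal (ENNReal.ofReal_pos.2 hp₀).ne' ENNReal.ofReal_ne_top
      hh.1, ENNReal.toReal_ofReal hp₀.le, Real.rpow_inv_rpow _ hp₀.ne']
    · simp only [Real.norm_eq_abs]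
    · exact integral_nonneg fun ω => by positivity
  have h_sub : lpNorm (f - μ[f | m]) (ENNReal.ofReal p) μ ≤ 2 * lpNorm f (ENNReal.ofReal p) μ := by
    linarith [lpNorm_sub_le hf (g := μ[f | m]) hp', hf.lpNorm_condExp_le_lpNorm (m := m) hp']
  calc ∫ ω, |f ω - μ[f | m] ω| ^ p ∂μ
      = lpNorm (f - μ[f | m]) (ENNReal.ofReal p) μ ^ p :=
        (h_lpNorm (hf.sub (hf.condExp hp'))).symm
    _ ≤ (2 * lpNorm f (ENNReal.ofReal p) μ) ^ p :=
        Real.rpow_le_rpow lpNorm_nonneg h_sub hp₀.le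
    _ = 2 ^ p * ∫ ω, |f ω| ^ p ∂μ := by
        rw [Real.mul_rpow zero_le_two lpNorm_nonneg, h_lpNorm hf]

variable {X : Type*} [MeasurableSpace X] {P : Kernel X X} {x : X} {μ : Measure (ℕ → X)} {g : X → ℝ}
  {p : ℝ} {k : ℕ}

/-- The increments `g(X_{k+1}) - Pg(X_k)` of the martingale part of the additive functional
`∑_{k<n} g(X_{k+1})` of the chain. -/
noncomputable def chainDiff (P : Kernel X X) (g : X → ℝ) (k : ℕ) (ω : ℕ → X) : ℝ :=
  g (ω (k + 1)) - kernelOpReal P g (ω k)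

lemma stronglyMeasurable_chainDiff (hg : Measurable g) (k : ℕ) :
    StronglyMeasurable[coordFiltration X (k + 1)] (chainDiff P g k) :=
  (hg.stronglyMeasurable.comp_measurable (measurable_coord le_rfl)).sub
    ((stronglyMeasurable_kernelOpReal hg).comp_measurable (measurable_coord k.le_succ))

namespace IsCanonicalChain

lemma chainDiff_ae_eq (hμ : IsCanonicalChain P x μ) (hg : Measurable g)
    (h_int : Integrable (fun ω => g (ω (k + 1))) μ) :
    chainDiff P g k =ᵐ[μ]
      (fun ω => g (ω (k + 1))) - μ[fun ω => g (ω (k + 1)) | coordFiltration X k] := by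
  filter_upwards [hμ.condExp_comp_succ hg h_int] with ω hω
  rw [Pi.sub_apply, hω, chainDiff]

lemma memLp_chainDiff (hμ : IsCanonicalChain P x μ) (hg : Measurable g) {q : ℝ≥0∞} (hq : 1 ≤ q)
    (h_memLp : MemLp (fun ω => g (ω (k + 1))) q μ) : MemLp (chainDiff P g k) q μ :=
  have := hμ.1
  (h_memLp.sub (h_memLp.condExp hq)).ae_eq (hμ.chainDiff_ae_eq hg (h_memLp.integrable hq)).symm

lemma integral_abs_chainDiff_rpow_le (hμ : IsCanonicalChain P x μ) (hg : Measurable g)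
    (hp : 1 ≤ p) (h_memLp : MemLp (fun ω => g (ω (k + 1))) (ENNReal.ofReal p) μ) :
    ∫ ω, |chainDiff P g k ω| ^ p ∂μ ≤ 2 ^ p * ∫ ω, |g (ω (k + 1))| ^ p ∂μ := by
  have := hμ.1
  have h_ae := hμ.chainDiff_ae_eq hg (h_memLp.integrable (ENNReal.one_le_ofReal.2 hp))
  exact (integral_congr_ae (h_ae.fun_comp fun t => |t| ^ p)).trans_le
    (integral_abs_sub_condExp_rpow_le hp h_memLp)

lemma isMartingaleDiff_chainDiff (hμ : IsCanonicalChain P x μ) (hg : Measurable g)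
    (h_memLp : ∀ k, MemLp (fun ω => g (ω (k + 1))) 2 μ) :
    IsMartingaleDiff (coordFiltration X) μ (chainDiff P g) where
  stronglyMeasurable := stronglyMeasurable_chainDiff hg
  memLp_two k := hμ.memLp_chainDiff hg one_le_two (h_memLp k)
  condExp_eq_zero k := by
    have := hμ.1
    have h_int := (h_memLp k).integrable one_le_two
    refine (condExp_congr_ae (hμ.chainDiff_ae_eq hg h_int)).trans
      ((condExp_sub h_int integrable_condExp _).trans ?_)
    rw [condExp_of_stronglyMeasurable ((coordFiltration X).le k) stronglyMeasurable_condExp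
      integrable_condExp, sub_self]

lemma condSq_chainDiff (hμ : IsCanonicalChain P x μ) (hg : Measurable g)
    (h_memLp : MemLp (fun ω => g (ω (k + 1))) 2 μ) :
    condSq (coordFiltration X) μ (chainDiff P g) k =ᵐ[μ]
      fun ω => kernelOpReal P (fun y => g y ^ 2) (ω k) - kernelOpReal P g (ω k) ^ 2 := by
  have := hμ.1
  have h_int := h_memLp.integrable one_le_two
  have h_condVar : condSq (coordFiltration X) μ (chainDiff P g) k =ᵐ[μ]
      Var[fun ω => g (ω (k + 1)); μ | coordFiltration X k] :=
    condExp_congr_ae ((hμ.chainDiff_ae_eq hg h_int).fun_comp (· ^ 2))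
  filter_upwards [h_condVar, condVar_ae_eq_condExp_sq_sub_sq_condExp ((coordFiltration X).le k)
    h_memLp, hμ.condExp_comp_succ hg h_int,
    hμ.condExp_comp_succ (hg.pow_const 2) h_memLp.integrable_sq] with ω h_var h_sub h_Pg h_Pg_sq
  rw [h_var, h_sub, Pi.sub_apply, Pi.pow_apply, h_Pg, ← h_Pg_sq]
  rfl

lemma ae_forall_predVar_chainDiff (hμ : IsCanonicalChain P x μ) (hg : Measurable g)
    (h_memLp : ∀ k, MemLp (fun ω => g (ω (k + 1))) 2 μ) :
    ∀ᵐ ω ∂μ, ∀ n, predVar (coordFiltration X) μ (chainDiff P g) n ω =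
      ∑ k ∈ Finset.range n,
        (kernelOpReal P (fun y => g y ^ 2) (ω k) - kernelOpReal P g (ω k) ^ 2) := by
  filter_upwards [ae_all_iff.2 fun k => hμ.condSq_chainDiff hg (h_memLp k)] with ω hω n
  exact Finset.sum_congr rfl fun k _ => hω k

end IsCanonicalChain

end ChainDifferences

section Drift

variable {X : Type*} [MeasurableSpace X] {P : Kernel X X} {u : X → ℝ≥0∞} {C : Set X} {b : ℝ≥0}

/-- The weight `u - Pu + b·1_C` whose `p`-th root is the reference function of the space `E_u^p`.
The subtraction is truncated. -/
noncomputable def driftWeight (P : Kernel X X) (u : X → ℝ≥0∞) (C : Set X) (b : ℝ≥0) (z : X) :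
    ℝ≥0∞ :=
  u z - kernelOp P u z + C.indicator (fun _ => (b : ℝ≥0∞)) z

lemma MemDriftSpace.enorm_rpow_le {p : ℝ} (hp : 0 < p) {g : X → ℝ} {M : ℝ≥0}
    (hg : MemDriftSpace P u C b p g M) (z : X) :
    ‖g z‖ₑ ^ p ≤ (M : ℝ≥0∞) ^ p * driftWeight P u C b z := by
  calc ‖g z‖ₑ ^ p ≤ (M * driftWeight P u C b z ^ (1 / p)) ^ p :=
        ENNReal.rpow_le_rpow (hg.2 z) hp.le
    _ = (M : ℝ≥0∞) ^ p * driftWeight P u C b z := by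
        rw [ENNReal.mul_rpow_of_nonneg _ _ hp.le, ← ENNReal.rpow_mul, one_div_mul_cancel hp.ne',
          ENNReal.rpow_one]

namespace IsDriftFunction

lemma measurable_driftWeight (hu : IsDriftFunction P u C b) : Measurable (driftWeight P u C b) :=
  (hu.measurable_u.sub (measurable_kernelOp hu.measurable_u)).add
    (measurable_const.indicator hu.measurableSet_C)

lemma driftWeight_add_kernelOp_le (hu : IsDriftFunction P u C b) (z : X) :
    driftWeight P u C b z + kernelOp P u z ≤ u z + 2 * b := by
  have h_ind : C.indicator (fun _ => (b : ℝ≥0∞)) z ≤ b :=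
    indicator_le_self' (fun _ _ => zero_le) z
  calc driftWeight P u C b z + kernelOp P u z
      = max (u z) (kernelOp P u z) + C.indicator (fun _ => (b : ℝ≥0∞)) z := by
        rw [driftWeight, add_right_comm, tsub_add_eq_max]
    _ ≤ u z + b + b :=
        add_le_add (max_le le_self_add ((hu.drift z).trans (by gcongr))) h_ind
    _ = u z + 2 * b := by rw [add_assoc, two_mul]

end IsDriftFunction

variable {x : X} {μ : Measure (ℕ → X)}

namespace IsCanonicalChain

lemma lintegral_driftWeight_add_le (hμ : IsCanonicalChain P x μ) (hu : IsDriftFunction P u C b)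
    (k : ℕ) :
    ∫⁻ ω, driftWeight P u C b (ω k) ∂μ + ∫⁻ ω, u (ω (k + 1)) ∂μ ≤ ∫⁻ ω, u (ω k) ∂μ + 2 * b := by
  have := hμ.1
  have h_meas : Measurable fun ω : ℕ → X => driftWeight P u C b (ω k) :=
    hu.measurable_driftWeight.comp (measurable_pi_apply k)
  rw [hμ.lintegral_comp_succ hu.measurable_u, ← lintegral_add_left h_meas]
  calc ∫⁻ ω, (driftWeight P u C b (ω k) + kernelOp P u (ω k)) ∂μ
      ≤ ∫⁻ ω, (u (ω k) + 2 * b) ∂μ :=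
        lintegral_mono fun ω => hu.driftWeight_add_kernelOp_le (ω k)
    _ = ∫⁻ ω, u (ω k) ∂μ + 2 * b := by
        rw [lintegral_add_right _ measurable_const, lintegral_const, measure_univ, mul_one]

lemma sum_lintegral_driftWeight_add_le (hμ : IsCanonicalChain P x μ)
    (hu : IsDriftFunction P u C b) (n : ℕ) :
    ∑ k ∈ Finset.range n, ∫⁻ ω, driftWeight P u C b (ω k) ∂μ + ∫⁻ ω, u (ω n) ∂μ ≤
      u x + n * (2 * b) := by
  induction n with
  | zero =>
    simp only [Finset.range_zero, Finset.sum_empty, zero_add, Nat.cast_zero, zero_mul, add_zero,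
      hμ.lintegral_comp_zero hu.measurable_u, le_refl]
  | succ n ih =>
    calc _ = ∑ k ∈ Finset.range n, ∫⁻ ω, driftWeight P u C b (ω k) ∂μ +
          (∫⁻ ω, driftWeight P u C b (ω n) ∂μ + ∫⁻ ω, u (ω (n + 1)) ∂μ) := by
          rw [Finset.sum_range_succ, add_assoc]
      _ ≤ ∑ k ∈ Finset.range n, ∫⁻ ω, driftWeight P u C b (ω k) ∂μ +
          (∫⁻ ω, u (ω n) ∂μ + 2 * b) :=
          add_le_add_right (hμ.lintegral_driftWeight_add_le hu n) _
      _ ≤ u x + n * (2 * b) + 2 * b := by rw [← add_assoc]; gcongr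
      _ = u x + (n + 1 : ℕ) * (2 * b) := by push_cast; ring

variable {p : ℝ} {g : X → ℝ} {M : ℝ≥0}

lemma sum_lintegral_enorm_rpow_le (hμ : IsCanonicalChain P x μ) (hu : IsDriftFunction P u C b)
    (hp : 0 < p) (hg : MemDriftSpace P u C b p g M) (n : ℕ) :
    ∑ k ∈ Finset.range n, ∫⁻ ω, ‖g (ω (k + 1))‖ₑ ^ p ∂μ ≤
      (M : ℝ≥0∞) ^ p * (u x + 2 * b) * (n + 1) := by
  calc ∑ k ∈ Finset.range n, ∫⁻ ω, ‖g (ω (k + 1))‖ₑ ^ p ∂μ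
      ≤ ∑ k ∈ Finset.range n, (M : ℝ≥0∞) ^ p * ∫⁻ ω, driftWeight P u C b (ω (k + 1)) ∂μ := by
        refine Finset.sum_le_sum fun k _ => ?_
        have h_meas : Measurable fun ω : ℕ → X => driftWeight P u C b (ω (k + 1)) :=
          hu.measurable_driftWeight.comp (measurable_pi_apply (k + 1))
        rw [← lintegral_const_mul _ h_meas]
        exact lintegral_mono fun ω => hg.enorm_rpow_le hp (ω (k + 1))
    _ ≤ (M : ℝ≥0∞) ^ p * ∑ k ∈ Finset.range (n + 1), ∫⁻ ω, driftWeight P u C b (ω k) ∂μ := by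
        rw [← Finset.mul_sum, Finset.sum_range_succ']
        gcongr
        exact le_self_add
    _ ≤ (M : ℝ≥0∞) ^ p * (u x + (n + 1 : ℕ) * (2 * b)) := by
        gcongr
        exact le_self_add.trans (hμ.sum_lintegral_driftWeight_add_le hu (n + 1))
    _ ≤ (M : ℝ≥0∞) ^ p * ((n + 1 : ℕ) * u x + (n + 1 : ℕ) * (2 * b)) := by
        gcongr
        exact le_mul_of_one_le_left zero_le (by exact_mod_cast n.succ_pos)
    _ = (M : ℝ≥0∞) ^ p * (u x + 2 * b) * (n + 1) := by push_cast; ring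

lemma memLp_of_memDriftSpace (hμ : IsCanonicalChain P x μ) (hu : IsDriftFunction P u C b)
    (hp : 0 < p) (hg : MemDriftSpace P u C b p g M) (hx : u x < ∞) (k : ℕ) :
    MemLp (fun ω => g (ω (k + 1))) (ENNReal.ofReal p) μ := by
  refine ⟨(hg.1.comp (measurable_pi_apply _)).aestronglyMeasurable,
    (eLpNorm_lt_top_iff_lintegral_rpow_enorm_lt_top (ENNReal.ofReal_pos.2 hp).ne'
      ENNReal.ofReal_ne_top).2 ?_⟩
  rw [ENNReal.toReal_ofReal hp.le]
  calc ∫⁻ ω, ‖g (ω (k + 1))‖ₑ ^ p ∂μ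
      ≤ ∑ i ∈ Finset.range (k + 1), ∫⁻ ω, ‖g (ω (i + 1))‖ₑ ^ p ∂μ :=
        Finset.single_le_sum (f := fun i => ∫⁻ ω, ‖g (ω (i + 1))‖ₑ ^ p ∂μ)
          (fun _ _ => zero_le) (Finset.self_mem_range_succ k)
    _ ≤ (M : ℝ≥0∞) ^ p * (u x + 2 * b) * ((k + 1 : ℕ) + 1) :=
        hμ.sum_lintegral_enorm_rpow_le hu hp hg (k + 1)
    _ < ∞ := by finiteness

lemma sum_integral_abs_rpow_le (hμ : IsCanonicalChain P x μ) (hu : IsDriftFunction P u C b)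
    (hp : 0 < p) (hg : MemDriftSpace P u C b p g M) (hx : u x < ∞) (n : ℕ) :
    ∑ k ∈ Finset.range n, ∫ ω, |g (ω (k + 1))| ^ p ∂μ ≤
      ((M : ℝ≥0∞) ^ p * (u x + 2 * b)).toReal * (n + 1) := by
  have h_toReal (k : ℕ) :
      ∫ ω, |g (ω (k + 1))| ^ p ∂μ = (∫⁻ ω, ‖g (ω (k + 1))‖ₑ ^ p ∂μ).toReal := by
    have h_meas : Measurable fun ω : ℕ → X => |g (ω (k + 1))| ^ p :=
      (hg.1.comp (measurable_pi_apply _)).abs.pow_const p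
    rw [integral_eq_lintegral_of_nonneg_ae (ae_of_all _ fun ω => by positivity)
      h_meas.aestronglyMeasurable]
    simp only [← Real.enorm_of_nonneg (Real.rpow_nonneg (abs_nonneg _) p), Real.enorm_rpow_of_nonneg
      (abs_nonneg _) hp.le, Real.enorm_abs]
  have h_sum := hμ.sum_lintegral_enorm_rpow_le hu hp hg n
  have h_ne_top : (M : ℝ≥0∞) ^ p * (u x + 2 * b) * (n + 1) ≠ ∞ := by finiteness
  simp only [h_toReal]
  rw [← ENNReal.toReal_sum fun k hk =>
    ((Finset.single_le_sum (fun _ _ => zero_le) hk).trans h_sum).trans_lt h_ne_top.lt_top |>.ne]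
  refine (ENNReal.toReal_mono h_ne_top h_sum).trans_eq ?_
  rw [ENNReal.toReal_mul, ENNReal.toReal_add (ENNReal.natCast_ne_top n) ENNReal.one_ne_top,
    ENNReal.toReal_natCast, ENNReal.toReal_one]

lemma sum_integral_abs_chainDiff_rpow_le (hμ : IsCanonicalChain P x μ)
    (hu : IsDriftFunction P u C b) (hp : 1 ≤ p) (hg : MemDriftSpace P u C b p g M)
    (hx : u x < ∞) (n : ℕ) :
    ∑ k ∈ Finset.range n, ∫ ω, |chainDiff P g k ω| ^ p ∂μ ≤
      2 ^ p * ((M : ℝ≥0∞) ^ p * (u x + 2 * b)).toReal * (n + 1) := by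
  have hp₀ : 0 < p := by linarith
  calc ∑ k ∈ Finset.range n, ∫ ω, |chainDiff P g k ω| ^ p ∂μ
      ≤ ∑ k ∈ Finset.range n, 2 ^ p * ∫ ω, |g (ω (k + 1))| ^ p ∂μ :=
        Finset.sum_le_sum fun k _ => hμ.integral_abs_chainDiff_rpow_le hg.1 hp
          (hμ.memLp_of_memDriftSpace hu hp₀ hg hx k)
    _ ≤ 2 ^ p * (((M : ℝ≥0∞) ^ p * (u x + 2 * b)).toReal * (n + 1)) := by
        rw [← Finset.mul_sum]
        gcongr
        exact hμ.sum_integral_abs_rpow_le hu hp₀ hg hx n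
    _ = 2 ^ p * ((M : ℝ≥0∞) ^ p * (u x + 2 * b)).toReal * (n + 1) := (mul_assoc _ _ _).symm

end IsCanonicalChain

end Drift

section CanonicalChainLimits

lemma tendsto_integral_boundedContinuousFunction_of_tendstoInDistribution {ι Ω E : Type*}
    {mΩ : MeasurableSpace Ω} {μ : Measure Ω} [IsProbabilityMeasure μ] [TopologicalSpace E]
    [MeasurableSpace E] [OpensMeasurableSpace E] {ν : Measure E} [IsProbabilityMeasure ν]
    {l : Filter ι} {Y : ι → Ω → E} (hY : TendstoInDistribution Y l id (fun _ => μ) ν)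
    (F : BoundedContinuousFunction E ℝ) :
    Tendsto (fun i => ∫ ω, F (Y i ω) ∂μ) l (nhds (∫ y, F y ∂ν)) := by
  have h_map (i : ι) : ∫ y, F y ∂μ.map (Y i) = ∫ ω, F (Y i ω) ∂μ :=
    integral_map (hY.forall_aemeasurable i) F.continuous.measurable.aestronglyMeasurable
  simpa only [ProbabilityMeasure.coe_mk, h_map, Measure.map_id] using
    ProbabilityMeasure.tendsto_iff_forall_integral_tendsto.1 hY.tendsto F

variable {X : Type*} [MeasurableSpace X] {P : Kernel X X} {u : X → ℝ≥0∞} {C : Set X} {b : ℝ≥0}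
  {p : ℝ} {g : X → ℝ} {M : ℝ≥0} {x : X} {μ : Measure (ℕ → X)} {v : ℝ}

namespace IsCanonicalChain

lemma memLp_two_of_memDriftSpace (hμ : IsCanonicalChain P x μ) (hu : IsDriftFunction P u C b)
    (hp : 2 ≤ p) (hg : MemDriftSpace P u C b p g M) (hx : u x < ∞) (k : ℕ) :
    MemLp (fun ω => g (ω (k + 1))) 2 μ := by
  have := hμ.1
  have hp₂ : (2 : ℝ≥0∞) ≤ ENNReal.ofReal p := by simpa using ENNReal.ofReal_le_ofReal hp
  exact (hμ.memLp_of_memDriftSpace hu (by linarith) hg hx k).mono_exponent hp₂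

lemma integrable_abs_chainDiff_rpow (hμ : IsCanonicalChain P x μ) (hu : IsDriftFunction P u C b)
    (hp : 1 ≤ p) (hg : MemDriftSpace P u C b p g M) (hx : u x < ∞) (k : ℕ) :
    Integrable (fun ω => |chainDiff P g k ω| ^ p) μ := by
  have hp₀ : 0 < p := by linarith
  simpa only [Real.norm_eq_abs, ENNReal.toReal_ofReal hp₀.le] using
    (hμ.memLp_chainDiff hg.1 (ENNReal.one_le_ofReal.2 hp)
      (hμ.memLp_of_memDriftSpace hu hp₀ hg hx k)).integrable_norm_rpow
      (ENNReal.ofReal_pos.2 hp₀).ne' ENNReal.ofReal_ne_top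

lemma ae_tendsto_predVar_chainDiff_div (hμ : IsCanonicalChain P x μ) (hg : Measurable g)
    (h_memLp : ∀ k, MemLp (fun ω => g (ω (k + 1))) 2 μ)
    (hv : ∀ᵐ ω ∂μ, Tendsto (fun n : ℕ => (n : ℝ)⁻¹ * ∑ k ∈ Finset.range n,
      (kernelOpReal P (fun y => g y ^ 2) (ω k) - kernelOpReal P g (ω k) ^ 2)) atTop (nhds v)) :
    ∀ᵐ ω ∂μ, Tendsto (fun n => predVar (coordFiltration X) μ (chainDiff P g) n ω / n) atTop
      (nhds v) := by
  filter_upwards [hv, hμ.ae_forall_predVar_chainDiff hg h_memLp] with ω h_tendsto h_eq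
  simpa only [h_eq, div_eq_inv_mul] using h_tendsto

theorem tendsto_integral_sum_chainDiff_div_sqrt (hμ : IsCanonicalChain P x μ)
    (hu : IsDriftFunction P u C b) (hp : 2 < p) (hg : MemDriftSpace P u C b p g M) (hx : u x < ∞)
    (hv₀ : 0 ≤ v)
    (hv : ∀ᵐ ω ∂μ, Tendsto (fun n : ℕ => (n : ℝ)⁻¹ * ∑ k ∈ Finset.range n,
      (kernelOpReal P (fun y => g y ^ 2) (ω k) - kernelOpReal P g (ω k) ^ 2)) atTop (nhds v))
    (F : BoundedContinuousFunction ℝ ℝ) :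
    Tendsto (fun n : ℕ => ∫ ω, F ((∑ k ∈ Finset.range n, chainDiff P g k ω) / √n) ∂μ) atTop
      (nhds (∫ y, F y ∂gaussianReal 0 v.toNNReal)) := by
  have := hμ.1
  have hp₁ : 1 ≤ p := by linarith
  have h_memLp := hμ.memLp_two_of_memDriftSpace hu hp.le hg hx
  rw [← Real.coe_toNNReal v hv₀] at hv
  have h_clt := (hμ.isMartingaleDiff_chainDiff hg.1 h_memLp).tendstoInDistribution_of_rpow hp
    (hμ.integrable_abs_chainDiff_rpow hu hp₁ hg hx)
    (hμ.sum_integral_abs_chainDiff_rpow_le hu hp₁ hg hx)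
    (hμ.ae_tendsto_predVar_chainDiff_div hg.1 h_memLp hv)
  simpa only [div_eq_inv_mul] using
    tendsto_integral_boundedContinuousFunction_of_tendstoInDistribution h_clt F

theorem ae_limsup_liminf_sum_chainDiff_div_lilScale (hμ : IsCanonicalChain P x μ)
    (hu : IsDriftFunction P u C b) (hp : 2 < p) (hg : MemDriftSpace P u C b p g M) (hx : u x < ∞)
    (hv₀ : 0 < v)
    (hv : ∀ᵐ ω ∂μ, Tendsto (fun n : ℕ => (n : ℝ)⁻¹ * ∑ k ∈ Finset.range n,
      (kernelOpReal P (fun y => g y ^ 2) (ω k) - kernelOpReal P g (ω k) ^ 2)) atTop (nhds v)) :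
    ∀ᵐ ω ∂μ,
      limsup (fun n => (∑ k ∈ Finset.range n, chainDiff P g k ω) / lilScale v n) atTop = 1 ∧
      liminf (fun n => (∑ k ∈ Finset.range n, chainDiff P g k ω) / lilScale v n) atTop = -1 := by
  have := hμ.1
  have hp₁ : 1 ≤ p := by linarith
  have h_memLp := hμ.memLp_two_of_memDriftSpace hu hp.le hg hx
  exact (hμ.isMartingaleDiff_chainDiff hg.1 h_memLp).ae_limsup_liminf_sum_div_lilScale hp
    (hμ.integrable_abs_chainDiff_rpow hu hp₁ hg hx)
    (hμ.sum_integral_abs_chainDiff_rpow_le hu hp₁ hg hx) hv₀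
    (hμ.ae_tendsto_predVar_chainDiff_div hg.1 h_memLp hv)

end IsCanonicalChain

end CanonicalChainLimits

theorem stmt9_general {X : Type*} [MeasurableSpace X]
    (P : ProbabilityTheory.Kernel X X)
    (u : X → ℝ≥0∞) (C : Set X) (b : ℝ≥0) (hu : IsDriftFunction P u C b)
    (p : ℝ) (hp : 2 < p)
    (g : X → ℝ) (M : ℝ≥0) (hg : MemDriftSpace P u C b p g M)
    (x : X) (hx : u x < ∞)
    (μ : Measure (ℕ → X)) (hμ : IsCanonicalChain P x μ)
    (D : ℕ → (ℕ → X) → ℝ) (hD : ∀ k ω, D k ω = g (ω (k + 1)) - kernelOpReal P g (ω k))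
    (V : ℕ → (ℕ → X) → ℝ)
    (hV : ∀ n ω, V n ω = (n : ℝ)⁻¹ * ∑ k ∈ Finset.range n,
      (kernelOpReal P (fun y => (g y) ^ 2) (ω k) - (kernelOpReal P g (ω k)) ^ 2))
    (σ2 : ℝ) (hσ2 : 0 ≤ σ2)
    (hae : ∀ᵐ ω ∂μ, Tendsto (fun n => V n ω) atTop (nhds σ2)) :
    (∀ F : BoundedContinuousFunction ℝ ℝ,
      Tendsto (fun n : ℕ => ∫ ω, F ((∑ k ∈ Finset.range n, D k ω) / Real.sqrt n) ∂μ)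
        atTop (nhds (∫ y, F y ∂(gaussianReal 0 σ2.toNNReal)))) ∧
    (σ2 ≠ 0 → ∀ᵐ ω ∂μ,
      limsup (fun n : ℕ =>
        (∑ k ∈ Finset.range n, D k ω) / Real.sqrt (2 * n * σ2 * Real.log (Real.log n)))
        atTop = 1 ∧
      liminf (fun n : ℕ =>
        (∑ k ∈ Finset.range n, D k ω) / Real.sqrt (2 * n * σ2 * Real.log (Real.log n)))
        atTop = -1) := by
  obtain rfl : D = chainDiff P g := funext₂ hD
  simp only [hV] at hae
  exact ⟨hμ.tendsto_integral_sum_chainDiff_div_sqrt hu hp hg hx hσ2 hae, fun hσ2_ne =>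
    hμ.ae_limsup_liminf_sum_chainDiff_div_lilScale hu hp hg hx (hσ2.lt_of_ne' hσ2_ne) hae⟩

/-- (CLT and LIL for martingales dominated by drift functions.)
If `(1/n) ∑_{k<n} (P(g²)(X_k) − (Pg(X_k))²)` converges `ℙ_x`-a.e. and in `L¹(ℙ_x)` to a constant
`σ² ≥ 0`, then `n^{−1/2} ∑_{k<n} (g(X_{k+1}) − Pg(X_k))` converges in distribution to `N(0,σ²)`
(a Dirac mass at `0` when `σ² = 0`), and if `σ² ≠ 0` then a.s.
`limsup S_n/√(2nσ² lnln n) = 1` and `liminf S_n/√(2nσ² lnln n) = −1`. -/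
theorem stmt9 {X : Type*} [MeasurableSpace X] [StandardBorelSpace X]
    (P : ProbabilityTheory.Kernel X X) [IsMarkovKernel P]
    (u : X → ℝ≥0∞) (C : Set X) (b : ℝ≥0) (hu : IsDriftFunction P u C b)
    (p : ℝ) (hp : 2 < p)
    (g : X → ℝ) (M : ℝ≥0) (hg : MemDriftSpace P u C b p g M)
    (x : X) (hx : u x < ∞)
    (μ : Measure (ℕ → X)) (hμ : IsCanonicalChain P x μ)
    (D : ℕ → (ℕ → X) → ℝ) (hD : ∀ k ω, D k ω = g (ω (k + 1)) - kernelOpReal P g (ω k))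
    (V : ℕ → (ℕ → X) → ℝ)
    (hV : ∀ n ω, V n ω = (n : ℝ)⁻¹ * ∑ k ∈ Finset.range n,
      (kernelOpReal P (fun y => (g y) ^ 2) (ω k) - (kernelOpReal P g (ω k)) ^ 2))
    (σ2 : ℝ) (hσ2 : 0 ≤ σ2)
    (hae : ∀ᵐ ω ∂μ, Tendsto (fun n => V n ω) atTop (nhds σ2))
    (hL1 : Tendsto (fun n : ℕ => ∫ ω, |V n ω - σ2| ∂μ) atTop (nhds 0)) :
    (∀ F : BoundedContinuousFunction ℝ ℝ,
      Tendsto (fun n : ℕ => ∫ ω, F ((∑ k ∈ Finset.range n, D k ω) / Real.sqrt n) ∂μ)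
        atTop (nhds (∫ y, F y ∂(gaussianReal 0 σ2.toNNReal)))) ∧
    (σ2 ≠ 0 → ∀ᵐ ω ∂μ,
      limsup (fun n : ℕ =>
        (∑ k ∈ Finset.range n, D k ω) / Real.sqrt (2 * n * σ2 * Real.log (Real.log n)))
        atTop = 1 ∧
      liminf (fun n : ℕ =>
        (∑ k ∈ Finset.range n, D k ω) / Real.sqrt (2 * n * σ2 * Real.log (Real.log n)))
        atTop = -1) :=
  stmt9_general P u C b hu p hp g M hg x hx μ hμ D hD V hV σ2 hσ2 hae
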